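/- arXiv:2404.07190 — 2 statements merged into one kernel-verified Lean document; each statement's English description precedes it below -/
import Mathlib

section
/- There is an absolute constant C such that the following holds. Let t be a fixed positive integer, let n be sufficiently large, and let G be a bipartite n-vertex 18-almost-regular (ε,s)-expander with average degree d = d(G) ≥ (log n)^C, where s ≥ d/(log n)^2 and 2^{-90} < ε < 1. Let m_1,…,m_t be positive integers, each greater than n/d^{1/10} and smaller than n/(t·log n). Then there exists a subgraph G' ⊆ G and pairwise disjoint subsets S_1,…,S_t ⊆ V(G') such that, for each i ∈ [t]: (i) S_i is balanced with respect to the bipartition of G; (ii) |S_i| = 2m_i; (iii) S_i is D_i-connecting in G for D_i = p_i^9·d/(log n)^{76}, where p_i = m_i/n; (iv) there exists d_i with d·m_i/(Cn) ≤ d_i ≤ C·d·m_i/n such that d_i − d_i^{2/3} ≤ d_{G'}(v, S_i) ≤ d_i + d_i^{2/3} for every v ∈ V(G'); and (v) d_G(v, S_i) ≤ C·d·m_i/n for every v ∈ V(G). -/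
/-- The external neighbourhood of a vertex set `U` in a graph `G`. -/
def extNbhd {α : Type*} (G : SimpleGraph α) (U : Set α) : Set α :=
  {v | v ∉ U ∧ ∃ u ∈ U, G.Adj u v}

/-- `G`, regarded as an `n`-vertex graph, is an `(ε, s)`-expander. -/
def IsExpander {α : Type*} (n : ℕ) (G : SimpleGraph α) (ε s : ℝ) : Prop :=
  ∀ (U : Set α) (F : Set (Sym2 α)), F ⊆ G.edgeSet →
    1 ≤ U.ncard → (U.ncard : ℝ) ≤ 2 / 3 * n → (F.ncard : ℝ) ≤ s * U.ncard →
    ε * U.ncard / Real.logb 2 n ^ 2 ≤ ((extNbhd (G.deleteEdges F) U).ncard : ℝ)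

/-- `A`, `B` form a bipartition of `G`. -/
def IsBipartition {α : Type*} (G : SimpleGraph α) (A B : Set α) : Prop :=
  Disjoint A B ∧ A ∪ B = Set.univ ∧
  ∀ u v, G.Adj u v → (u ∈ A ∧ v ∈ B) ∨ (u ∈ B ∧ v ∈ A)

/-- A set `V` of vertices of the `n`-vertex graph `G` is `D`-connecting. -/
def IsConnecting {α : Type*} (n : ℕ) (G : SimpleGraph α) (V : Set α) (D : ℝ) : Prop :=
  ∀ (r : ℕ) (x y : Fin r → α),
    (∀ i, x i ∉ V) → (∀ i, y i ∉ V) →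
    (∀ v ∈ V, ((Nat.card {i : Fin r // G.Adj v (x i)} +
        Nat.card {i : Fin r // G.Adj v (y i)} : ℕ) : ℝ) ≤ D) →
    ∃ P : (i : Fin r) → G.Walk (x i) (y i),
      (∀ i, (P i).IsPath) ∧
      (∀ i, ((P i).length : ℝ) ≤ Real.logb 2 n ^ 6) ∧
      (∀ i, ∀ v ∈ (P i).support, v ≠ x i → v ≠ y i → v ∈ V) ∧
      (∀ i j, i ≠ j → ∀ v, v ∈ (P i).support → v ∈ (P j).support →
        (v = x i ∨ v = y i) ∧ (v = x j ∨ v = y j))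


set_option linter.unusedSectionVars false
namespace SCon
open Finset
open scoped Classical

section prob
variable {V κ : Type*} [Fintype V] [DecidableEq V] [Fintype κ]

noncomputable def wt (w : V → κ → ℝ) (ω : V → κ) : ℝ := ∏ v, w v (ω v)

noncomputable def Pr (w : V → κ → ℝ) (E : (V → κ) → Prop) : ℝ :=
  ∑ ω, if E ω then wt w ω else 0

structure IsW (w : V → κ → ℝ) : Prop where
  nonneg : ∀ v k, 0 ≤ w v k
  sum_one : ∀ v, ∑ k, w v k = 1

lemma prod_sum_fun (g : V → κ → ℝ) : ∑ ω : V → κ, ∏ v, g v (ω v) = ∏ v, ∑ k, g v k := by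
  rw [Finset.prod_univ_sum, Fintype.piFinset_univ]

lemma wt_nonneg {w : V → κ → ℝ} (hw : IsW w) (ω : V → κ) : 0 ≤ wt w ω :=
  Finset.prod_nonneg fun v _ => hw.nonneg v _

lemma Pr_mono {w : V → κ → ℝ} (hw : IsW w) {E F : (V → κ) → Prop} (h : ∀ ω, E ω → F ω) :
    Pr w E ≤ Pr w F := by
  unfold Pr
  refine Finset.sum_le_sum fun ω _ => ?_
  have := wt_nonneg hw ω
  by_cases hE : E ω
  · simp [hE, h ω hE]
  · simp only [hE, if_false]; split_ifs <;> simp [this]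

lemma Pr_or {w : V → κ → ℝ} (hw : IsW w) (E F : (V → κ) → Prop) :
    Pr w (fun ω => E ω ∨ F ω) ≤ Pr w E + Pr w F := by
  unfold Pr
  rw [← Finset.sum_add_distrib]
  refine Finset.sum_le_sum fun ω _ => ?_
  have := wt_nonneg hw ω
  by_cases hE : E ω <;> by_cases hF : F ω <;> simp [hE, hF, this]

lemma Pr_exists {w : V → κ → ℝ} (hw : IsW w) {J : Type*} (s : Finset J)
    (E : J → (V → κ) → Prop) :
    Pr w (fun ω => ∃ j ∈ s, E j ω) ≤ ∑ j ∈ s, Pr w (E j) := by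
  induction s using Finset.induction_on with
  | empty => simp [Pr]
  | insert a s ha ih =>
    rw [Finset.sum_insert ha]
    refine le_trans (Pr_mono hw ?_) (le_trans (Pr_or hw (E a) (fun ω => ∃ j ∈ s, E j ω)) ?_)
    · intro ω ⟨j, hj, h⟩
      rcases Finset.mem_insert.1 hj with rfl | hj
      · exact Or.inl h
      · exact Or.inr ⟨j, hj, h⟩
    · linarith

lemma exists_not_of_Pr_lt {w : V → κ → ℝ} (hw : IsW w) {E : (V → κ) → Prop} (h : Pr w E < 1) :
    ∃ ω, ¬ E ω := by
  by_contra hcon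
  push Not at hcon
  have : Pr w E = 1 := by
    unfold Pr
    simp only [hcon, if_true]
    unfold wt
    rw [prod_sum_fun]
    simp [hw.sum_one]
  linarith

lemma mgf {w : V → κ → ℝ} (hw : IsW w) (f : V → κ → ℝ) (hf0 : ∀ v k, 0 ≤ f v k)
    (hf1 : ∀ v k, f v k ≤ 1) (s : ℝ) (hs : |s| ≤ 1) :
    ∑ ω : V → κ, wt w ω * Real.exp (s * ∑ v, f v (ω v)) ≤
      Real.exp ((s + s ^ 2) * ∑ v, ∑ k, w v k * f v k) := by
  have h1 : ∀ ω : V → κ, wt w ω * Real.exp (s * ∑ v, f v (ω v)) =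
      ∏ v, (fun v k => w v k * Real.exp (s * f v k)) v (ω v) := by
    intro ω
    rw [Finset.prod_mul_distrib, ← Real.exp_sum, Finset.mul_sum]; rfl
  rw [Finset.sum_congr rfl (fun ω _ => h1 ω),
    prod_sum_fun (fun v k => w v k * Real.exp (s * f v k)), Finset.mul_sum, Real.exp_sum]
  refine Finset.prod_le_prod (fun v _ => Finset.sum_nonneg fun k _ =>
    mul_nonneg (hw.nonneg v k) (Real.exp_pos _).le) fun v _ => ?_
  have h2 : ∀ k, w v k * Real.exp (s * f v k) ≤ w v k + (s + s ^ 2) * (w v k * f v k) := by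
    intro k
    have h0 := hf0 v k
    have h1 := hf1 v k
    have hx : |s * f v k| ≤ 1 := by
      rw [abs_mul, abs_of_nonneg h0]
      nlinarith [abs_nonneg s]
    have h3 := abs_le.1 (Real.abs_exp_sub_one_sub_id_le hx)
    have h4 : Real.exp (s * f v k) ≤ 1 + (s + s ^ 2) * f v k := by
      have : (s * f v k) ^ 2 ≤ s ^ 2 * f v k := by
        have : f v k ^ 2 ≤ f v k := by nlinarith
        rw [mul_pow]; exact mul_le_mul_of_nonneg_left this (sq_nonneg s)
      linarith [h3.2]
    have := mul_le_mul_of_nonneg_left h4 (hw.nonneg v k)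
    linarith
  calc _ ≤ ∑ k, (w v k + (s + s ^ 2) * (w v k * f v k)) := Finset.sum_le_sum fun k _ => h2 k
    _ = (s + s ^ 2) * ∑ k, w v k * f v k + 1 := by
        rw [Finset.sum_add_distrib, hw.sum_one, ← Finset.mul_sum]; ring
    _ ≤ _ := Real.add_one_le_exp _

theorem chernoff {w : V → κ → ℝ} (hw : IsW w) (f : V → κ → ℝ) (hf0 : ∀ v k, 0 ≤ f v k)
    (hf1 : ∀ v k, f v k ≤ 1) (lam a : ℝ) (h0 : 0 ≤ lam) (h1 : lam ≤ 1) :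
    Pr w (fun ω => a ≤ |∑ v, f v (ω v) - ∑ v, ∑ k, w v k * f v k|) ≤
      2 * Real.exp (-lam * a + lam ^ 2 * ∑ v, ∑ k, w v k * f v k) := by
  set μ := ∑ v, ∑ k, w v k * f v k with hμ
  have key : ∀ s : ℝ, |s| = lam →
      Pr w (fun ω => lam * a ≤ s * (∑ v, f v (ω v) - μ)) ≤ Real.exp (-lam * a + lam ^ 2 * μ) := by
    intro s hs
    have hs2 : s ^ 2 = lam ^ 2 := by rw [← hs, sq_abs]
    have hm := mgf hw f hf0 hf1 s (by rw [hs]; exact h1)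
    rw [← hμ] at hm
    calc Pr w (fun ω => lam * a ≤ s * (∑ v, f v (ω v) - μ))
        ≤ ∑ ω : V → κ, Real.exp (-lam * a - s * μ) *
            (wt w ω * Real.exp (s * ∑ v, f v (ω v))) := by
          unfold Pr
          refine Finset.sum_le_sum fun ω _ => ?_
          have hW := wt_nonneg hw ω
          split_ifs with hE
          · have : (1:ℝ) ≤ Real.exp (-lam * a - s * μ) * Real.exp (s * ∑ v, f v (ω v)) := by
              rw [← Real.exp_add]
              apply Real.one_le_exp
              linarith
            nlinarith
          · positivity
      _ = Real.exp (-lam * a - s * μ) * ∑ ω : V → κ,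
            (wt w ω * Real.exp (s * ∑ v, f v (ω v))) := (Finset.mul_sum _ _ _).symm
      _ ≤ Real.exp (-lam * a - s * μ) * Real.exp ((s + s ^ 2) * μ) := by gcongr
      _ = _ := by rw [← Real.exp_add, ← hs2]; congr 1; ring
  have hk1 := key lam (abs_of_nonneg h0)
  have hk2 := key (-lam) (by rw [abs_neg, abs_of_nonneg h0])
  refine le_trans (Pr_mono hw ?_) (le_trans (Pr_or hw _ _) (le_trans (add_le_add hk1 hk2) (by linarith)))
  intro ω h
  rcases le_abs.1 h with h | h
  · left; exact mul_le_mul_of_nonneg_left h h0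
  · right
    have := mul_le_mul_of_nonneg_left h h0
    linarith

theorem chernoff_mul {w : V → κ → ℝ} (hw : IsW w) (f : V → κ → ℝ) (hf0 : ∀ v k, 0 ≤ f v k)
    (hf1 : ∀ v k, f v k ≤ 1) (μ θ : ℝ) (hμ : ∑ v, ∑ k, w v k * f v k = μ)
    (h0 : 0 ≤ θ) (h1 : θ ≤ 1) :
    Pr w (fun ω => θ * μ ≤ |∑ v, f v (ω v) - μ|) ≤ 2 * Real.exp (-(θ ^ 2 * μ / 4)) := by
  have := chernoff hw f hf0 hf1 (θ / 2) (θ * μ) (by linarith) (by linarith)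
  rw [hμ] at this
  refine this.trans (le_of_eq ?_)
  congr 2; ring

end prob
end SCon

set_option linter.unusedSectionVars false
set_option linter.unusedVariables false
namespace SCon
open Finset
open scoped Classical

section sampling
variable {V κ : Type*} [Fintype V] [DecidableEq V] [Fintype κ]

noncomputable def dg (G : SimpleGraph V) (x : V) (U : Finset V) : ℝ :=
  ((U.filter (fun u => G.Adj x u)).card : ℝ)

lemma dg_eq_sum (G : SimpleGraph V) (x : V) (U : Finset V) :
    dg G x U = ∑ u ∈ U, if G.Adj x u then (1:ℝ) else 0 := by
  unfold dg; simp

lemma dg_nonneg (G : SimpleGraph V) (x : V) (U : Finset V) : 0 ≤ dg G x U := Nat.cast_nonneg _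

lemma dg_mono (G : SimpleGraph V) (x : V) {U U' : Finset V} (h : U ⊆ U') : dg G x U ≤ dg G x U' := by
  unfold dg; exact_mod_cast Finset.card_le_card (Finset.filter_subset_filter _ h)

lemma dg_le_card (G : SimpleGraph V) (x : V) (U : Finset V) : dg G x U ≤ U.card := by
  unfold dg; exact_mod_cast Finset.card_filter_le _ _

lemma dg_sdiff (G : SimpleGraph V) (x : V) {U Y : Finset V} (h : U ⊆ Y) :
    dg G x (Y \ U) = dg G x Y - dg G x U := by
  simp only [dg_eq_sum]
  rw [← Finset.sum_sdiff h]; ring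

lemma dg_swap (G : SimpleGraph V) (S T : Finset V) :
    ∑ x ∈ S, dg G x T = ∑ y ∈ T, dg G y S := by
  simp only [dg_eq_sum]
  rw [Finset.sum_comm]
  simp only [G.adj_comm]

noncomputable def hh (G : SimpleGraph V) (Y U : Finset V) (x : V) : ℝ :=
  min (dg G x U) (dg G x (Y \ U))

lemma hh_nonneg (G : SimpleGraph V) (Y U : Finset V) (x : V) : 0 ≤ hh G Y U x :=
  le_min (dg_nonneg _ _ _) (dg_nonneg _ _ _)

lemma count_sum (F : Finset V) (T : κ → Prop) (ω : V → κ) :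
    ∑ v, (fun v k => if v ∈ F ∧ T k then (1:ℝ) else 0) v (ω v) =
      ((F.filter fun v => T (ω v)).card : ℝ) := by
  simp only [Finset.sum_boole]
  congr 2
  ext v; simp

lemma count_mean (w : V → κ → ℝ) (F : Finset V) (T : κ → Prop) :
    ∑ v, ∑ k, w v k * (if v ∈ F ∧ T k then (1:ℝ) else 0) =
      ∑ v ∈ F, ∑ k, if T k then w v k else 0 := by
  rw [← Finset.sum_filter_add_sum_filter_not univ (fun v => v ∈ F)]
  have h2 : ∑ v ∈ univ.filter (fun v => ¬ v ∈ F), ∑ k, w v k * (if v ∈ F ∧ T k then (1:ℝ) else 0) = 0 := by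
    apply Finset.sum_eq_zero
    intro v hv
    have : v ∉ F := (Finset.mem_filter.1 hv).2
    simp [this]
  rw [h2, add_zero]
  have : univ.filter (fun v => v ∈ F) = F := by ext; simp
  rw [this]
  refine Finset.sum_congr rfl fun v hv => Finset.sum_congr rfl fun k _ => ?_
  simp [hv]

lemma chernoff_count_add {w : V → κ → ℝ} (hw : IsW w) (F : Finset V) (T : κ → Prop) (μ lam a : ℝ)
    (hμ : ∑ v ∈ F, ∑ k, (if T k then w v k else 0) = μ) (h0 : 0 ≤ lam) (h1 : lam ≤ 1) :
    Pr w (fun ω => a ≤ |((F.filter fun v => T (ω v)).card : ℝ) - μ|) ≤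
      2 * Real.exp (-lam * a + lam ^ 2 * μ) := by
  have := chernoff hw (fun v k => if v ∈ F ∧ T k then (1:ℝ) else 0)
    (fun v k => by split_ifs <;> norm_num) (fun v k => by split_ifs <;> norm_num) lam a h0 h1
  rw [count_mean, hμ] at this
  simpa only [count_sum F T] using this

lemma chernoff_count {w : V → κ → ℝ} (hw : IsW w) (F : Finset V) (T : κ → Prop) (μ θ : ℝ)
    (hμ : ∑ v ∈ F, ∑ k, (if T k then w v k else 0) = μ) (h0 : 0 ≤ θ) (h1 : θ ≤ 1) :
    Pr w (fun ω => θ * μ ≤ |((F.filter fun v => T (ω v)).card : ℝ) - μ|) ≤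
      2 * Real.exp (-(θ ^ 2 * μ / 4)) := by
  refine (chernoff_count_add hw F T μ (θ / 2) (θ * μ) hμ (by linarith) (by linarith)).trans (le_of_eq ?_)
  congr 2; ring

lemma exp_small {L : ℝ} (hL : 1 ≤ L) : Real.exp (-L) ≤ 0.37 := by
  have h1 : Real.exp (-L) ≤ Real.exp (-1) := Real.exp_le_exp.2 (by linarith)
  have := Real.exp_neg_one_lt_d9
  linarith

lemma seed (G : SimpleGraph V) (X U : Finset V) (Δ ρ τ L : ℝ) (hX : ∀ x ∈ X, dg G x U ≤ Δ)
    (hρ0 : 0 < ρ) (hρ1 : ρ ≤ 1) (hτ : 0 < τ) (hτΔ : τ ≤ Δ) (hτU : τ ≤ U.card)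
    (hL : 1 ≤ L) (hV : (Fintype.card V : ℝ) ≤ Real.exp L) (hc : 192 * L * Δ ≤ ρ * τ ^ 2) :
    ∃ U' ⊆ U, (U'.card : ℝ) ≤ 2 * ρ * U.card ∧
      ∀ x ∈ X, |dg G x U' - ρ * dg G x U| ≤ ρ * τ / 4 := by
  have hΔ : 0 < Δ := hτ.trans_le hτΔ
  obtain ⟨T, hT⟩ : ∃ T : Bool → Prop, T = fun b => b = true := ⟨_, rfl⟩
  let w : V → Bool → ℝ := fun _ b => if b then ρ else 1 - ρ
  have hw : IsW w := ⟨fun v b => by cases b <;> simp [w] <;> linarith, fun v => by simp [w]⟩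
  have hm : ∀ F : Finset V, ∑ v ∈ F, ∑ k, (if T k then w v k else 0) = ρ * F.card := by
    intro F; simp [w, hT]; ring
  have hb0 := chernoff_count hw U T _ 1 (hm U) zero_le_one le_rfl
  have hb : ∀ x ∈ X, Pr w (fun ω => ρ * τ / 4 ≤
      |((((U.filter (fun u => G.Adj x u)).filter fun v => T (ω v)).card : ℕ) : ℝ) - ρ * dg G x U|) ≤
      2 * Real.exp (-(3 * L)) := by
    intro x hx
    refine (chernoff_count_add hw (U.filter (fun u => G.Adj x u)) T _ (τ / (8 * Δ))
      (ρ * τ / 4) (hm _) (by positivity) (by rw [div_le_one (by positivity)]; linarith)).trans ?_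
    gcongr
    have h1 := hX x hx
    change _ + _ * (ρ * dg G x U) ≤ _
    have h2 : (τ / (8 * Δ)) ^ 2 * (ρ * dg G x U) ≤ (τ / (8 * Δ)) ^ 2 * (ρ * Δ) := by gcongr
    have h3 : -(τ / (8 * Δ)) * (ρ * τ / 4) + (τ / (8 * Δ)) ^ 2 * (ρ * Δ) = - (ρ * τ ^ 2 / (64 * Δ)) := by
      field_simp; ring
    have h4 : 3 * L ≤ ρ * τ ^ 2 / (64 * Δ) := by
      rw [le_div_iff₀ (by positivity)]; linarith
    linarith
  have hρτ : 192 * L ≤ ρ * U.card := by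
    have h1 : 192 * L * τ ≤ ρ * τ * τ := by nlinarith
    have h2 := le_of_mul_le_mul_right h1 hτ
    have := mul_le_mul_of_nonneg_left hτU hρ0.le
    linarith
  have hb0' : Pr w (fun ω => 1 * (ρ * U.card) ≤
      |((U.filter fun v => T (ω v)).card : ℝ) - ρ * U.card|) ≤ 2 * Real.exp (-(3 * L)) := by
    refine hb0.trans ?_
    gcongr
    nlinarith
  have htot : Pr w (fun ω => (1 * (ρ * U.card) ≤
      |((U.filter fun v => T (ω v)).card : ℝ) - ρ * U.card|) ∨ ∃ x ∈ X, (ρ * τ / 4 ≤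
      |((((U.filter (fun u => G.Adj x u)).filter fun v => T (ω v)).card : ℕ) : ℝ) - ρ * dg G x U|))
      < 1 := by
    refine lt_of_le_of_lt (Pr_or hw _ _) ?_
    have h1 := (Pr_exists hw X (fun x ω => (ρ * τ / 4 ≤
      |((((U.filter (fun u => G.Adj x u)).filter fun v => T (ω v)).card : ℕ) : ℝ) - ρ * dg G x U|))).trans
      (Finset.sum_le_sum hb)
    rw [Finset.sum_const, nsmul_eq_mul] at h1
    have h2 : (X.card : ℝ) ≤ Real.exp L := le_trans (by exact_mod_cast Finset.card_le_univ X) hV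
    have h3 : (X.card : ℝ) * (2 * Real.exp (-(3 * L))) ≤ Real.exp L * (2 * Real.exp (-(3 * L))) := by
      gcongr
    have h4 : Real.exp L * (2 * Real.exp (-(3 * L))) = 2 * (Real.exp (-L)) ^ 2 := by
      rw [← Real.exp_nat_mul, mul_left_comm, ← Real.exp_add]; congr 2; push_cast; ring
    have h5 : Real.exp (-(3 * L)) = (Real.exp (-L)) ^ 3 := by
      rw [← Real.exp_nat_mul]; congr 1; push_cast; ring
    have h6 := exp_small hL
    have h7 := Real.exp_pos (-L)
    have h8 : (Real.exp (-L)) ^ 2 ≤ 0.37 ^ 2 := by gcongr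
    have h9 : (Real.exp (-L)) ^ 3 ≤ 0.37 ^ 3 := by gcongr
    have h10 : 2 * Real.exp (-(3 * L)) + 2 * (Real.exp (-L)) ^ 2 < 1 := by
      rw [h5]; norm_num at h8 h9 ⊢; linarith
    linarith
  obtain ⟨ω, hω⟩ := exists_not_of_Pr_lt hw htot
  push Not at hω
  refine ⟨U.filter fun v => T (ω v), Finset.filter_subset _ _, ?_, ?_⟩
  · have := (abs_lt.1 hω.1).2
    linarith
  · intro x hx
    have := (hω.2 x hx).le
    rwa [Finset.filter_filter, Finset.filter_congr (fun v _ => and_comm), ← Finset.filter_filter] at this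

lemma sum_exp_card {L : ℝ} (hL : 1 ≤ L) (hV : (Fintype.card V : ℝ) ≤ Real.exp L) :
    ∑ U ∈ (univ : Finset (Finset V)).filter (fun U => U.Nonempty), 2 * Real.exp (-(5 * L * U.card)) ≤
      4 * Real.exp (-(4 * L)) := by
  set x := Real.exp (-(5 * L)) with hx
  have hx0 : 0 < x := Real.exp_pos _
  have h1 : ∀ U : Finset V, Real.exp (-(5 * L * U.card)) = x ^ U.card := by
    intro U; rw [hx, ← Real.exp_nat_mul]; congr 1; ring
  have h2 : ∑ U : Finset V, x ^ U.card = (x + 1) ^ Fintype.card V := by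
    have := Finset.sum_pow_mul_eq_add_pow x 1 (univ : Finset V)
    simpa using this
  have h3 : ∑ U ∈ (univ : Finset (Finset V)).filter (fun U => U.Nonempty), x ^ U.card + 1 =
      ∑ U : Finset V, x ^ U.card := by
    rw [← Finset.sum_filter_add_sum_filter_not univ (fun U : Finset V => U.Nonempty)]
    congr 1
    have : (univ : Finset (Finset V)).filter (fun U => ¬ U.Nonempty) = {∅} := by
      ext U; simp [Finset.not_nonempty_iff_eq_empty]
    rw [this]; simp
  have h4 : (x + 1) ^ Fintype.card V ≤ Real.exp (Real.exp (-(4 * L))) := by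
    calc (x + 1) ^ Fintype.card V ≤ (Real.exp x) ^ Fintype.card V := by
          gcongr; exact Real.add_one_le_exp x
      _ = Real.exp (Fintype.card V * x) := by rw [← Real.exp_nat_mul]
      _ ≤ _ := by
          apply Real.exp_le_exp.2
          calc (Fintype.card V : ℝ) * x ≤ Real.exp L * x := by gcongr
            _ = _ := by rw [hx, ← Real.exp_add]; congr 1; ring
  have h5 : Real.exp (Real.exp (-(4 * L))) ≤ 1 + 2 * Real.exp (-(4 * L)) := by
    have hy0 := Real.exp_pos (-(4 * L))
    have hy1 : Real.exp (-(4 * L)) ≤ 0.37 := exp_small (by linarith)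
    set y := Real.exp (-(4 * L))
    have h3 := abs_le.1 (Real.abs_exp_sub_one_sub_id_le (x := y) (by rw [abs_of_pos hy0]; linarith))
    nlinarith [h3.2]
  rw [← Finset.mul_sum]
  simp only [h1]
  linarith

/-- union bound over a family indexed by vertex sets -/
lemma family {w : V → κ → ℝ} (hw : IsW w) (X : Finset V) (k0 : κ) (q L : ℝ) (hq : 0 < q)
    (hqw : ∀ x ∈ X, q ≤ w x k0) (hL : 1 ≤ L) (hV : (Fintype.card V : ℝ) ≤ Real.exp L)
    (φ : Finset V → V → ℝ) (hφ0 : ∀ U, ∀ x ∈ X, 0 ≤ φ U x) (hφ1 : ∀ U, ∀ x ∈ X, φ U x ≤ 1) :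
    Pr w (fun ω => ∃ U ∈ (univ : Finset (Finset V)).filter (fun U => U.Nonempty),
      80 * L * U.card ≤ q * ∑ x ∈ X, φ U x ∧
      ∑ x ∈ X.filter (fun x => ω x = k0), φ U x < q / 2 * ∑ x ∈ X, φ U x) ≤
      4 * Real.exp (-(4 * L)) := by
  refine (Pr_exists hw _ _).trans (le_trans (Finset.sum_le_sum fun U hU => ?_) (sum_exp_card hL hV))
  by_cases hcond : 80 * L * U.card ≤ q * ∑ x ∈ X, φ U x
  swap
  · have : Pr w (fun ω => 80 * L * U.card ≤ q * ∑ x ∈ X, φ U x ∧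
      ∑ x ∈ X.filter (fun x => ω x = k0), φ U x < q / 2 * ∑ x ∈ X, φ U x) = 0 := by
      simp [Pr, hcond]
    rw [this]; positivity
  let f : V → κ → ℝ := fun v k => if v ∈ X ∧ k = k0 then φ U v else 0
  have hf0 : ∀ v k, 0 ≤ f v k := by
    intro v k; simp only [f]; split_ifs with h
    · exact hφ0 U v h.1
    · exact le_rfl
  have hf1 : ∀ v k, f v k ≤ 1 := by
    intro v k; simp only [f]; split_ifs with h
    · exact hφ1 U v h.1
    · norm_num
  have hsum : ∀ ω : V → κ, ∑ v, f v (ω v) = ∑ x ∈ X.filter (fun x => ω x = k0), φ U x := by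
    intro ω
    simp only [f]
    rw [← Finset.sum_filter]
    refine Finset.sum_congr ?_ fun _ _ => rfl
    ext v; simp
  have hmean : ∑ v, ∑ k, w v k * f v k = ∑ x ∈ X, w x k0 * φ U x := by
    have : ∀ v, ∑ k, w v k * f v k = if v ∈ X then w v k0 * φ U v else 0 := by
      intro v
      by_cases hv : v ∈ X
      · simp [f, hv]
      · simp [f, hv]
    simp only [this]
    rw [← Finset.sum_filter]
    refine Finset.sum_congr ?_ fun _ _ => rfl
    ext v; simp
  set μ := ∑ x ∈ X, w x k0 * φ U x with hμ
  have hμq : q * ∑ x ∈ X, φ U x ≤ μ := by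
    rw [Finset.mul_sum]
    exact Finset.sum_le_sum fun x hx => mul_le_mul_of_nonneg_right (hqw x hx) (hφ0 U x hx)
  have hch := chernoff_mul hw f hf0 hf1 μ (1/2) hmean (by norm_num) (by norm_num)
  refine (Pr_mono hw ?_).trans (hch.trans ?_)
  · intro ω ⟨_, h⟩
    rw [hsum, abs_sub_comm]
    refine le_trans ?_ (le_abs_self _)
    linarith
  · gcongr
    nlinarith

lemma SL {w : V → κ → ℝ} (hw : IsW w) (G : SimpleGraph V) (X Y : Finset V) (k0 : κ)
    (q β Δ L : ℝ) (hq : 0 < q) (hβ : 0 < β)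
    (hqw : ∀ x ∈ X, q ≤ w x k0) (hL : 1 ≤ L) (hV : (Fintype.card V : ℝ) ≤ Real.exp L)
    (hΔ : ∀ x ∈ X, dg G x Y ≤ Δ) (hqβ : q * β ≤ Δ)
    (hc : 10 ^ 10 * L ^ 4 * Δ ^ 2 ≤ q ^ 3 * β ^ 3) :
    Pr w (fun ω => ¬ ∀ U ⊆ Y, β * U.card ≤ ∑ x ∈ X, hh G Y U x →
      q / 8 * (β * U.card) ≤ ∑ x ∈ X.filter (fun x => ω x = k0), hh G Y U x) ≤
      8 * Real.exp (-(4 * L)) := by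
  have hqβ0 : 0 < q * β := by positivity
  have hΔ0 : 0 < Δ := hqβ0.trans_le hqβ
  have hL0 : 0 < L := by linarith
  set τ := q * β / (160 * L) with hτ
  set ρ := q * β / (500 * L * Δ) with hρ
  have hτ0 : 0 < τ := by positivity
  have hρ0 : 0 < ρ := by positivity
  have hτΔ : τ ≤ Δ := by
    rw [hτ, div_le_iff₀ (by positivity)]; nlinarith
  have hρ1 : ρ ≤ 1 := by
    rw [hρ, div_le_one (by positivity)]; nlinarith
  have hρτ : 192 * L * Δ ≤ ρ * τ ^ 2 := by
    have : ρ * τ ^ 2 = q ^ 3 * β ^ 3 / (500 * 160 ^ 2 * L ^ 3 * Δ) := by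
      rw [hρ, hτ]; field_simp
    rw [this, le_div_iff₀ (by positivity)]
    have hpos : 0 < L ^ 4 * Δ ^ 2 := by positivity
    nlinarith
  let ψ : Finset V → V → ℝ := fun U x => min (dg G x U / ρ) (dg G x Y - dg G x U / ρ)
  let φ1 : Finset V → V → ℝ := fun U x => if hh G Y U x < τ then hh G Y U x / τ else 0
  let φ2 : Finset V → V → ℝ := fun U x => if 3 / 4 * τ ≤ ψ U x then ψ U x / Δ else 0
  have hf1 := family hw X k0 q L hq hqw hL hV φ1
    (fun U x _ => by
      simp only [φ1]; split_ifs
      · exact div_nonneg (hh_nonneg _ _ _ _) hτ0.le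
      · exact le_rfl)
    (fun U x _ => by
      simp only [φ1]; split_ifs with h
      · rw [div_le_one hτ0]; exact h.le
      · norm_num)
  have hf2 := family hw X k0 q L hq hqw hL hV φ2
    (fun U x _ => by
      simp only [φ2]; split_ifs with h
      · exact div_nonneg (by linarith) hΔ0.le
      · exact le_rfl)
    (fun U x hx => by
      simp only [φ2]; split_ifs with h
      · rw [div_le_one hΔ0]
        have h1 := hΔ x hx
        have h2 : ψ U x ≤ dg G x U / ρ := min_le_left _ _
        have h3 : ψ U x ≤ dg G x Y - dg G x U / ρ := min_le_right _ _
        linarith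
      · norm_num)
  refine (Pr_mono hw ?_).trans ((Pr_or hw _ _).trans ((add_le_add hf1 hf2).trans (by linarith)))
  intro ω hω
  by_contra hcon
  apply hω
  push Not at hcon
  obtain ⟨g1, g2⟩ := hcon
  intro U hUY hT
  have hh0 : ∀ x ∈ X.filter (fun x => ω x = k0), 0 ≤ hh G Y U x := fun x _ => hh_nonneg _ _ _ _
  rcases Finset.eq_empty_or_nonempty U with hU | hU
  · rw [hU]; simp only [card_empty, Nat.cast_zero, mul_zero]
    exact Finset.sum_nonneg fun x _ => hh_nonneg _ _ _ _
  have hUc : (0:ℝ) < U.card := by exact_mod_cast hU.card_pos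
  have hsplit : ∑ x ∈ X, hh G Y U x = ∑ x ∈ X, (if hh G Y U x < τ then hh G Y U x else 0) +
      ∑ x ∈ X, (if hh G Y U x < τ then 0 else hh G Y U x) := by
    rw [← Finset.sum_add_distrib]
    refine Finset.sum_congr rfl fun x _ => ?_
    split_ifs <;> simp
  by_cases hlow : β * U.card / 2 ≤ ∑ x ∈ X, (if hh G Y U x < τ then hh G Y U x else 0)
  · have h1 : ∑ x ∈ X, (if hh G Y U x < τ then hh G Y U x else 0) = τ * ∑ x ∈ X, φ1 U x := by
      rw [Finset.mul_sum]
      refine Finset.sum_congr rfl fun x _ => ?_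
      simp only [φ1]; split_ifs
      · field_simp
      · simp
    rw [h1] at hlow
    have h2 : 80 * L * U.card ≤ q * ∑ x ∈ X, φ1 U x := by
      have h3 : 80 * L * U.card * τ = q * (β * U.card / 2) := by rw [hτ]; field_simp; ring
      have h4 := mul_le_mul_of_nonneg_left hlow hq.le
      have : 80 * L * U.card * τ ≤ (q * ∑ x ∈ X, φ1 U x) * τ := by rw [h3]; linarith
      exact le_of_mul_le_mul_right this hτ0
    have h5 := g1 U (by simpa using hU) h2
    calc q / 8 * (β * U.card) ≤ q / 2 * (β * U.card / 2) := by nlinarith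
      _ ≤ q / 2 * (τ * ∑ x ∈ X, φ1 U x) := by gcongr
      _ = τ * (q / 2 * ∑ x ∈ X, φ1 U x) := by ring
      _ ≤ τ * ∑ x ∈ X.filter (fun x => ω x = k0), φ1 U x := by gcongr
      _ ≤ _ := by
        rw [Finset.mul_sum]
        refine Finset.sum_le_sum fun x _ => ?_
        simp only [φ1]; split_ifs
        · rw [mul_div_cancel₀ _ hτ0.ne']
        · simpa using hh_nonneg _ _ _ _
  · have hhigh : β * U.card / 2 ≤ ∑ x ∈ X, (if hh G Y U x < τ then 0 else hh G Y U x) := by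
      push Not at hlow; linarith
    have hτU : τ ≤ U.card := by
      by_contra hlt
      push Not at hlt
      have : ∑ x ∈ X, (if hh G Y U x < τ then 0 else hh G Y U x) = 0 := by
        apply Finset.sum_eq_zero
        intro x _
        rw [if_pos]
        exact lt_of_le_of_lt (le_trans (min_le_left _ _) (dg_le_card _ _ _)) hlt
      rw [this] at hhigh
      have : 0 < β * U.card / 2 := by positivity
      linarith
    obtain ⟨U', hU'U, hU'c, hU'd⟩ := seed G X U Δ ρ τ L
      (fun x hx => (dg_mono G x hUY).trans (hΔ x hx)) hρ0 hρ1 hτ0 hτΔ hτU hL hV hρτ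
    have hψ : ∀ x ∈ X, |ψ U' x - hh G Y U x| ≤ τ / 4 := by
      intro x hx
      have h1 := hU'd x hx
      have h2 : |dg G x U' / ρ - dg G x U| ≤ τ / 4 := by
        have : dg G x U' / ρ - dg G x U = (dg G x U' - ρ * dg G x U) / ρ := by field_simp
        rw [this, abs_div, abs_of_pos hρ0, div_le_iff₀ hρ0]; linarith
      simp only [ψ, hh, dg_sdiff G x hUY]
      refine (abs_min_sub_min_le_max _ _ _ _).trans (max_le h2 ?_)
      have : dg G x Y - dg G x U' / ρ - (dg G x Y - dg G x U) = -(dg G x U' / ρ - dg G x U) := by ring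
      rw [this, abs_neg]; exact h2
    have h1 : 3 / 4 * ∑ x ∈ X, (if hh G Y U x < τ then 0 else hh G Y U x) ≤ Δ * ∑ x ∈ X, φ2 U' x := by
      rw [Finset.mul_sum, Finset.mul_sum]
      refine Finset.sum_le_sum fun x hx => ?_
      have h2 := abs_le.1 (hψ x hx)
      simp only [φ2]
      split_ifs with ha hb hb
      · rw [mul_div_cancel₀ _ hΔ0.ne']; linarith
      · simp
      · rw [mul_div_cancel₀ _ hΔ0.ne']; push Not at ha; linarith
      · push Not at ha hb; linarith
    have hbig : 3 / 8 * (β * U.card) ≤ Δ * ∑ x ∈ X, φ2 U' x := by linarith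
    have hU' : U'.Nonempty := by
      by_contra hne
      rw [Finset.not_nonempty_iff_eq_empty] at hne
      have : ∑ x ∈ X, φ2 U' x = 0 := by
        apply Finset.sum_eq_zero
        intro x _
        simp only [φ2]
        rw [if_neg]
        have : ψ U' x ≤ 0 := (min_le_left _ _).trans (by rw [hne]; simp [dg])
        linarith
      rw [this] at hbig
      have : 0 < 3 / 8 * (β * U.card) := by positivity
      linarith
    have h3 : 80 * L * U'.card ≤ q * ∑ x ∈ X, φ2 U' x := by
      have h4 := mul_le_mul_of_nonneg_left hbig hq.le
      have h5 : 80 * L * U'.card * Δ ≤ 80 * L * (2 * ρ * U.card) * Δ := by gcongr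
      have h6 : 80 * L * (2 * ρ * U.card) * Δ = 160 / 500 * (q * (β * U.card)) := by
        rw [hρ]; field_simp; norm_num
      have h7 : 0 < q * (β * U.card) := by positivity
      have : 80 * L * U'.card * Δ ≤ (q * ∑ x ∈ X, φ2 U' x) * Δ := by linarith
      exact le_of_mul_le_mul_right this hΔ0
    have h5 := g2 U' (by simpa using hU') h3
    calc q / 8 * (β * U.card) = 2 / 3 * (q / 2) * (3 / 8 * (β * U.card)) := by ring
      _ ≤ 2 / 3 * (q / 2) * (Δ * ∑ x ∈ X, φ2 U' x) := by gcongr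
      _ = 2 / 3 * Δ * (q / 2 * ∑ x ∈ X, φ2 U' x) := by ring
      _ ≤ 2 / 3 * Δ * ∑ x ∈ X.filter (fun x => ω x = k0), φ2 U' x := by gcongr
      _ ≤ _ := by
        rw [Finset.mul_sum]
        refine Finset.sum_le_sum fun x hx => ?_
        have h2 := abs_le.1 (hψ x (Finset.mem_filter.1 hx).1)
        simp only [φ2]; split_ifs with ha
        · have : 2 / 3 * Δ * (ψ U' x / Δ) = 2 / 3 * ψ U' x := by field_simp
          rw [this]; linarith
        · simpa using hh_nonneg _ _ _ _
end sampling
end SCon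

set_option linter.unusedSectionVars false
set_option linter.unusedVariables false
namespace SCon
open Finset
open scoped Classical

section conn
variable {V ι : Type*} [Fintype V] [DecidableEq V]

noncomputable def Gam (G : SimpleGraph V) (WA WB Z U : Finset V) : Finset V :=
  (WA \ Z).filter (fun a => a ∈ U ∨ ∃ b ∈ WB \ Z, G.Adj b a ∧ ∃ u ∈ U, G.Adj b u)

structure Good (G : SimpleGraph V) (WA WB : Finset V) (Lam γ : ℝ) : Prop where
  upA : ∀ a ∈ WA, dg G a WB ≤ Lam
  upB : ∀ b ∈ WB, dg G b WA ≤ Lam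
  exp : ∀ U ⊆ WA, 2 * U.card ≤ WA.card → γ * Lam * U.card ≤ ∑ b ∈ WB, hh G WA U b

variable {G : SimpleGraph V} {WA WB Z : Finset V} {Lam γ : ℝ}

lemma Gam_sub (U : Finset V) : Gam G WA WB Z U ⊆ WA \ Z := Finset.filter_subset _ _

lemma sub_Gam {U : Finset V} (hU : U ⊆ WA \ Z) : U ⊆ Gam G WA WB Z U := fun u hu =>
  Finset.mem_filter.2 ⟨hU hu, Or.inl hu⟩

lemma Gam_iter_sub {U : Finset V} (hU : U ⊆ WA \ Z) (k : ℕ) : (Gam G WA WB Z)^[k] U ⊆ WA \ Z := by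
  cases k with
  | zero => simpa using hU
  | succ k => rw [Function.iterate_succ_apply']; exact Gam_sub _

lemma Gam_iter_mono {U : Finset V} (hU : U ⊆ WA \ Z) {k l : ℕ} (h : k ≤ l) :
    (Gam G WA WB Z)^[k] U ⊆ (Gam G WA WB Z)^[l] U := by
  induction h with
  | refl => exact Finset.Subset.refl _
  | step h ih =>
    rw [Function.iterate_succ_apply']
    exact ih.trans (sub_Gam (Gam_iter_sub hU _))

lemma Gam_biUnion (K : Finset ι) (f : ι → Finset V) :
    Gam G WA WB Z (K.biUnion f) = K.biUnion (fun i => Gam G WA WB Z (f i)) := by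
  ext a
  simp only [Gam, Finset.mem_filter, Finset.mem_biUnion]
  constructor
  · rintro ⟨h, ⟨i, hi, ha⟩ | ⟨b, hb, hba, u, ⟨i, hi, hu⟩, hbu⟩⟩
    · exact ⟨i, hi, h, Or.inl ha⟩
    · exact ⟨i, hi, h, Or.inr ⟨b, hb, hba, u, hu, hbu⟩⟩
  · rintro ⟨i, hi, h, ha | ⟨b, hb, hba, u, hu, hbu⟩⟩
    · exact ⟨h, Or.inl ⟨i, hi, ha⟩⟩
    · exact ⟨h, Or.inr ⟨b, hb, hba, u, ⟨i, hi, hu⟩, hbu⟩⟩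

lemma Gam_iter_biUnion (k : ℕ) (K : Finset ι) (f : ι → Finset V) :
    (Gam G WA WB Z)^[k] (K.biUnion f) = K.biUnion (fun i => (Gam G WA WB Z)^[k] (f i)) := by
  induction k with
  | zero => simp
  | succ k ih => simp only [Function.iterate_succ_apply', ih, Gam_biUnion]

lemma step (hg : Good G WA WB Lam γ) (hLam : 0 < Lam) {U : Finset V} (hU : U ⊆ WA \ Z)
    (hU2 : 2 * U.card ≤ WA.card) :
    (U.card : ℝ) + γ * U.card ≤ (Gam G WA WB Z U).card + 2 * Z.card := by
  have hUW : U ⊆ WA := hU.trans Finset.sdiff_subset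
  have h1 := hg.exp U hUW hU2
  set Γ := Gam G WA WB Z U with hΓ
  set T := (Γ \ U) ∪ (Z ∩ WA) with hT
  have hTW : T ⊆ WA := by
    intro a ha
    rcases Finset.mem_union.1 ha with h | h
    · exact (Finset.mem_sdiff.1 (Gam_sub U (Finset.mem_sdiff.1 h).1)).1
    · exact (Finset.mem_inter.1 h).2
  have hb : ∀ b ∈ WB \ Z, hh G WA U b ≤ dg G b T := by
    intro b hb
    by_cases hN : ∃ u ∈ U, G.Adj b u
    · refine (min_le_right _ _).trans ?_
      unfold dg
      norm_cast
      apply Finset.card_le_card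
      intro a ha
      obtain ⟨ha1, ha2⟩ := Finset.mem_filter.1 ha
      obtain ⟨ha3, ha4⟩ := Finset.mem_sdiff.1 ha1
      refine Finset.mem_filter.2 ⟨?_, ha2⟩
      by_cases haZ : a ∈ Z
      · exact Finset.mem_union_right _ (Finset.mem_inter.2 ⟨haZ, ha3⟩)
      · refine Finset.mem_union_left _ (Finset.mem_sdiff.2 ⟨?_, ha4⟩)
        exact Finset.mem_filter.2 ⟨Finset.mem_sdiff.2 ⟨ha3, haZ⟩, Or.inr ⟨b, hb, ha2, hN⟩⟩
    · refine (min_le_left _ _).trans (le_trans (le_of_eq ?_) (dg_nonneg _ _ _))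
      unfold dg
      norm_cast
      rw [Finset.card_eq_zero, Finset.filter_eq_empty_iff]
      intro u hu hbu
      exact hN ⟨u, hu, hbu⟩
  have h2 : ∑ b ∈ WB, hh G WA U b ≤ ∑ b ∈ WB \ Z, hh G WA U b + Lam * Z.card := by
    have h3 : ∑ b ∈ WB, hh G WA U b = ∑ b ∈ WB \ Z, hh G WA U b + ∑ b ∈ WB ∩ Z, hh G WA U b := by
      rw [add_comm, Finset.sum_inter_add_sum_sdiff]
    have h4 : ∑ b ∈ WB ∩ Z, hh G WA U b ≤ ∑ b ∈ WB ∩ Z, Lam := by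
      refine Finset.sum_le_sum fun b hb => ?_
      exact (min_le_left _ _).trans ((dg_mono G b hUW).trans (hg.upB b (Finset.mem_inter.1 hb).1))
    have h5 : ((WB ∩ Z).card : ℝ) ≤ Z.card := by
      exact_mod_cast Finset.card_le_card Finset.inter_subset_right
    rw [Finset.sum_const, nsmul_eq_mul] at h4
    nlinarith
  have h3 : ∑ b ∈ WB \ Z, hh G WA U b ≤ Lam * T.card := by
    calc _ ≤ ∑ b ∈ WB \ Z, dg G b T := Finset.sum_le_sum hb
      _ = ∑ a ∈ T, dg G a (WB \ Z) := dg_swap _ _ _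
      _ ≤ ∑ a ∈ T, Lam := Finset.sum_le_sum fun a ha =>
          (dg_mono G a Finset.sdiff_subset).trans (hg.upA a (hTW ha))
      _ = _ := by rw [Finset.sum_const, nsmul_eq_mul]; ring
  have h4 : (T.card : ℝ) ≤ (Γ \ U).card + Z.card := by
    have h8 : T.card ≤ (Γ \ U).card + (Z ∩ WA).card := Finset.card_union_le (Γ \ U) (Z ∩ WA)
    have h6 : (Z ∩ WA).card ≤ Z.card := Finset.card_le_card Finset.inter_subset_left
    have h7 : T.card ≤ (Γ \ U).card + Z.card := by omega
    exact_mod_cast h7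
  have h5 : ((Γ \ U).card : ℝ) = Γ.card - U.card := by
    rw [Finset.card_sdiff_of_subset (sub_Gam hU), Nat.cast_sub (Finset.card_le_card (sub_Gam hU))]
  have h6 : Lam * (γ * U.card) ≤ Lam * (T.card + Z.card) := by linarith
  have h7 := le_of_mul_le_mul_left h6 hLam
  linarith

lemma grow (hg : Good G WA WB Lam γ) (hLam : 0 < Lam) (hγ : 0 < γ) {R : ℕ}
    (hR : (Fintype.card V : ℝ) < (1 + γ / 2) ^ R) {U : Finset V} (hU : U ⊆ WA \ Z)
    (hne : U.Nonempty) (hZ : 4 * (Z.card : ℝ) ≤ γ * U.card) :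
    WA.card < 2 * ((Gam G WA WB Z)^[R] U).card := by
  by_contra hcon
  push Not at hcon
  have key : ∀ k ≤ R, (1 + γ / 2) ^ k ≤ (((Gam G WA WB Z)^[k] U).card : ℝ) := by
    intro k
    induction k with
    | zero => intro _; simpa using hne.card_pos
    | succ k ih =>
      intro hk
      have h1 := ih (by omega)
      set Uk := (Gam G WA WB Z)^[k] U with hUk
      have h2 : 2 * Uk.card ≤ WA.card := by
        have := Finset.card_le_card (Gam_iter_mono (G := G) (WB := WB) hU (show k ≤ R by omega))
        rw [← hUk] at this
        omega
      have h3 := step hg hLam (Gam_iter_sub hU k) h2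
      have h4 : (U.card : ℝ) ≤ Uk.card := by
        exact_mod_cast Finset.card_le_card (Gam_iter_mono (G := G) (WB := WB) hU (show 0 ≤ k by omega))
      rw [Function.iterate_succ_apply', ← hUk]
      have h5 : 4 * (Z.card : ℝ) ≤ γ * Uk.card := hZ.trans (by gcongr)
      rw [pow_succ]
      have h6 : (1 + γ / 2) ^ k * (1 + γ / 2) ≤ (Uk.card : ℝ) * (1 + γ / 2) := by gcongr
      rw [← hUk] at h3
      linarith
  have h1 := key R le_rfl
  have h2 : (((Gam G WA WB Z)^[R] U).card : ℝ) ≤ Fintype.card V := by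
    exact_mod_cast Finset.card_le_univ _
  linarith

lemma halve (hg : Good G WA WB Lam γ) (hLam : 0 < Lam) (hγ : 0 < γ) {R : ℕ}
    (hR : (Fintype.card V : ℝ) < (1 + γ / 2) ^ R) (hZW : 16 * (Z.card : ℝ) ≤ γ * WA.card) (j : ℕ) :
    ∀ (K : Finset ι) (f : ι → Finset V), K.card ≤ 2 ^ j → (∀ i, f i ⊆ WA \ Z) →
      (K.biUnion f).Nonempty → 4 * (Z.card : ℝ) ≤ γ * (K.biUnion f).card →
      ∃ i ∈ K, WA.card < 2 * ((Gam G WA WB Z)^[R * (j + 1)] (f i)).card := by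
  induction j with
  | zero =>
    intro K f hK hf hne hZ
    have hg1 := grow hg hLam hγ hR (Finset.biUnion_subset.2 fun i _ => hf i) hne hZ
    obtain ⟨v, hv⟩ := hne
    obtain ⟨i, hi, hvi⟩ := Finset.mem_biUnion.1 hv
    have hKi : K = {i} := by
      apply Finset.eq_singleton_iff_unique_mem.2 ⟨hi, fun x hx => ?_⟩
      exact Finset.card_le_one.1 (by simpa using hK) x hx i hi
    refine ⟨i, hi, ?_⟩
    rw [hKi] at hg1
    simpa using hg1
  | succ j ih =>
    intro K f hK hf hne hZ
    have hg1 := grow hg hLam hγ hR (Finset.biUnion_subset.2 fun i _ => hf i) hne hZ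
    obtain ⟨K1, hK1, hK1c⟩ := Finset.exists_subset_card_eq (show min K.card (2 ^ j) ≤ K.card from min_le_left _ _)
    have hc1 : K1.card ≤ 2 ^ j := by rw [hK1c]; exact min_le_right _ _
    have hc2 : (K \ K1).card ≤ 2 ^ j := by
      rw [Finset.card_sdiff_of_subset hK1, hK1c]
      rw [pow_succ] at hK
      omega
    have hU : K1 ∪ (K \ K1) = K := Finset.union_sdiff_of_subset hK1
    rw [Gam_iter_biUnion, ← hU, Finset.union_biUnion] at hg1
    have hcu := Finset.card_union_le (K1.biUnion fun i => (Gam G WA WB Z)^[R] (f i))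
      ((K \ K1).biUnion fun i => (Gam G WA WB Z)^[R] (f i))
    have main : ∀ K' ⊆ K, K'.card ≤ 2 ^ j →
        WA.card < 4 * (K'.biUnion fun i => (Gam G WA WB Z)^[R] (f i)).card →
        ∃ i ∈ K, WA.card < 2 * ((Gam G WA WB Z)^[R * (j + 1 + 1)] (f i)).card := by
      intro K' hK' hK'c hbig
      obtain ⟨i, hi, h⟩ := ih K' (fun i => (Gam G WA WB Z)^[R] (f i)) hK'c
        (fun i => Gam_iter_sub (hf i) R) (Finset.card_pos.1 (by omega)) (by
          have : (WA.card : ℝ) ≤ 4 * (K'.biUnion fun i => (Gam G WA WB Z)^[R] (f i)).card := by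
            exact_mod_cast hbig.le
          nlinarith)
      refine ⟨i, hK' hi, ?_⟩
      rw [← Function.iterate_add_apply] at h
      have : R * (j + 1) + R = R * (j + 1 + 1) := by ring
      rwa [this] at h
    by_cases hbig : WA.card < 4 * (K1.biUnion fun i => (Gam G WA WB Z)^[R] (f i)).card
    · exact main K1 hK1 hc1 hbig
    · exact main (K \ K1) Finset.sdiff_subset hc2 (by omega)

noncomputable def ini (G : SimpleGraph V) (WA WB Z : Finset V) (x : V) : Finset V :=
  (WA \ Z).filter (fun a => G.Adj x a ∨ ∃ b ∈ WB \ Z, G.Adj x b ∧ G.Adj b a)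

def Rch (G : SimpleGraph V) (W Z : Finset V) (x a : V) (k : ℕ) : Prop :=
  ∃ p : G.Walk x a, p.length ≤ k ∧ ∀ v ∈ p.support, v ≠ x → v ∈ W \ Z

lemma Rch_snoc {W : Finset V} {x a b : V} {k : ℕ} (h : Rch G W Z x a k) (hab : G.Adj a b)
    (hb : b ∈ W \ Z) : Rch G W Z x b (k + 1) := by
  obtain ⟨p, hp, hs⟩ := h
  refine ⟨p.concat hab, by rw [SimpleGraph.Walk.length_concat]; omega, ?_⟩
  intro v hv hvx
  rw [SimpleGraph.Walk.support_concat, List.mem_append] at hv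
  rcases hv with hv | hv
  · exact hs v hv hvx
  · rw [List.mem_singleton.1 hv]; exact hb

lemma Rch_mono {W : Finset V} {x a : V} {k l : ℕ} (h : Rch G W Z x a k) (hkl : k ≤ l) :
    Rch G W Z x a l := by
  obtain ⟨p, hp, hs⟩ := h
  exact ⟨p, hp.trans hkl, hs⟩

lemma Rch_ini {x a : V} (h : a ∈ ini G WA WB Z x) : Rch G (WA ∪ WB) Z x a 2 := by
  obtain ⟨h1, h2⟩ := Finset.mem_filter.1 h
  have h0 : Rch G (WA ∪ WB) Z x x 0 := ⟨SimpleGraph.Walk.nil, by simp, by simp⟩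
  have hA : ∀ a ∈ WA \ Z, a ∈ (WA ∪ WB) \ Z := fun a ha => by
    simp only [Finset.mem_sdiff, Finset.mem_union] at ha ⊢; tauto
  have hB : ∀ a ∈ WB \ Z, a ∈ (WA ∪ WB) \ Z := fun a ha => by
    simp only [Finset.mem_sdiff, Finset.mem_union] at ha ⊢; tauto
  rcases h2 with h2 | ⟨b, hb, hxb, hba⟩
  · exact Rch_mono (Rch_snoc h0 h2 (hA a h1)) (by norm_num)
  · exact Rch_snoc (Rch_snoc h0 hxb (hB b hb)) hba (hA a h1)

lemma Rch_iter {x : V} (k : ℕ) : ∀ a ∈ (Gam G WA WB Z)^[k] (ini G WA WB Z x),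
    Rch G (WA ∪ WB) Z x a (2 + 2 * k) := by
  have hA : ∀ a ∈ WA \ Z, a ∈ (WA ∪ WB) \ Z := fun a ha => by
    simp only [Finset.mem_sdiff, Finset.mem_union] at ha ⊢; tauto
  have hB : ∀ a ∈ WB \ Z, a ∈ (WA ∪ WB) \ Z := fun a ha => by
    simp only [Finset.mem_sdiff, Finset.mem_union] at ha ⊢; tauto
  induction k with
  | zero => intro a ha; exact Rch_ini ha
  | succ k ih =>
    intro a ha
    rw [Function.iterate_succ_apply'] at ha
    obtain ⟨h1, h2 | ⟨b, hb, hba, u, hu, hbu⟩⟩ := Finset.mem_filter.1 ha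
    · exact Rch_mono (ih a h2) (by omega)
    · exact Rch_mono (Rch_snoc (Rch_snoc (ih u hu) hbu.symm (hB b hb)) hba (hA a h1)) (by omega)

lemma Rch_join {W : Finset V} {x y a : V} {k l : ℕ} (h1 : Rch G W Z x a k) (h2 : Rch G W Z y a l) :
    ∃ p : G.Walk x y, p.IsPath ∧ p.length ≤ k + l ∧
      ∀ v ∈ p.support, v ≠ x → v ≠ y → v ∈ W \ Z := by
  obtain ⟨p, hp, hps⟩ := h1
  obtain ⟨p', hp', hps'⟩ := h2
  refine ⟨(p.append p'.reverse).bypass, SimpleGraph.Walk.bypass_isPath _, ?_, ?_⟩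
  · refine (SimpleGraph.Walk.length_bypass_le_length _).trans ?_
    rw [SimpleGraph.Walk.length_append, SimpleGraph.Walk.length_reverse]; omega
  · intro v hv hx hy
    have hv := SimpleGraph.Walk.support_bypass_subset_support _ hv
    rw [SimpleGraph.Walk.mem_support_append_iff] at hv
    rcases hv with hv | hv
    · exact hps v hv hx
    · rw [SimpleGraph.Walk.support_reverse, List.mem_reverse] at hv
      exact hps' v hv hy

lemma nbr_count (K : Finset ι) (x : ι → V) (W : Finset V) (lam D : ℝ) (hD : 0 < D)
    (hlow : ∀ i ∈ K, lam ≤ dg G (x i) W)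
    (hup : ∀ v ∈ W, ((K.filter fun i => G.Adj v (x i)).card : ℝ) ≤ D) :
    lam * K.card ≤ D * (W.filter fun v => ∃ i ∈ K, G.Adj v (x i)).card := by
  calc lam * K.card = ∑ i ∈ K, lam := by rw [Finset.sum_const, nsmul_eq_mul]; ring
    _ ≤ ∑ i ∈ K, dg G (x i) W := Finset.sum_le_sum hlow
    _ = ∑ v ∈ W, ((K.filter fun i => G.Adj v (x i)).card : ℝ) := by
      simp only [dg_eq_sum]
      rw [Finset.sum_comm]
      refine Finset.sum_congr rfl fun v _ => ?_
      rw [Finset.sum_boole]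
      simp only [G.adj_comm]
    _ = ∑ v ∈ W.filter fun v => ∃ i ∈ K, G.Adj v (x i), ((K.filter fun i => G.Adj v (x i)).card : ℝ) := by
      symm
      apply Finset.sum_subset (Finset.filter_subset _ _)
      intro v hv hv2
      norm_cast
      rw [Finset.card_eq_zero, Finset.filter_eq_empty_iff]
      intro i hi h
      exact hv2 (Finset.mem_filter.2 ⟨hv, i, hi, h⟩)
    _ ≤ ∑ v ∈ W.filter fun v => ∃ i ∈ K, G.Adj v (x i), D :=
      Finset.sum_le_sum fun v hv => hup v (Finset.mem_filter.1 hv).1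
    _ = _ := by rw [Finset.sum_const, nsmul_eq_mul]; ring

lemma ini_size (K : Finset ι) (x : ι → V) (lam D : ℝ) (hlam : 0 < lam) (hlL : lam ≤ Lam) (hD : 0 < D)
    (hg : Good G WA WB Lam γ)
    (hlow : ∀ i ∈ K, lam ≤ dg G (x i) WA ∨ lam ≤ dg G (x i) WB)
    (hlB : ∀ b ∈ WB, lam ≤ dg G b WA)
    (hup : ∀ v ∈ WA ∪ WB, ((K.filter fun i => G.Adj v (x i)).card : ℝ) ≤ D) :
    lam ^ 2 * K.card ≤ 2 * Lam * D * ((K.biUnion fun i => ini G WA WB Z (x i)).card + 2 * Z.card) := by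
  set F := K.biUnion fun i => ini G WA WB Z (x i) with hF
  set K1 := K.filter fun i => lam ≤ dg G (x i) WA with hK1
  set K2 := K.filter fun i => ¬ lam ≤ dg G (x i) WA with hK2
  have hcard : (K.card : ℝ) = K1.card + K2.card := by
    exact_mod_cast (Finset.card_filter_add_card_filter_not (s := K) (fun i => lam ≤ dg G (x i) WA)).symm
  have hsub : ∀ K' ⊆ K, ∀ v ∈ WA ∪ WB, ((K'.filter fun i => G.Adj v (x i)).card : ℝ) ≤ D := by
    intro K' hK' v hv
    refine le_trans ?_ (hup v hv)
    exact_mod_cast Finset.card_le_card (Finset.filter_subset_filter _ hK')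
  have hsd : ∀ (N N' : Finset V), N \ Z ⊆ N' → (N.card : ℝ) ≤ N'.card + Z.card := by
    intro N N' h
    have h1 := Finset.card_le_card h
    have h2 := Finset.le_card_sdiff Z N
    have : N.card ≤ N'.card + Z.card := by omega
    exact_mod_cast this
  have h1 := nbr_count (G := G) K1 x WA lam D hD (fun i hi => (Finset.mem_filter.1 hi).2)
    (fun v hv => hsub K1 (Finset.filter_subset _ _) v (Finset.mem_union_left _ hv))
  have h2 := nbr_count (G := G) K2 x WB lam D hD
    (fun i hi => ((hlow i (Finset.mem_filter.1 hi).1).resolve_left (Finset.mem_filter.1 hi).2))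
    (fun v hv => hsub K2 (Finset.filter_subset _ _) v (Finset.mem_union_right _ hv))
  set N1 := WA.filter fun v => ∃ i ∈ K1, G.Adj v (x i) with hN1
  set N2 := WB.filter fun v => ∃ i ∈ K2, G.Adj v (x i) with hN2
  have h3 : (N1.card : ℝ) ≤ F.card + Z.card := by
    apply hsd
    intro a ha
    obtain ⟨ha1, ha2⟩ := Finset.mem_sdiff.1 ha
    obtain ⟨ha3, i, hi, hai⟩ := Finset.mem_filter.1 ha1
    exact Finset.mem_biUnion.2 ⟨i, (Finset.mem_filter.1 hi).1,
      Finset.mem_filter.2 ⟨Finset.mem_sdiff.2 ⟨ha3, ha2⟩, Or.inl hai.symm⟩⟩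
  set N2' := N2 \ Z with hN2'
  have h4 : (N2.card : ℝ) ≤ N2'.card + Z.card := hsd _ _ (Finset.Subset.refl _)
  have h5 := nbr_count (G := G) N2' (fun b => b) WA lam Lam (hlam.trans_le hlL)
    (fun b hb => hlB b (Finset.mem_filter.1 (Finset.mem_sdiff.1 hb).1).1)
    (fun a ha => by
      refine le_trans ?_ (hg.upA a ha)
      refine le_trans (le_of_eq rfl) (dg_mono G a (U := N2') ?_)
      exact Finset.sdiff_subset.trans (Finset.filter_subset _ _))
  have h6 : ((WA.filter fun v => ∃ i ∈ N2', G.Adj v i).card : ℝ) ≤ F.card + Z.card := by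
    apply hsd
    intro a ha
    obtain ⟨ha1, ha2⟩ := Finset.mem_sdiff.1 ha
    obtain ⟨ha3, b, hb, hab⟩ := Finset.mem_filter.1 ha1
    obtain ⟨hb1, hb2⟩ := Finset.mem_sdiff.1 hb
    obtain ⟨hb3, i, hi, hbi⟩ := Finset.mem_filter.1 hb1
    exact Finset.mem_biUnion.2 ⟨i, (Finset.mem_filter.1 hi).1,
      Finset.mem_filter.2 ⟨Finset.mem_sdiff.2 ⟨ha3, ha2⟩,
        Or.inr ⟨b, Finset.mem_sdiff.2 ⟨hb3, hb2⟩, hbi.symm, hab.symm⟩⟩⟩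
  have hLam : 0 < Lam := hlam.trans_le hlL
  have hz : (0:ℝ) ≤ Z.card := Nat.cast_nonneg _
  have hFz : (0:ℝ) ≤ F.card := Nat.cast_nonneg _
  have e1 : lam ^ 2 * K1.card ≤ Lam * D * (F.card + Z.card) := by
    calc lam ^ 2 * K1.card = lam * (lam * K1.card) := by ring
      _ ≤ lam * (D * N1.card) := by gcongr
      _ ≤ Lam * (D * (F.card + Z.card)) := by gcongr
      _ = _ := by ring
  have e2 : lam ^ 2 * K2.card ≤ Lam * D * (F.card + 2 * Z.card) := by
    calc lam ^ 2 * K2.card = lam * (lam * K2.card) := by ring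
      _ ≤ lam * (D * N2.card) := by gcongr
      _ ≤ lam * (D * (N2'.card + Z.card)) := by gcongr
      _ = D * (lam * N2'.card + lam * Z.card) := by ring
      _ ≤ D * (Lam * (F.card + Z.card) + Lam * Z.card) := by
        have : lam * N2'.card ≤ Lam * (F.card + Z.card) := h5.trans (by gcongr)
        gcongr
      _ = _ := by ring
  have e3 : 0 ≤ Lam * D * Z.card := by positivity
  have e4 : 0 ≤ Lam * D * F.card := by positivity
  rw [hcard]
  nlinarith
end conn
end SCon

set_option linter.unusedSectionVars false
set_option linter.unusedVariables false
namespace SCon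
open Finset
open scoped Classical

section conn2
variable {V ι : Type*} [Fintype V] [DecidableEq V]
variable {G : SimpleGraph V} {WA WB Z : Finset V} {Lam γ : ℝ}

lemma ini_sub (x : V) : ini G WA WB Z x ⊆ WA \ Z := Finset.filter_subset _ _

lemma half_bad (hg : Good G WA WB Lam γ) (hγ : 0 < γ) (hγ1 : γ ≤ 1) {lam D ζ : ℝ} (hlam : 0 < lam)
    (hlL : lam ≤ Lam) (hD : 0 < D) {R : ℕ} (hR : (Fintype.card V : ℝ) < (1 + γ / 2) ^ R) (j : ℕ)
    (J : Finset ι) (x : ι → V) (hJ : J.Nonempty) (hJ2 : J.card ≤ 2 ^ j)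
    (hZ : (Z.card : ℝ) ≤ ζ * J.card) (hpar : 40 * ζ * Lam * D ≤ γ * lam ^ 2)
    (hlow : ∀ v, lam ≤ dg G v WA ∨ lam ≤ dg G v WB) (hlB : ∀ b ∈ WB, lam ≤ dg G b WA)
    (hup : ∀ v ∈ WA ∪ WB, ((J.filter fun i => G.Adj v (x i)).card : ℝ) ≤ D) :
    2 * (J.filter fun i => 2 * ((Gam G WA WB Z)^[R * (j + 1)] (ini G WA WB Z (x i))).card ≤ WA.card).card
      < J.card := by
  by_contra hcon
  push Not at hcon
  set K := J.filter fun i => 2 * ((Gam G WA WB Z)^[R * (j + 1)] (ini G WA WB Z (x i))).card ≤ WA.card with hK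
  have hLam : 0 < Lam := hlam.trans_le hlL
  have hKJ : K ⊆ J := Finset.filter_subset _ _
  have hJ0 : (0:ℝ) < J.card := by exact_mod_cast hJ.card_pos
  have hcon' : (J.card : ℝ) ≤ 2 * K.card := by exact_mod_cast hcon
  have hz : (0:ℝ) ≤ Z.card := Nat.cast_nonneg _
  have s1 := ini_size (Z := Z) K x lam D hlam hlL hD hg (fun i _ => hlow _) hlB (fun v hv => by
    refine le_trans ?_ (hup v hv)
    exact_mod_cast Finset.card_le_card (Finset.filter_subset_filter _ hKJ))
  have s2 := ini_size (Z := Z) J x lam D hlam hlL hD hg (fun i _ => hlow _) hlB hup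
  set F := K.biUnion fun i => ini G WA WB Z (x i) with hF
  set F' := J.biUnion fun i => ini G WA WB Z (x i) with hF'
  have hLD : 0 < Lam * D := by positivity
  have hp2 : 40 * (Lam * D) * Z.card ≤ γ * lam ^ 2 * J.card := by
    calc 40 * (Lam * D) * Z.card ≤ 40 * (Lam * D) * (ζ * J.card) := by gcongr
      _ = (40 * ζ * Lam * D) * J.card := by ring
      _ ≤ _ := by gcongr
  have hγz : γ * Z.card ≤ Z.card := by nlinarith
  have a1 : 8 * (Z.card : ℝ) ≤ γ * F.card := by
    have : γ * (lam ^ 2 * J.card) ≤ γ * (2 * (2 * Lam * D * (F.card + 2 * Z.card))) := by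
      have : lam ^ 2 * J.card ≤ lam ^ 2 * (2 * K.card) := by gcongr
      exact mul_le_mul_of_nonneg_left (by linarith) hγ.le
    have h3 : (Lam * D) * (40 * Z.card) ≤ (Lam * D) * (4 * (γ * F.card) + 8 * (γ * Z.card)) := by linarith
    have := le_of_mul_le_mul_left h3 hLD
    linarith
  have a2 : 16 * (Z.card : ℝ) ≤ γ * WA.card := by
    have : γ * (lam ^ 2 * J.card) ≤ γ * (2 * Lam * D * (F'.card + 2 * Z.card)) := by gcongr
    have h3 : (Lam * D) * (40 * Z.card) ≤ (Lam * D) * (2 * (γ * F'.card) + 4 * (γ * Z.card)) := by linarith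
    have h4 := le_of_mul_le_mul_left h3 hLD
    have h5 : (F'.card : ℝ) ≤ WA.card := by
      exact_mod_cast Finset.card_le_card (Finset.biUnion_subset.2 fun i _ =>
        (ini_sub (x i)).trans Finset.sdiff_subset)
    have : γ * F'.card ≤ γ * WA.card := by gcongr
    linarith
  have hne : F.Nonempty := by
    rw [← Finset.card_pos]
    by_contra h
    have hF0 : (F.card : ℝ) = 0 := by exact_mod_cast (Nat.le_zero.1 (not_lt.1 h))
    have hZ0 : (Z.card : ℝ) = 0 := by rw [hF0] at a1; linarith
    rw [hF0, hZ0] at s1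
    have : 0 < lam ^ 2 * (K.card : ℝ) := by
      have : (0:ℝ) < K.card := by linarith
      positivity
    linarith
  obtain ⟨i, hi, hbig⟩ := halve hg hLam hγ hR a2 j K (fun i => ini G WA WB Z (x i))
    ((Finset.card_le_card hKJ).trans hJ2) (fun i => ini_sub _) hne (by linarith)
  have := (Finset.mem_filter.1 hi).2
  omega

lemma one_path (hg : Good G WA WB Lam γ) (hγ : 0 < γ) (hγ1 : γ ≤ 1) {lam D ζ : ℝ} (hlam : 0 < lam)
    (hlL : lam ≤ Lam) (hD : 0 < D) {R : ℕ} (hR : (Fintype.card V : ℝ) < (1 + γ / 2) ^ R) (j : ℕ)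
    (J : Finset ι) (x y : ι → V) (hJ : J.Nonempty) (hJ2 : J.card ≤ 2 ^ j)
    (hZ : (Z.card : ℝ) ≤ ζ * J.card) (hpar : 40 * ζ * Lam * D ≤ γ * lam ^ 2)
    (hlow : ∀ v, lam ≤ dg G v WA ∨ lam ≤ dg G v WB) (hlB : ∀ b ∈ WB, lam ≤ dg G b WA)
    (hupx : ∀ v ∈ WA ∪ WB, ((J.filter fun i => G.Adj v (x i)).card : ℝ) ≤ D)
    (hupy : ∀ v ∈ WA ∪ WB, ((J.filter fun i => G.Adj v (y i)).card : ℝ) ≤ D) :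
    ∃ i ∈ J, ∃ p : G.Walk (x i) (y i), p.IsPath ∧ p.length ≤ 4 + 4 * (R * (j + 1)) ∧
      ∀ v ∈ p.support, v ≠ x i → v ≠ y i → v ∈ (WA ∪ WB) \ Z := by
  have hx := half_bad hg hγ hγ1 hlam hlL hD hR j J x hJ hJ2 hZ hpar hlow hlB hupx
  have hy := half_bad hg hγ hγ1 hlam hlL hD hR j J y hJ hJ2 hZ hpar hlow hlB hupy
  set Kx := J.filter fun i => 2 * ((Gam G WA WB Z)^[R * (j + 1)] (ini G WA WB Z (x i))).card ≤ WA.card with hKx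
  set Ky := J.filter fun i => 2 * ((Gam G WA WB Z)^[R * (j + 1)] (ini G WA WB Z (y i))).card ≤ WA.card with hKy
  have h1 : (Kx ∪ Ky).card < J.card := by
    have := Finset.card_union_le Kx Ky
    omega
  obtain ⟨i, hi, hi2⟩ := Finset.exists_mem_notMem_of_card_lt_card h1
  have hix : WA.card < 2 * ((Gam G WA WB Z)^[R * (j + 1)] (ini G WA WB Z (x i))).card := by
    by_contra h
    exact hi2 (Finset.mem_union_left _ (Finset.mem_filter.2 ⟨hi, not_lt.1 h⟩))
  have hiy : WA.card < 2 * ((Gam G WA WB Z)^[R * (j + 1)] (ini G WA WB Z (y i))).card := by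
    by_contra h
    exact hi2 (Finset.mem_union_right _ (Finset.mem_filter.2 ⟨hi, not_lt.1 h⟩))
  have hint : ((Gam G WA WB Z)^[R * (j + 1)] (ini G WA WB Z (x i)) ∩
      (Gam G WA WB Z)^[R * (j + 1)] (ini G WA WB Z (y i))).Nonempty := by
    rw [← Finset.card_pos]
    have h3 := Finset.card_union_add_card_inter ((Gam G WA WB Z)^[R * (j + 1)] (ini G WA WB Z (x i)))
      ((Gam G WA WB Z)^[R * (j + 1)] (ini G WA WB Z (y i)))
    have h4 : ((Gam G WA WB Z)^[R * (j + 1)] (ini G WA WB Z (x i)) ∪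
      (Gam G WA WB Z)^[R * (j + 1)] (ini G WA WB Z (y i))).card ≤ WA.card :=
      Finset.card_le_card (Finset.union_subset
        ((Gam_iter_sub (ini_sub _) _).trans Finset.sdiff_subset)
        ((Gam_iter_sub (ini_sub _) _).trans Finset.sdiff_subset))
    omega
  obtain ⟨a, ha⟩ := hint
  obtain ⟨ha1, ha2⟩ := Finset.mem_inter.1 ha
  obtain ⟨p, hp, hl, hs⟩ := Rch_join (Rch_iter _ a ha1) (Rch_iter _ a ha2)
  exact ⟨i, hi, p, hp, by omega, hs⟩

def PSys (G : SimpleGraph V) (x y : ι → V) (l : ℕ) (W : Finset V) (I : Finset ι) : Prop :=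
  ∃ Q : ι → Finset V, (∀ i ∈ I, Q i ⊆ W ∧ (Q i).card ≤ l + 1 ∧
      ∃ p : G.Walk (x i) (y i), p.IsPath ∧ p.length ≤ l ∧
        ∀ v ∈ p.support, v ≠ x i → v ≠ y i → v ∈ Q i) ∧
    ∀ i ∈ I, ∀ j ∈ I, i ≠ j → Disjoint (Q i) (Q j)

lemma PSys_empty (x y : ι → V) (l : ℕ) (W : Finset V) : PSys G x y l W ∅ :=
  ⟨fun _ => ∅, by simp, by simp⟩

lemma PSys_union {x y : ι → V} {l : ℕ} {W1 W2 : Finset V} {I1 I2 : Finset ι}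
    (h1 : PSys G x y l W1 I1) (h2 : PSys G x y l W2 I2) (hW : Disjoint W1 W2) (hI : Disjoint I1 I2) :
    PSys G x y l (W1 ∪ W2) (I1 ∪ I2) := by
  obtain ⟨Q1, a1, b1⟩ := h1
  obtain ⟨Q2, a2, b2⟩ := h2
  have e2 : ∀ i ∈ I2, i ∉ I1 := fun i hi hi' => Finset.disjoint_left.1 hI hi' hi
  refine ⟨fun i => if i ∈ I1 then Q1 i else Q2 i, ?_, ?_⟩
  · intro i hi
    by_cases h : i ∈ I1
    · simp only [h, if_true]
      exact ⟨(a1 i h).1.trans Finset.subset_union_left, (a1 i h).2⟩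
    · simp only [h, if_false]
      have h' := (Finset.mem_union.1 hi).resolve_left h
      exact ⟨(a2 i h').1.trans Finset.subset_union_right, (a2 i h').2⟩
  · intro i hi j hj hij
    rcases Finset.mem_union.1 hi with hi | hi <;> rcases Finset.mem_union.1 hj with hj | hj
    · simp only [hi, hj, if_true]; exact b1 i hi j hj hij
    · simp only [hi, e2 j hj, if_true, if_false]
      exact Finset.disjoint_of_subset_left (a1 i hi).1 (Finset.disjoint_of_subset_right (a2 j hj).1 hW)
    · simp only [hj, e2 i hi, if_true, if_false]
      exact (Finset.disjoint_of_subset_left (a1 j hj).1 (Finset.disjoint_of_subset_right (a2 i hi).1 hW)).symm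
    · simp only [e2 i hi, e2 j hj, if_false]; exact b2 i hi j hj hij

lemma PSys_insert {x y : ι → V} {l : ℕ} {W : Finset V} {I : Finset ι} {Q : ι → Finset V}
    (hQ : ∀ i ∈ I, Q i ⊆ W ∧ (Q i).card ≤ l + 1 ∧
      ∃ p : G.Walk (x i) (y i), p.IsPath ∧ p.length ≤ l ∧
        ∀ v ∈ p.support, v ≠ x i → v ≠ y i → v ∈ Q i)
    (hdis : ∀ i ∈ I, ∀ j ∈ I, i ≠ j → Disjoint (Q i) (Q j)) {i : ι} (hi : i ∉ I)
    (p : G.Walk (x i) (y i)) (hp : p.IsPath) (hl : p.length ≤ l)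
    (hs : ∀ v ∈ p.support, v ≠ x i → v ≠ y i → v ∈ W \ I.biUnion Q) :
    PSys G x y l W (insert i I) := by
  set P : Finset V := p.support.toFinset.filter fun v => v ≠ x i ∧ v ≠ y i with hP
  have hPW : P ⊆ W \ I.biUnion Q := by
    intro v hv
    obtain ⟨h1, h2, h3⟩ := Finset.mem_filter.1 hv
    exact hs v (List.mem_toFinset.1 h1) h2 h3
  have hPd : ∀ k ∈ I, Disjoint P (Q k) := by
    intro k hk
    rw [Finset.disjoint_left]
    intro v hv hv2
    exact (Finset.mem_sdiff.1 (hPW hv)).2 (Finset.mem_biUnion.2 ⟨k, hk, hv2⟩)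
  have hne : ∀ k ∈ I, k ≠ i := fun k hk h => hi (h ▸ hk)
  refine ⟨fun k => if k = i then P else Q k, ?_, ?_⟩
  · intro k hk
    rcases Finset.mem_insert.1 hk with rfl | hk
    · simp only [if_true]
      refine ⟨hPW.trans Finset.sdiff_subset, ?_, p, hp, hl, fun v h1 h2 h3 =>
        Finset.mem_filter.2 ⟨List.mem_toFinset.2 h1, h2, h3⟩⟩
      refine (Finset.card_filter_le _ _).trans ((List.toFinset_card_le _).trans ?_)
      rw [SimpleGraph.Walk.length_support]; omega
    · simp only [hne k hk, if_false]; exact hQ k hk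
  · intro k hk k' hk' hkk
    rcases Finset.mem_insert.1 hk with rfl | hk <;> rcases Finset.mem_insert.1 hk' with rfl | hk'
    · exact absurd rfl hkk
    · simp only [if_true, hne k' hk', if_false]; exact hPd k' hk'
    · have hk0 : k ∈ I := by assumption
      simp only [if_true, hne k hk0, if_false]; exact (hPd k hk0).symm
    · simp only [hne k hk, hne k' hk', if_false]; exact hdis k hk k' hk' hkk

/-- hypotheses on one class -/
structure Cls (G : SimpleGraph V) (WA WB : Finset V) (Lam γ lam : ℝ) : Prop where
  good : Good G WA WB Lam γ
  low : ∀ v, lam ≤ dg G v WA ∨ lam ≤ dg G v WB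
  lowB : ∀ b ∈ WB, lam ≤ dg G b WA

lemma round {lam D : ℝ} (hc : Cls G WA WB Lam γ lam) (hγ : 0 < γ) (hγ1 : γ ≤ 1) (hlam : 0 < lam)
    (hlL : lam ≤ Lam) (hD : 0 < D) {R M l : ℕ} (hR : (Fintype.card V : ℝ) < (1 + γ / 2) ^ R)
    (hl : 4 + 4 * (R * (M + 1)) ≤ l) (hpar : 40 * (2 * (l + 1)) * Lam * D ≤ γ * lam ^ 2)
    (I : Finset ι) (x y : ι → V) (hI : I.card ≤ 2 ^ M)
    (hupx : ∀ v ∈ WA ∪ WB, ((I.filter fun i => G.Adj v (x i)).card : ℝ) ≤ D)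
    (hupy : ∀ v ∈ WA ∪ WB, ((I.filter fun i => G.Adj v (y i)).card : ℝ) ≤ D) :
    ∃ I1 ⊆ I, PSys G x y l (WA ∪ WB) I1 ∧ 2 * (I \ I1).card ≤ I.card := by
  set Sys := I.powerset.filter fun I1 => PSys G x y l (WA ∪ WB) I1 with hSys
  have hne : Sys.Nonempty := ⟨∅, Finset.mem_filter.2 ⟨Finset.empty_mem_powerset _, PSys_empty _ _ _ _⟩⟩
  obtain ⟨I1, hI1, hmax⟩ := Finset.exists_max_image Sys Finset.card hne
  obtain ⟨h1, h2⟩ := Finset.mem_filter.1 hI1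
  have h1 := Finset.mem_powerset.1 h1
  refine ⟨I1, h1, h2, ?_⟩
  by_contra hcon
  push Not at hcon
  obtain ⟨Q, hQ, hdis⟩ := h2
  have hJI : I \ I1 ⊆ I := Finset.sdiff_subset
  have hsub : ∀ z : ι → V, ∀ v, (((I \ I1).filter fun i => G.Adj v (z i)).card : ℝ) ≤
      ((I.filter fun i => G.Adj v (z i)).card : ℝ) := by
    intro z v
    exact_mod_cast Finset.card_le_card (Finset.filter_subset_filter _ hJI)
  have hZ : (((I1.biUnion Q).card : ℕ) : ℝ) ≤ (2 * (l + 1)) * (I \ I1).card := by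
    have h3 : (I1.biUnion Q).card ≤ I1.card * (l + 1) :=
      Finset.card_biUnion_le_card_mul _ _ _ fun i hi => (hQ i hi).2.1
    have h4 : I1.card ≤ 2 * (I \ I1).card := by
      have := Finset.card_le_card h1
      omega
    have h5 : (I1.biUnion Q).card ≤ (2 * (I \ I1).card) * (l + 1) :=
      h3.trans (Nat.mul_le_mul_right _ h4)
    have h6 : (((I1.biUnion Q).card : ℕ) : ℝ) ≤ (2 * (I \ I1).card) * (l + 1) := by exact_mod_cast h5
    linarith
  obtain ⟨i, hi, p, hp, hpl, hps⟩ := one_path hc.good hγ hγ1 hlam hlL hD hR M (I \ I1) x y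
    (Finset.card_pos.1 (by omega)) ((Finset.card_le_card hJI).trans hI) hZ hpar hc.low hc.lowB
    (fun v hv => (hsub x v).trans (hupx v hv)) (fun v hv => (hsub y v).trans (hupy v hv))
  obtain ⟨hi1, hi2⟩ := Finset.mem_sdiff.1 hi
  have h3 := PSys_insert hQ hdis hi2 p hp (hpl.trans hl) hps
  have h4 := hmax (insert i I1) (Finset.mem_filter.2 ⟨Finset.mem_powerset.2
    (Finset.insert_subset hi1 h1), h3⟩)
  rw [Finset.card_insert_of_notMem hi2] at h4
  omega

lemma rounds {lam D : ℝ} {M : ℕ} {WA WB : Fin M → Finset V} {S : Finset V}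
    (hc : ∀ k, Cls G (WA k) (WB k) Lam γ lam) (hγ : 0 < γ) (hγ1 : γ ≤ 1) (hlam : 0 < lam)
    (hlL : lam ≤ Lam) (hD : 0 < D) {R l : ℕ} (hR : (Fintype.card V : ℝ) < (1 + γ / 2) ^ R)
    (hl : 4 + 4 * (R * (M + 1)) ≤ l) (hpar : 40 * (2 * (l + 1)) * Lam * D ≤ γ * lam ^ 2)
    (hS : ∀ k, WA k ∪ WB k ⊆ S) (hdis : ∀ k k', k ≠ k' → Disjoint (WA k ∪ WB k) (WA k' ∪ WB k'))
    (I : Finset ι) (x y : ι → V) (hI : I.card < 2 ^ M)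
    (hupx : ∀ v ∈ S, ((I.filter fun i => G.Adj v (x i)).card : ℝ) ≤ D)
    (hupy : ∀ v ∈ S, ((I.filter fun i => G.Adj v (y i)).card : ℝ) ≤ D) :
    PSys G x y l S I := by
  have key : ∀ j (hj : j ≤ M), ∃ I1 ⊆ I, PSys G x y l
      ((Finset.univ.filter fun k : Fin M => k.1 < j).biUnion fun k => WA k ∪ WB k) I1 ∧
      2 ^ j * (I \ I1).card ≤ I.card := by
    intro j
    induction j with
    | zero => intro _; exact ⟨∅, by simp, PSys_empty _ _ _ _, by simp⟩
    | succ j ih =>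
      intro hj
      obtain ⟨I1, h1, h2, h3⟩ := ih (by omega)
      set k : Fin M := ⟨j, by omega⟩ with hk
      have hJI : I \ I1 ⊆ I := Finset.sdiff_subset
      have hsub : ∀ z : ι → V, ∀ v, (((I \ I1).filter fun i => G.Adj v (z i)).card : ℝ) ≤
          ((I.filter fun i => G.Adj v (z i)).card : ℝ) := by
        intro z v
        exact_mod_cast Finset.card_le_card (Finset.filter_subset_filter _ hJI)
      obtain ⟨I2, g1, g2, g3⟩ := round (hc k) hγ hγ1 hlam hlL hD hR hl hpar (I \ I1) x y
        ((Finset.card_le_card hJI).trans hI.le)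
        (fun v hv => (hsub x v).trans (hupx v (hS k hv))) (fun v hv => (hsub y v).trans (hupy v (hS k hv)))
      refine ⟨I1 ∪ I2, Finset.union_subset h1 (g1.trans hJI), ?_, ?_⟩
      · have hu : ((Finset.univ.filter fun k : Fin M => k.1 < j + 1).biUnion fun k => WA k ∪ WB k) =
            ((Finset.univ.filter fun k : Fin M => k.1 < j).biUnion fun k => WA k ∪ WB k) ∪
              (WA k ∪ WB k) := by
          have : (Finset.univ.filter fun k : Fin M => k.1 < j + 1) =
              (Finset.univ.filter fun k : Fin M => k.1 < j) ∪ {k} := by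
            ext a
            simp only [Finset.mem_filter, Finset.mem_univ, true_and, Finset.mem_union,
              Finset.mem_singleton, hk, Fin.ext_iff]
            omega
          rw [this, Finset.union_biUnion, Finset.singleton_biUnion]
        rw [hu]
        refine PSys_union h2 g2 ?_ ?_
        · rw [Finset.disjoint_biUnion_left]
          intro a ha
          apply hdis
          intro h
          have := (Finset.mem_filter.1 ha).2
          rw [h] at this
          simp [hk] at this
        · exact Finset.disjoint_of_subset_right g1 Finset.disjoint_sdiff
      · have : I \ (I1 ∪ I2) = (I \ I1) \ I2 := by rw [sdiff_sdiff_left]; rfl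
        rw [this, pow_succ]
        calc 2 ^ j * 2 * ((I \ I1) \ I2).card = 2 ^ j * (2 * ((I \ I1) \ I2).card) := by ring
          _ ≤ 2 ^ j * (I \ I1).card := Nat.mul_le_mul_left _ g3
          _ ≤ _ := h3
  obtain ⟨I1, h1, h2, h3⟩ := key M le_rfl
  have h4 : (I \ I1).card = 0 := by
    by_contra h
    have : 2 ^ M * 1 ≤ 2 ^ M * (I \ I1).card := Nat.mul_le_mul_left _ (by omega)
    omega
  have h5 : I1 = I := Finset.Subset.antisymm h1 (Finset.sdiff_eq_empty_iff_subset.1 (Finset.card_eq_zero.1 h4))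
  rw [h5] at h2
  obtain ⟨Q, a, b⟩ := h2
  refine ⟨Q, fun i hi => ⟨(a i hi).1.trans ?_, (a i hi).2⟩, b⟩
  exact Finset.biUnion_subset.2 fun k _ => hS k

lemma connecting {n : ℕ} {G : SimpleGraph (Fin n)} {Lam γ lam D : ℝ} {M : ℕ} {WA WB : Fin M → Finset (Fin n)}
    {S : Finset (Fin n)} (hM : n < 2 ^ M) 
    (hc : ∀ k, Cls G (WA k) (WB k) Lam γ lam) (hγ : 0 < γ) (hγ1 : γ ≤ 1) (hlam : 0 < lam)
    (hlL : lam ≤ Lam) (hD : 0 < D) (hDl : D ≤ lam) {R l : ℕ} (hR : (n : ℝ) < (1 + γ / 2) ^ R)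
    (hl : 4 + 4 * (R * (M + 1)) ≤ l) (hpar : 40 * (2 * (l + 1)) * Lam * D ≤ γ * lam ^ 2)
    (hS : ∀ k, WA k ∪ WB k ⊆ S) (hdis : ∀ k k', k ≠ k' → Disjoint (WA k ∪ WB k) (WA k' ∪ WB k'))
    (hl6 : (l : ℝ) ≤ Real.logb 2 n ^ 6) (hM0 : 0 < M) :
    IsConnecting n G (S : Set (Fin n)) D := by
  intro r x y hx hy hdeg
  have hup : ∀ z : Fin r → Fin n, (∀ v ∈ S, (Nat.card {i : Fin r // G.Adj v (z i)} : ℝ) ≤ D) →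
      ∀ v ∈ S, (((Finset.univ : Finset (Fin r)).filter fun i => G.Adj v (z i)).card : ℝ) ≤ D := by
    intro z h v hv
    have := h v hv
    rwa [Nat.card_eq_fintype_card, Fintype.card_subtype] at this
  have hupx := hup x (fun v hv => by
    refine le_trans ?_ (hdeg v hv)
    push_cast
    linarith [(Nat.cast_nonneg (Nat.card {i : Fin r // G.Adj v (y i)}) : (0:ℝ) ≤ _)])
  have hupy := hup y (fun v hv => by
    refine le_trans ?_ (hdeg v hv)
    push_cast
    linarith [(Nat.cast_nonneg (Nat.card {i : Fin r // G.Adj v (x i)}) : (0:ℝ) ≤ _)])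
  have hr : (Finset.univ : Finset (Fin r)).card < 2 ^ M := by
    refine lt_of_le_of_lt ?_ hM
    set k : Fin M := ⟨0, hM0⟩
    have h1 := nbr_count (G := G) (Finset.univ : Finset (Fin r)) x S lam D hD (fun i _ => by
        rcases (hc k).low (x i) with h | h
        · exact h.trans (dg_mono G _ (Finset.subset_union_left.trans (hS k)))
        · exact h.trans (dg_mono G _ (Finset.subset_union_right.trans (hS k)))) hupx
    have h2 : ∀ T : Finset (Fin n), (T.card : ℝ) ≤ n := by
      intro T
      have := Finset.card_le_univ T
      rw [Fintype.card_fin] at this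
      exact_mod_cast this
    have h3 : lam * ((Finset.univ : Finset (Fin r)).card : ℝ) ≤ lam * n :=
      h1.trans (mul_le_mul hDl (h2 _) (Nat.cast_nonneg _) hlam.le)
    exact_mod_cast le_of_mul_le_mul_left h3 hlam
  obtain ⟨Q, hQ, hQd⟩ := rounds hc hγ hγ1 hlam hlL hD (by simpa using hR) hl hpar hS hdis
    (Finset.univ : Finset (Fin r)) x y hr hupx hupy
  choose h1 h2 P h3 h4 h5 using fun i => hQ i (Finset.mem_univ i)
  have hxQ : ∀ i j, x i ∉ Q j := fun i j h => hx i (h1 j h)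
  have hyQ : ∀ i j, y i ∉ Q j := fun i j h => hy i (h1 j h)
  refine ⟨P, h3, fun i => le_trans (by exact_mod_cast h4 i) hl6, fun i v hv a b => h1 i (h5 i v hv a b), ?_⟩
  intro i j hij v hvi hvj
  have hd := Finset.disjoint_left.1 (hQd i (Finset.mem_univ i) j (Finset.mem_univ j) hij)
  have e1 : v ∈ Q i → False := by
    intro h
    have : v ∉ Q j := hd h
    have : v = x j ∨ v = y j := by
      by_contra hc
      push Not at hc
      exact this (h5 j v hvj hc.1 hc.2)
    rcases this with rfl | rfl
    · exact hxQ _ _ h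
    · exact hyQ _ _ h
  have e2 : v = x i ∨ v = y i := by
    by_contra hc
    push Not at hc
    exact e1 (h5 i v hvi hc.1 hc.2)
  refine ⟨e2, ?_⟩
  by_contra hc
  push Not at hc
  have h := h5 j v hvj hc.1 hc.2
  rcases e2 with rfl | rfl
  · exact hxQ _ _ h
  · exact hyQ _ _ h
end conn2
end SCon

set_option linter.unusedSectionVars false
set_option linter.unusedVariables false
namespace SCon
open Finset
open scoped Classical

section ap
variable {V κ : Type*} [Fintype V] [DecidableEq V] [Fintype κ]

def AP (w : V → κ → ℝ) (δ : ℝ) (E : (V → κ) → Prop) : Prop := Pr w (fun ω => ¬ E ω) ≤ δ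

lemma AP.and {w : V → κ → ℝ} (hw : IsW w) {δ₁ δ₂ : ℝ} {E F : (V → κ) → Prop} (h1 : AP w δ₁ E)
    (h2 : AP w δ₂ F) : AP w (δ₁ + δ₂) (fun ω => E ω ∧ F ω) := by
  unfold AP at *
  refine le_trans (Pr_mono hw (F := fun ω => ¬ E ω ∨ ¬ F ω) ?_) ((Pr_or hw _ _).trans (by linarith))
  intro ω h
  tauto

lemma AP.all {w : V → κ → ℝ} (hw : IsW w) {J : Type*} (s : Finset J) {δ : ℝ}
    {E : J → (V → κ) → Prop} (h : ∀ j ∈ s, AP w δ (E j)) :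
    AP w (s.card * δ) (fun ω => ∀ j ∈ s, E j ω) := by
  unfold AP at *
  refine le_trans (Pr_mono hw (F := fun ω => ∃ j ∈ s, ¬ E j ω) ?_) ((Pr_exists hw s _).trans ?_)
  · intro ω h
    push Not at h
    exact h
  · refine (Finset.sum_le_sum h).trans ?_
    rw [Finset.sum_const, nsmul_eq_mul]

lemma AP.mono {w : V → κ → ℝ} (hw : IsW w) {δ : ℝ} {E F : (V → κ) → Prop} (h : AP w δ E)
    (hEF : ∀ ω, E ω → F ω) : AP w δ F := by
  unfold AP at *
  exact le_trans (Pr_mono hw fun ω h1 h2 => h1 (hEF ω h2)) h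

lemma AP.le {w : V → κ → ℝ} {δ δ' : ℝ} {E : (V → κ) → Prop} (h : AP w δ E) (hd : δ ≤ δ') : AP w δ' E :=
  le_trans h hd

lemma AP.ex {w : V → κ → ℝ} (hw : IsW w) {δ : ℝ} {E : (V → κ) → Prop} (h : AP w δ E) (hδ : δ < 1) :
    ∃ ω, E ω := by
  obtain ⟨ω, h⟩ := exists_not_of_Pr_lt hw (lt_of_le_of_lt h hδ)
  exact ⟨ω, not_not.1 h⟩

end ap

section cuts
variable {n : ℕ} {G : SimpleGraph (Fin n)}

lemma expand {ε s β : ℝ} (hG : IsExpander n G ε s) (hε : 0 < ε) (hL : 0 < Real.logb 2 n) (hs : β ≤ s)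
    (U : Finset (Fin n)) (h1 : U.Nonempty) (h2 : (U.card : ℝ) ≤ 2 / 3 * n) :
    β * U.card ≤ ∑ u ∈ U, dg G u Uᶜ := by
  set P : Finset (Fin n × Fin n) := (U ×ˢ Uᶜ).filter fun p => G.Adj p.1 p.2 with hP
  set F : Finset (Sym2 (Fin n)) := P.image fun p => s(p.1, p.2) with hF
  have hFe : (F : Set (Sym2 (Fin n))) ⊆ G.edgeSet := by
    intro e he
    obtain ⟨p, hp, rfl⟩ := Finset.mem_image.1 (Finset.mem_coe.1 he)
    exact (Finset.mem_filter.1 hp).2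
  have hU0 : (0 : ℝ) < U.card := by exact_mod_cast h1.card_pos
  have hPc : (P.card : ℝ) = ∑ u ∈ U, dg G u Uᶜ := by
    simp only [dg_eq_sum]
    rw [← Finset.sum_product', Finset.sum_boole]
  have hFP : (F.card : ℝ) ≤ P.card := by exact_mod_cast Finset.card_image_le
  by_contra hcon
  push Not at hcon
  have h := hG (U : Set (Fin n)) F hFe (by rw [Set.ncard_coe_finset]; exact h1.card_pos)
    (by rw [Set.ncard_coe_finset]; exact h2) (by
      rw [Set.ncard_coe_finset, Set.ncard_coe_finset]
      have : β * U.card ≤ s * U.card := by gcongr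
      linarith)
  have hemp : extNbhd (G.deleteEdges (F : Set (Sym2 (Fin n)))) (U : Set (Fin n)) = ∅ := by
    ext v
    simp only [extNbhd, Set.mem_ofPred_eq, Set.mem_empty_iff_false, iff_false]
    rintro ⟨hv, u, hu, huv⟩
    rw [SimpleGraph.deleteEdges_adj] at huv
    apply huv.2
    exact Finset.mem_coe.2 (Finset.mem_image.2 ⟨(u, v), Finset.mem_filter.2
      ⟨Finset.mem_product.2 ⟨hu, Finset.mem_compl.2 hv⟩, huv.1⟩, rfl⟩)
  rw [hemp, Set.ncard_empty, Set.ncard_coe_finset] at h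
  have : 0 < ε * U.card / Real.logb 2 n ^ 2 := by positivity
  simp only [Nat.cast_zero] at h
  linarith

structure Bip (G : SimpleGraph (Fin n)) (A B : Finset (Fin n)) : Prop where
  compl : B = Aᶜ
  adj : ∀ u v, G.Adj u v → (u ∈ A ∧ v ∈ B) ∨ (u ∈ B ∧ v ∈ A)

variable {A B : Finset (Fin n)}

lemma Bip.symm (h : Bip G A B) : Bip G B A :=
  ⟨by rw [h.compl, compl_compl], fun u v huv => (h.adj u v huv).symm⟩

lemma Bip.disj (h : Bip G A B) : Disjoint A B := by rw [h.compl]; exact disjoint_compl_right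

lemma Bip.dgA (h : Bip G A B) {u : Fin n} (hu : u ∈ A) (T : Finset (Fin n)) :
    dg G u T = dg G u (T ∩ B) := by
  unfold dg
  congr 2
  ext v
  simp only [Finset.mem_filter, Finset.mem_inter]
  constructor
  · rintro ⟨h1, h2⟩
    rcases h.adj u v h2 with h3 | h3
    · exact ⟨⟨h1, h3.2⟩, h2⟩
    · exact absurd h3.1 (Finset.disjoint_left.1 h.disj hu)
  · rintro ⟨⟨h1, _⟩, h2⟩; exact ⟨h1, h2⟩

lemma Bip.dgA' (h : Bip G A B) {u : Fin n} (hu : u ∈ A) {T T' : Finset (Fin n)}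
    (hT : T ∩ B = T' ∩ B) : dg G u T = dg G u T' := by
  rw [h.dgA hu, h.dgA hu T', hT]

lemma hh_compl {Y U : Finset (Fin n)} (h : U ⊆ Y) (x : Fin n) : hh G Y (Y \ U) x = hh G Y U x := by
  unfold hh
  rw [Finset.sdiff_sdiff_eq_self h, min_comm]

lemma cut (hB : Bip G A B) {β : ℝ} (hβ : 0 ≤ β)
    (hexp : ∀ U : Finset (Fin n), U.Nonempty → (U.card : ℝ) ≤ 2 / 3 * n → β * U.card ≤ ∑ u ∈ U, dg G u Uᶜ)
    {V' : Finset (Fin n)} (hV : V' ⊆ B) :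
    β * min (V'.card : ℝ) ((B \ V').card : ℝ) ≤ ∑ a ∈ A, hh G B V' a := by
  set UA := A.filter fun a => dg G a (B \ V') < dg G a V' with hUA
  set UA' := A.filter fun a => ¬ dg G a (B \ V') < dg G a V' with hUA'
  set W := V' ∪ UA with hW
  have hAB := Finset.disjoint_left.1 hB.disj
  have hmem : ∀ v : Fin n, v ∈ B ↔ v ∉ A := fun v => by rw [hB.compl, Finset.mem_compl]
  have hUAA : UA ⊆ A := Finset.filter_subset _ _
  have hdisj : Disjoint V' UA := by
    rw [Finset.disjoint_left]; intro v h1 h2; exact hAB (hUAA h2) (hV h1)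
  have hsum : ∑ a ∈ A, hh G B V' a = ∑ a ∈ UA, dg G a (B \ V') + ∑ a ∈ UA', dg G a V' := by
    rw [← Finset.sum_filter_add_sum_filter_not A (fun a => dg G a (B \ V') < dg G a V')]
    congr 1
    · exact Finset.sum_congr rfl fun a ha => min_eq_right (Finset.mem_filter.1 ha).2.le
    · exact Finset.sum_congr rfl fun a ha => min_eq_left (not_lt.1 (Finset.mem_filter.1 ha).2)
  have hcut : ∑ u ∈ W, dg G u Wᶜ = ∑ a ∈ A, hh G B V' a := by
    rw [hsum, hW, Finset.sum_union hdisj, add_comm]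
    congr 1
    · refine Finset.sum_congr rfl fun a ha => hB.dgA' (hUAA ha) ?_
      ext v
      have := @hUAA v
      simp only [Finset.mem_inter, Finset.mem_compl, Finset.mem_union, Finset.mem_sdiff]
      have := hmem v
      tauto
    · rw [dg_swap G UA' V']
      refine Finset.sum_congr rfl fun v hv => hB.symm.dgA' (hV hv) ?_
      ext u
      have h1 := @hV u
      have h2 := hmem u
      simp only [Finset.mem_inter, Finset.mem_compl, Finset.mem_union, hUA, hUA', Finset.mem_filter]
      tauto
  have hcut2 : ∑ u ∈ Wᶜ, dg G u Wᶜᶜ = ∑ a ∈ A, hh G B V' a := by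
    rw [compl_compl, ← hcut, dg_swap]
  have hnn : 0 ≤ ∑ a ∈ A, hh G B V' a := Finset.sum_nonneg fun a _ => hh_nonneg _ _ _ _
  have hgen : ∀ T : Finset (Fin n), (T.card : ℝ) ≤ 2 / 3 * n → ∑ u ∈ T, dg G u Tᶜ = ∑ a ∈ A, hh G B V' a →
      β * T.card ≤ ∑ a ∈ A, hh G B V' a := by
    intro T h1 h2
    rcases T.eq_empty_or_nonempty with rfl | hne
    · simpa using hnn
    · rw [← h2]; exact hexp T hne h1
  have hcc : (W.card : ℝ) + (Wᶜ.card : ℝ) = n := by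
    have := Finset.card_add_card_compl W
    rw [Fintype.card_fin] at this
    exact_mod_cast this
  have hn0 : (0:ℝ) ≤ n := Nat.cast_nonneg _
  have i1 : (V'.card : ℝ) ≤ W.card := by exact_mod_cast Finset.card_le_card Finset.subset_union_left
  have i2 : ((B \ V').card : ℝ) ≤ Wᶜ.card := by
    norm_cast
    apply Finset.card_le_card
    intro v hv
    have := @hUAA v
    have := hmem v
    simp only [Finset.mem_compl, Finset.mem_union, Finset.mem_sdiff, hW] at hv ⊢
    tauto
  by_cases hlt : (W.card : ℝ) ≤ 2 / 3 * n
  · refine le_trans ?_ (hgen W hlt hcut)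
    gcongr
    exact (min_le_left _ _).trans i1
  · refine le_trans ?_ (hgen Wᶜ (by linarith) hcut2)
    gcongr
    exact (min_le_right _ _).trans i2

lemma mid {WA : Finset (Fin n)} {β1 Lam τ d : ℝ} (hβ1 : 0 ≤ β1) (hτ : 0 ≤ τ) (hLam : 0 ≤ Lam)
    (hSA : ∀ V' ⊆ B, β1 * min (V'.card : ℝ) ((B \ V').card : ℝ) ≤ ∑ a ∈ WA, hh G B V' a)
    (hup : ∀ b ∈ B, dg G b WA ≤ Lam) (hlow : ∀ a ∈ WA, d / 18 ≤ dg G a B) (hd : 0 ≤ d)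
    (h1 : Lam * τ ≤ d / 36) (h2 : β1 * τ ≤ d / 36) {U : Finset (Fin n)} (hU : U ⊆ WA)
    (hU2 : 2 * U.card ≤ WA.card) :
    β1 * τ * U.card ≤ ∑ b ∈ B, hh G WA U b := by
  set UB := B.filter fun b => dg G b (WA \ U) < dg G b U with hUB
  set UB' := B.filter fun b => ¬ dg G b (WA \ U) < dg G b U with hUB'
  have hc : B \ UB = UB' := by
    ext b; simp only [hUB, hUB', Finset.mem_sdiff, Finset.mem_filter]; tauto
  have hUBB : UB ⊆ B := Finset.filter_subset _ _
  have hUBB' : UB' ⊆ B := Finset.filter_subset _ _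
  have hsum : ∑ b ∈ B, hh G WA U b = ∑ a ∈ WA \ U, dg G a UB + ∑ a ∈ U, dg G a UB' := by
    rw [← Finset.sum_filter_add_sum_filter_not B (fun b => dg G b (WA \ U) < dg G b U)]
    congr 1
    · rw [dg_swap G (WA \ U) UB]
      exact Finset.sum_congr rfl fun a ha => min_eq_right (Finset.mem_filter.1 ha).2.le
    · rw [dg_swap G U UB']
      exact Finset.sum_congr rfl fun a ha => min_eq_left (not_lt.1 (Finset.mem_filter.1 ha).2)
  have hU0 : (0:ℝ) ≤ U.card := Nat.cast_nonneg _
  have hnn1 : 0 ≤ ∑ a ∈ WA \ U, dg G a UB := Finset.sum_nonneg fun _ _ => dg_nonneg _ _ _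
  have hnn2 : 0 ≤ ∑ a ∈ U, dg G a UB' := Finset.sum_nonneg fun _ _ => dg_nonneg _ _ _
  -- lower bound for a set T of A-vertices missing few vertices
  have hmiss : ∀ T ⊆ WA, ∀ K K' : Finset (Fin n), K ⊆ B → B \ K = K' → (K.card : ℝ) ≤ τ * U.card →
      (U.card : ℝ) ≤ T.card → d / 36 * U.card ≤ ∑ a ∈ T, dg G a K' := by
    intro T hT K K' hK hKK hKc hTc
    have e1 : ∑ a ∈ T, dg G a B = ∑ a ∈ T, dg G a K' + ∑ a ∈ T, dg G a K := by
      rw [← Finset.sum_add_distrib]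
      refine Finset.sum_congr rfl fun a _ => ?_
      rw [← hKK, dg_sdiff G a hK]; ring
    have e2 : ∑ a ∈ T, dg G a K ≤ Lam * (τ * U.card) := by
      rw [dg_swap]
      calc ∑ b ∈ K, dg G b T ≤ ∑ b ∈ K, Lam := Finset.sum_le_sum fun b hb =>
            (dg_mono G b hT).trans (hup b (hK hb))
        _ = Lam * K.card := by rw [Finset.sum_const, nsmul_eq_mul]; ring
        _ ≤ _ := by gcongr
    have e3 : d / 18 * T.card ≤ ∑ a ∈ T, dg G a B := by
      calc d / 18 * T.card = ∑ a ∈ T, d / 18 := by rw [Finset.sum_const, nsmul_eq_mul]; ring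
        _ ≤ _ := Finset.sum_le_sum fun a ha => hlow a (hT ha)
    have e4 : Lam * (τ * U.card) ≤ d / 36 * U.card := by
      rw [← mul_assoc]; gcongr
    have e5 : d / 18 * U.card ≤ d / 18 * T.card := by gcongr
    linarith
  have hfin : β1 * τ * U.card ≤ d / 36 * U.card := by gcongr
  by_cases c1 : (UB.card : ℝ) ≤ τ * U.card
  · have := hmiss U hU UB UB' hUBB hc c1 le_rfl
    rw [hsum]; linarith
  by_cases c2 : (UB'.card : ℝ) ≤ τ * U.card
  · have := hmiss (WA \ U) Finset.sdiff_subset UB' UB hUBB' (by rw [← hc, Finset.sdiff_sdiff_eq_self hUBB]) c2 (by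
      norm_cast
      rw [Finset.card_sdiff_of_subset hU]
      omega)
    rw [hsum]; linarith
  push Not at c1 c2
  have e1 := hSA UB hUBB
  rw [hc] at e1
  have e2 : ∑ a ∈ WA, hh G B UB a ≤ ∑ b ∈ B, hh G WA U b := by
    rw [hsum, ← Finset.sum_sdiff hU]
    gcongr with a ha a ha
    · exact min_le_left _ _
    · rw [← hc]; exact min_le_right _ _
  refine le_trans ?_ (e1.trans e2)
  rw [mul_assoc]
  gcongr
  exact le_min c1.le c2.le

end cuts

section stage0
variable {V : Type*} [Fintype V] [DecidableEq V]

lemma stage0 (G : SimpleGraph V) (g : V → ℝ) (hg : ∀ v, g v = dg G v Finset.univ) {d θ L : ℝ} (hd : 0 < d)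
    (hlo : ∀ v, d / 18 ≤ g v) (hhi : ∀ v, g v ≤ 18 * d) (hθ0 : 0 ≤ θ) (hθ1 : θ ≤ 1)
    (hc : 16 * L ≤ θ ^ 2 * (d / 5832)) (δ : ℝ) (hδ : 2 * Real.exp (-(4 * L)) ≤ δ)
    (hδ1 : Fintype.card V * δ < 1) :
    ∃ H : SimpleGraph V, H ≤ G ∧ ∀ v, |∑ u ∈ Finset.univ.filter (fun u => H.Adj v u), g u - (d / 18) ^ 2| ≤
      θ * (d / 18) ^ 2 := by
  have gpos : ∀ v, 0 < g v := fun v => by have := hlo v; linarith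
  set f : Sym2 V → ℝ := Sym2.lift ⟨fun u v => (d / 18) ^ 2 / (g u * g v), fun u v => by simp only [mul_comm]⟩ with hf
  have hfs : ∀ u v, f s(u, v) = (d / 18) ^ 2 / (g u * g v) := fun u v => by rw [hf]; rfl
  have hf0 : ∀ e, 0 ≤ f e := by
    intro e
    induction e with | _ u v => rw [hfs]; have := gpos u; have := gpos v; positivity
  have hf1 : ∀ e, f e ≤ 1 := by
    intro e
    induction e with
    | _ u v =>
      rw [hfs, div_le_one (mul_pos (gpos u) (gpos v)), sq]
      exact mul_le_mul (hlo u) (hlo v) (by positivity) (gpos u).le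
  set w : Sym2 V → Bool → ℝ := fun e k => if k then f e else 1 - f e with hw
  have hW : IsW w := by
    refine ⟨fun e k => ?_, fun e => ?_⟩
    · cases k
      · simp only [hw]; have := hf1 e; simp; linarith
      · simp only [hw]; simpa using hf0 e
    · simp [hw]
  set F : V → Sym2 V → Bool → ℝ := fun v e k =>
    ∑ u, if e = s(v, u) then (if G.Adj v u ∧ k = true then g u / (18 * d) else 0) else 0 with hF
  have hterm0 : ∀ v u (k : Bool), 0 ≤ (if G.Adj v u ∧ k = true then g u / (18 * d) else 0) := by
    intro v u k; split_ifs
    · have := gpos u; positivity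
    · exact le_rfl
  have hterm1 : ∀ v u (k : Bool), (if G.Adj v u ∧ k = true then g u / (18 * d) else 0) ≤ 1 := by
    intro v u k; split_ifs
    · rw [div_le_one (by positivity)]; exact hhi u
    · norm_num
  have hF0 : ∀ v e k, 0 ≤ F v e k := by
    intro v e k
    refine Finset.sum_nonneg fun u _ => ?_
    split_ifs with h1 h2
    · have := gpos u; positivity
    · exact le_rfl
    · exact le_rfl
  have hF1 : ∀ v e k, F v e k ≤ 1 := by
    intro v e k
    by_cases h : ∃ u0, e = s(v, u0)
    · obtain ⟨u0, rfl⟩ := h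
      have : F v s(v, u0) k = if G.Adj v u0 ∧ k = true then g u0 / (18 * d) else 0 := by
        simp only [hF, Sym2.congr_right]
        rw [Finset.sum_ite_eq]; simp
      rw [this]; exact hterm1 _ _ _
    · have : F v e k = 0 := Finset.sum_eq_zero fun u _ => by
        rw [if_neg]; intro h'; exact h ⟨u, h'⟩
      rw [this]; norm_num
  have hsumω : ∀ v (ω : Sym2 V → Bool), ∑ e, F v e (ω e) =
      ∑ u, if G.Adj v u ∧ ω s(v, u) = true then g u / (18 * d) else 0 := by
    intro v ω
    simp only [hF]
    rw [Finset.sum_comm]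
    refine Finset.sum_congr rfl fun u _ => ?_
    rw [Finset.sum_ite_eq']; simp
  have hmean : ∀ v, ∑ e, ∑ k, w e k * F v e k = d / 5832 := by
    intro v
    have h1 : ∀ e, ∑ k, w e k * F v e k = ∑ u, if e = s(v, u) then (if G.Adj v u then f e * (g u / (18 * d)) else 0) else 0 := by
      intro e
      have hfalse : F v e false = 0 := by simp [hF]
      rw [Fintype.sum_bool, hfalse, mul_zero, add_zero]
      simp only [hF, hw, if_true, and_true, Finset.mul_sum]
      refine Finset.sum_congr rfl fun u _ => ?_
      split_ifs <;> simp
    simp only [h1]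
    rw [Finset.sum_comm]
    have h2 : ∀ u, (∑ e, if e = s(v, u) then (if G.Adj v u then f e * (g u / (18 * d)) else 0) else 0) =
        (d / 18) ^ 2 / (g v * (18 * d)) * (if G.Adj v u then 1 else 0) := by
      intro u
      rw [Finset.sum_ite_eq']
      simp only [Finset.mem_univ, if_true]
      split_ifs
      · rw [hfs]; have := gpos u; have := gpos v; field_simp
      · simp
    simp only [h2]
    rw [← Finset.mul_sum, ← dg_eq_sum, ← hg]
    have := gpos v
    field_simp
    norm_num
  have hAP : ∀ v ∈ (Finset.univ : Finset V), AP w δ (fun ω =>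
      |∑ e, F v e (ω e) - d / 5832| < θ * (d / 5832)) := by
    intro v _
    unfold AP
    have := chernoff_mul hW (F v) (hF0 v) (hF1 v) (d / 5832) θ (hmean v) hθ0 hθ1
    simp only [not_lt]
    refine this.trans (le_trans ?_ hδ)
    gcongr
    linarith
  obtain ⟨ω, hω⟩ := (AP.all hW Finset.univ hAP).ex hW (by rw [Finset.card_univ]; exact hδ1)
  obtain ⟨H, hH⟩ : ∃ H : SimpleGraph V, ∀ u v, H.Adj u v ↔ (G.Adj u v ∧ ω s(u, v) = true) := ⟨
    { Adj := fun u v => G.Adj u v ∧ ω s(u, v) = true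
      symm := ⟨fun u v h => ⟨h.1.symm, by rw [Sym2.eq_swap]; exact h.2⟩⟩
      loopless := ⟨fun v h => G.loopless.irrefl v h.1⟩ }, fun u v => Iff.rfl⟩
  refine ⟨H, fun u v h => ((hH u v).1 h).1, fun v => ?_⟩
  have h1 := hω v (Finset.mem_univ v)
  rw [hsumω, ← Finset.sum_filter] at h1
  have h2 : ∑ u ∈ Finset.univ.filter (fun u => H.Adj v u), g u =
      (18 * d) * ∑ u ∈ Finset.univ.filter (fun u => G.Adj v u ∧ ω s(v, u) = true), g u / (18 * d) := by
    rw [Finset.mul_sum]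
    refine Finset.sum_congr ?_ fun u _ => by field_simp
    ext u
    simp [hH]
  rw [h2]
  have h3 : (d / 18) ^ 2 = (18 * d) * (d / 5832) := by ring
  rw [h3, ← mul_sub, abs_mul, abs_of_pos (by positivity : 0 < 18 * d)]
  have := mul_le_mul_of_nonneg_left h1.le (by positivity : 0 ≤ 18 * d)
  linarith
end stage0
end SCon

set_option linter.unusedSectionVars false
set_option linter.unusedVariables false
namespace SCon
open Finset
open scoped Classical

section stage
variable {V : Type*} [Fintype V] [DecidableEq V] {t M : ℕ}

abbrev Col (t M : ℕ) := Option (Fin t × Option (Fin M))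

def T0 (i : Fin t) (k : Col t M) : Prop := ∃ j, k = some (i, some j)
def T1 (i : Fin t) (k : Col t M) : Prop := ∃ o, k = some (i, o)
def Tc (i : Fin t) (j : Fin M) (k : Col t M) : Prop := k = some (i, some j)

noncomputable def wgt (g : V → ℝ) (e θ : ℝ) (m : Fin t → ℝ) (v : V) : Col t M → ℝ
  | none => 1 - ∑ i, (1 + 2 * θ) * m i / e * g v
  | some (i, some _) => (1 - θ) * m i / (e * M) * g v
  | some (i, none) => 3 * θ * m i / e * g v

noncomputable def cls {κ : Type*} (X : Finset V) (ω : V → κ) (T : κ → Prop) : Finset V :=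
  X.filter fun v => T (ω v)

lemma mem_cls {κ : Type*} {X : Finset V} {ω : V → κ} {T : κ → Prop} {v : V} :
    v ∈ cls X ω T ↔ v ∈ X ∧ T (ω v) := by unfold cls; rw [Finset.mem_filter]

lemma sum_col (f : Col t M → ℝ) : ∑ k, f k = f none + ∑ i, (f (some (i, none)) + ∑ j, f (some (i, some j))) := by
  rw [Fintype.sum_option, Fintype.sum_prod_type]
  simp only [Fintype.sum_option]

lemma wgt_isW {g : V → ℝ} {e θ : ℝ} {m : Fin t → ℝ} (hg : ∀ v, 0 ≤ g v) (he : 0 < e) (h0 : 0 ≤ θ)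
    (h1 : θ ≤ 1) (hm : ∀ i, 0 ≤ m i) (hM : 0 < M)
    (hs : ∀ v, (1 + 2 * θ) * (∑ i, m i) * g v ≤ e) : IsW (wgt (M := M) g e θ m) := by
  have hM' : (0:ℝ) < M := by exact_mod_cast hM
  constructor
  · intro v k
    have := hg v
    rcases k with _ | ⟨i, _ | j⟩
    · simp only [wgt]
      have : ∑ i, (1 + 2 * θ) * m i / e * g v = ((1 + 2 * θ) * (∑ i, m i) * g v) / e := by
        rw [Finset.mul_sum, Finset.sum_mul, Finset.sum_div]
        exact Finset.sum_congr rfl fun i _ => by ring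
      rw [this, sub_nonneg, div_le_one he]
      exact hs v
    · simp only [wgt]; have := hm i; positivity
    · simp only [wgt]; have := hm i
      have : 0 ≤ 1 - θ := by linarith
      positivity
  · intro v
    rw [sum_col]
    simp only [wgt, Finset.sum_const, Finset.card_univ, Fintype.card_fin, nsmul_eq_mul]
    have : ∀ i, 3 * θ * m i / e * g v + M * ((1 - θ) * m i / (e * M) * g v) =
        (1 + 2 * θ) * m i / e * g v := by
      intro i; field_simp; ring
    simp only [this]
    ring

lemma sum_Tc (g : V → ℝ) (e θ : ℝ) (m : Fin t → ℝ) (i : Fin t) (j : Fin M) (v : V) :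
    ∑ k, (if Tc i j k then wgt g e θ m v k else 0) = (1 - θ) * m i / (e * M) * g v := by
  rw [Finset.sum_eq_single (some (i, some j))]
  · rw [if_pos (by unfold Tc; rfl)]; simp only [wgt]
  · intro k _ hk
    exact if_neg hk
  · intro h; exact absurd (Finset.mem_univ _) h

lemma sum_T0 (g : V → ℝ) (e θ : ℝ) (m : Fin t → ℝ) (hM : 0 < M) (i : Fin t) (v : V) :
    ∑ k : Col t M, (if T0 i k then wgt g e θ m v k else 0) = (1 - θ) * m i / e * g v := by
  have hM' : (0:ℝ) < M := by exact_mod_cast hM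
  rw [sum_col]
  have a1 : ¬ T0 i (none : Col t M) := by rintro ⟨j, h⟩; simp at h
  have a2 : ∀ i', ¬ T0 i (some (i', none) : Col t M) := by rintro i' ⟨j, h⟩; simp at h
  have a3 : ∀ i' (j : Fin M), T0 i (some (i', some j) : Col t M) ↔ i' = i := by
    intro i' j
    constructor
    · rintro ⟨j', h⟩; simp at h; exact h.1
    · rintro rfl; exact ⟨j, rfl⟩
  simp only [a1, a2, a3, if_false, zero_add, wgt]
  rw [Finset.sum_eq_single i]
  · simp only [if_true, Finset.sum_const, Finset.card_univ, Fintype.card_fin, nsmul_eq_mul]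
    field_simp
  · intro b _ hb; simp [hb]
  · simp

lemma sum_T1 (g : V → ℝ) (e θ : ℝ) (m : Fin t → ℝ) (hM : 0 < M) (i : Fin t) (v : V) :
    ∑ k : Col t M, (if T1 i k then wgt g e θ m v k else 0) = (1 + 2 * θ) * m i / e * g v := by
  have hM' : (0:ℝ) < M := by exact_mod_cast hM
  rw [sum_col]
  have a1 : ¬ T1 i (none : Col t M) := by rintro ⟨j, h⟩; simp at h
  have a3 : ∀ i' (o : Option (Fin M)), T1 i (some (i', o) : Col t M) ↔ i' = i := by
    intro i' o
    constructor
    · rintro ⟨j', h⟩; simp at h; exact h.1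
    · rintro rfl; exact ⟨o, rfl⟩
  simp only [a1, a3, if_false, zero_add, wgt]
  rw [Finset.sum_eq_single i]
  · simp only [if_true, Finset.sum_const, Finset.card_univ, Fintype.card_fin, nsmul_eq_mul]
    field_simp; ring
  · intro b _ hb; simp [hb]
  · simp

lemma ch {κ : Type*} [Fintype κ] {w : V → κ → ℝ} (hw : IsW w) {g : V → ℝ} (F : Finset V) (T : κ → Prop)
    (ρ Γ μ0 θ L δ : ℝ)
    (hT : ∀ v, ∑ k, (if T k then w v k else 0) = ρ * g v) (hΓ : ∑ v ∈ F, g v = Γ)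
    (h0 : 0 ≤ θ) (h1 : θ ≤ 1) (hμ : μ0 ≤ ρ * Γ) (hL : 16 * L ≤ θ ^ 2 * μ0)
    (hδ : 2 * Real.exp (-(4 * L)) ≤ δ) :
    AP w δ (fun ω => (1 - θ) * (ρ * Γ) ≤ ((cls F ω T).card : ℝ) ∧
      ((cls F ω T).card : ℝ) ≤ (1 + θ) * (ρ * Γ)) := by
  have h := chernoff_count hw F T (ρ * Γ) θ (by simp only [hT]; rw [← Finset.mul_sum, hΓ]) h0 h1
  refine AP.mono hw (E := fun ω => ¬ (θ * (ρ * Γ) ≤ |((cls F ω T).card : ℝ) - ρ * Γ|)) ?_ ?_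
  · unfold AP
    simp only [not_not]
    refine le_trans h (le_trans ?_ hδ)
    gcongr
    have : θ ^ 2 * μ0 ≤ θ ^ 2 * (ρ * Γ) := by gcongr
    linarith
  · intro ω hω
    have := abs_lt.1 (not_le.1 hω)
    constructor <;> linarith [this.1, this.2]

lemma dg_cls {κ : Type*} (G : SimpleGraph V) (u : V) (X : Finset V) (ω : V → κ) (T : κ → Prop) :
    ((cls (X.filter fun v => G.Adj u v) ω T).card : ℝ) = dg G u (cls X ω T) := by
  unfold dg
  congr 2
  ext v
  simp only [mem_cls, Finset.mem_filter]
  tauto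

/-- output of a stage -/
structure Out (G H : SimpleGraph V) (X : Finset V) (N d θ L : ℝ) (m : Fin t → ℝ)
    (Y : Fin t → Fin M → Finset V) (β : ℝ) (ω : V → Col t M) (i : Fin t) : Prop where
  c0 : ((cls X ω (T0 i)).card : ℝ) ≤ m i
  c1 : m i ≤ ((cls X ω (T1 i)).card : ℝ)
  h0 : ∀ u ∉ X, (1 - θ) ^ 3 * (d * m i / (162 * N)) ≤ dg H u (cls X ω (T0 i))
  h1 : ∀ u ∉ X, dg H u (cls X ω (T1 i)) ≤ (1 + θ) ^ 2 * (1 + 2 * θ) * (d * m i / (162 * N))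
  g1 : ∀ u ∉ X, dg G u (cls X ω (T1 i)) ≤ 1000 * d * m i / N
  lo : ∀ u ∉ X, ∀ j, m i * d / (400 * N * M) ≤ dg G u (cls X ω (Tc i j))
  hi : ∀ u ∉ X, ∀ j, dg G u (cls X ω (Tc i j)) ≤ 1000 * m i * d / (N * M)
  sl : ∀ j, ∀ U ⊆ Y i j, β * U.card ≤ ∑ x ∈ X, hh G (Y i j) U x →
      m i / (10 * N * M) / 8 * (β * U.card) ≤ ∑ x ∈ cls X ω (Tc i j), hh G (Y i j) U x

set_option maxHeartbeats 1600000 in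
lemma stage {g : V → ℝ} {e N d θ L β : ℝ} {m Δ : Fin t → ℝ} (G H : SimpleGraph V) (X : Finset V)
    (Y : Fin t → Fin M → Finset V)
    (hw : IsW (wgt (M := M) g e θ m)) (hg : ∀ v, d / 18 ≤ g v)
    (hX : ∑ v ∈ X, g v = e) (he : e = N * d / 2) (hd : 0 < d) (hdN : d ≤ N) (h0 : 0 < θ) (h1 : θ ≤ 1 / 10)
    (hm : ∀ i, 0 < m i) (hM : 0 < M)
    (hG1 : ∀ u ∉ X, (d / 18) ^ 2 ≤ ∑ v ∈ X.filter (fun v => G.Adj u v), g v)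
    (hG2 : ∀ u ∉ X, ∑ v ∈ X.filter (fun v => G.Adj u v), g v ≤ (18 * d) ^ 2)
    (hH1 : ∀ u ∉ X, (1 - θ) * (d / 18) ^ 2 ≤ ∑ v ∈ X.filter (fun v => H.Adj u v), g v)
    (hH2 : ∀ u ∉ X, ∑ v ∈ X.filter (fun v => H.Adj u v), g v ≤ (1 + θ) * (d / 18) ^ 2)
    (cA : ∀ i, 16 * L ≤ θ ^ 2 * (m i * d / (400 * N)))
    (cB : ∀ i, 16 * L ≤ (1 / 2) ^ 2 * (m i * d / (400 * N * M)))
    (hβ : 0 < β) (hL : 1 ≤ L) (hV : (Fintype.card V : ℝ) ≤ Real.exp L)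
    (hΔ : ∀ i j, ∀ x ∈ X, dg G x (Y i j) ≤ Δ i) (hqβ : ∀ i, m i / (10 * N * M) * β ≤ Δ i)
    (hc : ∀ i, 10 ^ 10 * L ^ 4 * (Δ i) ^ 2 ≤ (m i / (10 * N * M)) ^ 3 * β ^ 3)
    (hδ1 : t * (8 * Real.exp (-(4 * L)) * (2 + Fintype.card V * (3 + M) + M)) < 1) :
    ∃ ω : V → Col t M, ∀ i, Out G H X N d θ L m Y β ω i := by
  have hM' : (0:ℝ) < M := by exact_mod_cast hM
  have hN : 0 < N := hd.trans_le hdN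
  have he0 : 0 < e := by rw [he]; positivity
  set δ := 8 * Real.exp (-(4 * L)) with hδ
  have hδ0 : 0 < δ := by positivity
  have hδ2 : 2 * Real.exp (-(4 * L)) ≤ δ := by
    have := Real.exp_pos (-(4 * L)); rw [hδ]; linarith
  have hθ1 : θ ≤ 1 := by linarith
  have key : ∀ i ∈ (Finset.univ : Finset (Fin t)), AP (wgt (M := M) g e θ m)
      (δ + (δ + ((Xᶜ.card : ℝ) * (δ + (δ + (δ + ((Finset.univ : Finset (Fin M)).card : ℝ) * δ))) +
        ((Finset.univ : Finset (Fin M)).card : ℝ) * δ))) (fun ω =>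
      ((1 - θ) * ((1 - θ) * m i / e * e) ≤ ((cls X ω (T0 i)).card : ℝ) ∧
        ((cls X ω (T0 i)).card : ℝ) ≤ (1 + θ) * ((1 - θ) * m i / e * e)) ∧
      ((1 - θ) * ((1 + 2 * θ) * m i / e * e) ≤ ((cls X ω (T1 i)).card : ℝ) ∧
        ((cls X ω (T1 i)).card : ℝ) ≤ (1 + θ) * ((1 + 2 * θ) * m i / e * e)) ∧
      (∀ u ∈ Xᶜ, 
        ((1 - θ) * ((1 - θ) * m i / e * ∑ v ∈ X.filter (fun v => H.Adj u v), g v) ≤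
          ((cls (X.filter (fun v => H.Adj u v)) ω (T0 i)).card : ℝ) ∧
        ((cls (X.filter (fun v => H.Adj u v)) ω (T0 i)).card : ℝ) ≤
          (1 + θ) * ((1 - θ) * m i / e * ∑ v ∈ X.filter (fun v => H.Adj u v), g v)) ∧
        ((1 - θ) * ((1 + 2 * θ) * m i / e * ∑ v ∈ X.filter (fun v => H.Adj u v), g v) ≤
          ((cls (X.filter (fun v => H.Adj u v)) ω (T1 i)).card : ℝ) ∧
        ((cls (X.filter (fun v => H.Adj u v)) ω (T1 i)).card : ℝ) ≤
          (1 + θ) * ((1 + 2 * θ) * m i / e * ∑ v ∈ X.filter (fun v => H.Adj u v), g v)) ∧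
        ((1 - θ) * ((1 + 2 * θ) * m i / e * ∑ v ∈ X.filter (fun v => G.Adj u v), g v) ≤
          ((cls (X.filter (fun v => G.Adj u v)) ω (T1 i)).card : ℝ) ∧
        ((cls (X.filter (fun v => G.Adj u v)) ω (T1 i)).card : ℝ) ≤
          (1 + θ) * ((1 + 2 * θ) * m i / e * ∑ v ∈ X.filter (fun v => G.Adj u v), g v)) ∧
        ∀ j ∈ (Finset.univ : Finset (Fin M)),
        ((1 - 1 / 2) * ((1 - θ) * m i / (e * M) * ∑ v ∈ X.filter (fun v => G.Adj u v), g v) ≤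
          ((cls (X.filter (fun v => G.Adj u v)) ω (Tc i j)).card : ℝ) ∧
        ((cls (X.filter (fun v => G.Adj u v)) ω (Tc i j)).card : ℝ) ≤
          (1 + 1 / 2) * ((1 - θ) * m i / (e * M) * ∑ v ∈ X.filter (fun v => G.Adj u v), g v))) ∧
      ∀ j ∈ (Finset.univ : Finset (Fin M)), ∀ U ⊆ Y i j, β * U.card ≤ ∑ x ∈ X, hh G (Y i j) U x →
        m i / (10 * N * M) / 8 * (β * U.card) ≤ ∑ x ∈ cls X ω (Tc i j), hh G (Y i j) U x) := by
    intro i _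
    have hmi := hm i
    have b1 : 0 ≤ m i / e := by positivity
    -- mean bounds
    have hd2 : d ^ 2 / 324 * (m i / e) = d * m i / (162 * N) := by rw [he]; field_simp; ring
    have q1 : m i * d / (400 * N) ≤ (1 - θ) * ((1 - θ) * (d ^ 2 / 324 * (m i / e))) := by
      rw [hd2]
      have : 0.81 * (d * m i / (162 * N)) ≤ (1 - θ) * ((1 - θ) * (d * m i / (162 * N))) := by
        have h3 : 0.81 ≤ (1 - θ) * (1 - θ) := by nlinarith
        rw [← mul_assoc]; gcongr
      refine le_trans ?_ this
      have e1 : m i * d / (400 * N) = (1 / 400) * (m i * d / N) := by field_simp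
      have e2 : 0.81 * (d * m i / (162 * N)) = (0.81 / 162) * (m i * d / N) := by field_simp
      rw [e1, e2]
      exact mul_le_mul_of_nonneg_right (by norm_num) (by positivity)
    have q2 : m i * d / (400 * N) ≤ (1 - θ) * m i / e * ((1 - θ) * (d / 18) ^ 2) := by
      refine q1.trans (le_of_eq ?_); ring
    have q3 : ∀ Γ, (1 - θ) * (d / 18) ^ 2 ≤ Γ → m i * d / (400 * N) ≤ (1 - θ) * m i / e * Γ := by
      intro Γ hΓ
      refine q2.trans ?_
      have : 0 ≤ (1 - θ) * m i / e := div_nonneg (mul_nonneg (by linarith) hmi.le) he0.le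
      gcongr
    have q4 : ∀ Γ, (1 - θ) * (d / 18) ^ 2 ≤ Γ → m i * d / (400 * N) ≤ (1 + 2 * θ) * m i / e * Γ := by
      intro Γ hΓ
      refine (q3 Γ hΓ).trans ?_
      have : 0 ≤ Γ := le_trans (mul_nonneg (by linarith) (sq_nonneg _)) hΓ
      gcongr
      linarith
    have q5 : ∀ Γ, (1 - θ) * (d / 18) ^ 2 ≤ Γ → m i * d / (400 * N * M) ≤ (1 - θ) * m i / (e * M) * Γ := by
      intro Γ hΓ
      have := div_le_div_of_nonneg_right (q3 Γ hΓ) hM'.le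
      refine le_trans (le_of_eq ?_) (this.trans (le_of_eq ?_))
      · field_simp
      · field_simp
    have hXe : (1 - θ) * (d / 18) ^ 2 ≤ e := by
      rw [he]
      have : (1 - θ) * (d / 18) ^ 2 ≤ 1 * (d / 18) ^ 2 := by gcongr; linarith
      nlinarith
    have hGθ : ∀ u ∉ X, (1 - θ) * (d / 18) ^ 2 ≤ ∑ v ∈ X.filter (fun v => G.Adj u v), g v := by
      intro u hu
      have : (1 - θ) * (d / 18) ^ 2 ≤ 1 * (d / 18) ^ 2 := by gcongr; linarith
      have := hG1 u hu
      linarith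
    refine AP.and hw (ch hw X (T0 i) _ e _ θ L δ (fun v => sum_T0 g e θ m hM i v) hX h0.le hθ1 (q3 e hXe) (cA i) hδ2) ?_
    refine AP.and hw (ch hw X (T1 i) _ e _ θ L δ (fun v => sum_T1 g e θ m hM i v) hX h0.le hθ1 (q4 e hXe) (cA i) hδ2) ?_
    refine AP.and hw ?_ ?_
    · refine AP.all hw _ fun u hu => ?_
      have hu := Finset.mem_compl.1 hu
      refine AP.and hw (ch hw _ (T0 i) _ _ _ θ L δ (fun v => sum_T0 g e θ m hM i v) rfl h0.le hθ1 (q3 _ (hH1 u hu)) (cA i) hδ2) ?_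
      refine AP.and hw (ch hw _ (T1 i) _ _ _ θ L δ (fun v => sum_T1 g e θ m hM i v) rfl h0.le hθ1 (q4 _ (hH1 u hu)) (cA i) hδ2) ?_
      refine AP.and hw (ch hw _ (T1 i) _ _ _ θ L δ (fun v => sum_T1 g e θ m hM i v) rfl h0.le hθ1 (q4 _ (hGθ u hu)) (cA i) hδ2) ?_
      refine AP.all hw _ fun j _ => ?_
      exact ch hw _ (Tc i j) _ _ _ (1 / 2) L δ (fun v => sum_Tc g e θ m i j v) rfl (by norm_num) (by norm_num) (q5 _ (hGθ u hu)) (cB i) hδ2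
    · refine AP.all hw _ fun j _ => ?_
      have := SL hw G X (Y i j) (some (i, some j)) (m i / (10 * N * M)) β (Δ i) L (by positivity) hβ (by
        intro x hx
        simp only [wgt]
        have hgx := hg x
        calc m i / (10 * N * M) ≤ (1 - θ) * m i / (e * M) * (d / 18) := by
              have : (1 - θ) * m i / (e * M) * (d / 18) = ((1 - θ) / 9) * (m i / (N * M)) := by
                rw [he]; field_simp; ring
              rw [this]
              have e2 : m i / (10 * N * M) = (1 / 10) * (m i / (N * M)) := by field_simp
              rw [e2]
              exact mul_le_mul_of_nonneg_right (by linarith) (by positivity)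
          _ ≤ _ := by
              have : 0 ≤ (1 - θ) * m i / (e * M) := div_nonneg (mul_nonneg (by linarith) hmi.le) (by positivity)
              gcongr) hL hV (hΔ i j) (hqβ i) (hc i)
      unfold AP
      exact this
  have hall := AP.all hw _ key
  obtain ⟨ω, hω⟩ := hall.ex hw (by
    refine lt_of_le_of_lt ?_ hδ1
    rw [Finset.card_univ, Finset.card_univ, Fintype.card_fin, Fintype.card_fin]
    have : (Xᶜ.card : ℝ) ≤ Fintype.card V := by exact_mod_cast Finset.card_le_univ _
    have h3 : (Xᶜ.card : ℝ) * (δ + (δ + (δ + (M : ℝ) * δ))) ≤ Fintype.card V * (δ + (δ + (δ + (M : ℝ) * δ))) := by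
      gcongr
    refine mul_le_mul_of_nonneg_left ?_ (Nat.cast_nonneg _)
    linarith)
  refine ⟨ω, fun i => ?_⟩
  obtain ⟨⟨-, k1⟩, ⟨k2, -⟩, k3, k4⟩ := hω i (Finset.mem_univ i)
  have hmi := hm i
  have hd2 : m i / e * (d / 18) ^ 2 = d * m i / (162 * N) := by rw [he]; field_simp; ring
  have hd3 : m i / e * (18 * d) ^ 2 = 648 * (d * m i / N) := by rw [he]; field_simp; ring
  have hdm : 0 ≤ d * m i / (162 * N) := by positivity
  have hme : 0 ≤ m i / e := by positivity
  refine ⟨?_, ?_, ?_, ?_, ?_, ?_, ?_, ?_⟩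
  · refine k1.trans ?_
    have : (1 - θ) * m i / e * e = (1 - θ) * m i := by field_simp
    rw [this]; nlinarith [mul_pos h0 h0]
  · refine le_trans ?_ k2
    have : (1 + 2 * θ) * m i / e * e = (1 + 2 * θ) * m i := by field_simp
    rw [this, ← mul_assoc]
    have : 1 ≤ (1 - θ) * (1 + 2 * θ) := by nlinarith
    nlinarith
  · intro u hu
    obtain ⟨⟨l1, -⟩, -⟩ := k3 u (Finset.mem_compl.2 hu)
    rw [dg_cls] at l1
    refine le_trans ?_ l1
    rw [← hd2]
    have h3 := hH1 u hu
    have h4 : 0 ≤ 1 - θ := by linarith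
    calc (1 - θ) ^ 3 * (m i / e * (d / 18) ^ 2) = (1 - θ) * ((1 - θ) * m i / e * ((1 - θ) * (d / 18) ^ 2)) := by ring
      _ ≤ _ := by gcongr
  · intro u hu
    obtain ⟨-, ⟨-, l1⟩, -⟩ := k3 u (Finset.mem_compl.2 hu)
    rw [dg_cls] at l1
    refine le_trans l1 ?_
    rw [← hd2]
    have h3 := hH2 u hu
    calc _ ≤ (1 + θ) * ((1 + 2 * θ) * m i / e * ((1 + θ) * (d / 18) ^ 2)) := by gcongr
      _ = _ := by ring
  · intro u hu
    obtain ⟨-, -, ⟨-, l1⟩, -⟩ := k3 u (Finset.mem_compl.2 hu)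
    rw [dg_cls] at l1
    refine le_trans l1 ?_
    have h3 := hG2 u hu
    calc _ ≤ (1 + θ) * ((1 + 2 * θ) * m i / e * ((18 * d) ^ 2)) := by gcongr
      _ = (1 + θ) * (1 + 2 * θ) * (m i / e * (18 * d) ^ 2) := by ring
      _ ≤ 1.32 * (m i / e * (18 * d) ^ 2) := by
        have : (1 + θ) * (1 + 2 * θ) ≤ 1.32 := by nlinarith
        gcongr
      _ ≤ 1000 * (d * m i / N) := by
        rw [hd3]
        have : 0 ≤ d * m i / N := by positivity
        linarith
      _ = _ := by ring
  · intro u hu j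
    obtain ⟨-, -, -, l⟩ := k3 u (Finset.mem_compl.2 hu)
    obtain ⟨l1, -⟩ := l j (Finset.mem_univ j)
    rw [dg_cls] at l1
    refine le_trans ?_ l1
    have h3 := hG1 u hu
    have h4 : 0 ≤ 1 - θ := by linarith
    calc m i * d / (400 * N * M) = (1 / 400) * (m i * d / (N * M)) := by field_simp
      _ ≤ ((1 - 1 / 2) * (1 - θ) / 162) * (m i * d / (N * M)) := mul_le_mul_of_nonneg_right (by linarith) (by positivity)
      _ = (1 - 1 / 2) * ((1 - θ) * m i / (e * M) * (d / 18) ^ 2) := by rw [he]; field_simp; ring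
      _ ≤ _ := by gcongr
  · intro u hu j
    obtain ⟨-, -, -, l⟩ := k3 u (Finset.mem_compl.2 hu)
    obtain ⟨-, l1⟩ := l j (Finset.mem_univ j)
    rw [dg_cls] at l1
    refine le_trans l1 ?_
    have h3 := hG2 u hu
    have h4 : 0 ≤ 1 - θ := by linarith
    calc _ ≤ (1 + 1 / 2) * ((1 - θ) * m i / (e * M) * (18 * d) ^ 2) := by gcongr
      _ = ((1 + 1 / 2) * (1 - θ) * 648) * (m i * d / (N * M)) := by rw [he]; field_simp; ring
      _ ≤ 1000 * (m i * d / (N * M)) := mul_le_mul_of_nonneg_right (by linarith) (by positivity)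
      _ = _ := by ring
  · intro j U hU h
    exact k4 j (Finset.mem_univ j) U hU h
end stage
end SCon

set_option linter.unusedSectionVars false
set_option linter.unusedVariables false
namespace SCon
open Finset
open scoped Classical

section asm
variable {n t M : ℕ} {G H : SimpleGraph (Fin n)} {A B : Finset (Fin n)}

lemma nb (hB : Bip G A B) (hH : H ≤ G) {u : Fin n} (hu : u ∉ A) :
    A.filter (fun v => H.Adj u v) = Finset.univ.filter (fun v => H.Adj u v) := by
  ext v
  simp only [Finset.mem_filter, Finset.mem_univ, true_and, and_iff_right_iff_imp]
  intro h
  rcases hB.adj u v (hH h) with h3 | h3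
  · exact absurd h3.1 hu
  · exact h3.2

lemma sum_nb_bounds {g : Fin n → ℝ} {d : ℝ} (hd : 0 < d) (hg : ∀ v, g v = dg G v Finset.univ)
    (hlo : ∀ v, d / 18 ≤ g v) (hhi : ∀ v, g v ≤ 18 * d) (u : Fin n) :
    (d / 18) ^ 2 ≤ ∑ v ∈ Finset.univ.filter (fun v => G.Adj u v), g v ∧
    ∑ v ∈ Finset.univ.filter (fun v => G.Adj u v), g v ≤ (18 * d) ^ 2 := by
  have h1 := hlo u
  have h2 := hhi u
  rw [hg u] at h1 h2
  have c : ((Finset.univ.filter (fun v => G.Adj u v)).card : ℝ) = dg G u Finset.univ := rfl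
  constructor
  · have := Finset.card_nsmul_le_sum (Finset.univ.filter (fun v => G.Adj u v)) g (d / 18) fun v _ => hlo v
    rw [nsmul_eq_mul, c] at this
    refine le_trans ?_ this
    rw [sq]; gcongr
  · have := Finset.sum_le_card_nsmul (Finset.univ.filter (fun v => G.Adj u v)) g (18 * d) fun v _ => hhi v
    rw [nsmul_eq_mul, c] at this
    refine this.trans ?_
    rw [sq]; gcongr

lemma sum_side (hB : Bip G A B) {N d : ℝ} (hsum : ∑ v, dg G v Finset.univ = N * d) :
    ∑ v ∈ A, dg G v Finset.univ = N * d / 2 := by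
  have h1 : ∑ v ∈ A, dg G v Finset.univ = ∑ v ∈ A, dg G v B :=
    Finset.sum_congr rfl fun v hv => by rw [hB.dgA hv, Finset.univ_inter]
  have h2 : ∑ v ∈ B, dg G v Finset.univ = ∑ v ∈ B, dg G v A :=
    Finset.sum_congr rfl fun v hv => by rw [hB.symm.dgA hv, Finset.univ_inter]
  have h3 := dg_swap G A B
  have h4 : ∑ v ∈ A, dg G v Finset.univ + ∑ v ∈ B, dg G v Finset.univ = N * d := by
    rw [← hsum, hB.compl, Finset.sum_add_sum_compl]
  linarith

/-- numerical conditions -/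
structure Num (n t M R l : ℕ) (L d θ γ : ℝ) (m : Fin t → ℝ) : Prop where
  L1 : 1 ≤ L
  hn : (n : ℝ) ≤ Real.exp L
  hd : 0 < d
  hdN : d ≤ n
  θ0 : 0 < θ
  θ1 : θ ≤ 1 / 10
  hM : n < 2 ^ M
  hM0 : 0 < M
  m0 : ∀ i, 0 < m i
  hs : (1 + 2 * θ) * (∑ i, m i) * (18 * d) ≤ n * d / 2
  c0 : 16 * L ≤ θ ^ 2 * (d / 5832)
  c00 : (n : ℝ) * (2 * Real.exp (-(4 * L))) < 1
  cA : ∀ i, 16 * L ≤ θ ^ 2 * (m i * d / (400 * n))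
  cB : ∀ i, 16 * L ≤ (1 / 2) ^ 2 * (m i * d / (400 * n * M))
  q1 : ∀ i, m i ≤ n
  hcA : ∀ i, 10 ^ 10 * L ^ 4 * (18 * d) ^ 2 ≤ (m i / (10 * n * M)) ^ 3 * (d / L ^ 2) ^ 3
  hcB : ∀ i, 10 ^ 10 * L ^ 4 * (1000 * m i * d / (n * M)) ^ 2 ≤
    (m i / (10 * n * M)) ^ 3 * (d / (2880000 * L ^ 2)) ^ 3
  hδ : t * (8 * Real.exp (-(4 * L)) * (2 + n * (3 + M) + M)) < 1
  hγ : γ = 1 / (230400000000 * L ^ 2)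
  hR : (n : ℝ) < (1 + γ / 2) ^ R
  hl : 4 + 4 * (R * (M + 1)) ≤ l
  hl6 : (l : ℝ) ≤ L ^ 6
  hD : ∀ i, (m i / n) ^ 9 * d / L ^ 76 ≤ m i * d / (400 * n * M)
  hpar : ∀ i, 40 * (2 * (l + 1)) * (1000 * m i * d / (n * M)) * ((m i / n) ^ 9 * d / L ^ 76) ≤
    γ * (m i * d / (400 * n * M)) ^ 2

variable {R l : ℕ} {L d θ γ : ℝ} {m : Fin t → ℝ}

lemma sl_cut {WA : Finset (Fin n)} {q β : ℝ} (hq : 0 ≤ q) (hβ : 0 ≤ β) 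
    (hcut : ∀ V' ⊆ B, β * min (V'.card : ℝ) ((B \ V').card : ℝ) ≤ ∑ a ∈ A, hh G B V' a)
    (hsl : ∀ U ⊆ B, β * U.card ≤ ∑ x ∈ A, hh G B U x → q / 8 * (β * U.card) ≤ ∑ x ∈ WA, hh G B U x) :
    ∀ V' ⊆ B, (q / 8 * β) * min (V'.card : ℝ) ((B \ V').card : ℝ) ≤ ∑ a ∈ WA, hh G B V' a := by
  intro V' hV
  have h1 := hcut V' hV
  rcases le_total (V'.card : ℝ) ((B \ V').card : ℝ) with h | h
  · rw [min_eq_left h] at h1 ⊢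
    rw [mul_assoc]
    exact hsl V' hV h1
  · rw [min_eq_right h] at h1 ⊢
    rw [mul_assoc]
    have := hsl (B \ V') Finset.sdiff_subset (by simpa only [hh_compl hV] using h1)
    simpa only [hh_compl hV] using this

lemma mkCls (hN : Num n t M R l L d θ γ m) (hB : Bip G A B)
    (hlo : ∀ v, d / 18 ≤ dg G v Finset.univ)
    (hexp : ∀ U : Finset (Fin n), U.Nonempty → (U.card : ℝ) ≤ 2 / 3 * n → d / L ^ 2 * U.card ≤ ∑ u ∈ U, dg G u Uᶜ)
    {ωA ωB : Fin n → Col t M} {i : Fin t}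
    (oA : Out G H A n d θ L m (fun _ _ => B) (d / L ^ 2) ωA i)
    (oB : Out G H B n d θ L m (fun i j => cls A ωA (Tc i j)) (d / (2880000 * L ^ 2)) ωB i) (j : Fin M) :
    Cls G (cls A ωA (Tc i j)) (cls B ωB (Tc i j)) (1000 * m i * d / (n * M)) γ (m i * d / (400 * n * M)) := by
  have hd := hN.hd
  have hn : (0:ℝ) < n := hd.trans_le hN.hdN
  have hM : (0:ℝ) < M := by exact_mod_cast hN.hM0
  have hm := hN.m0 i
  have hL : 0 < L := by linarith [hN.L1]
  have hAB := Finset.disjoint_left.1 hB.disj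
  have hA : ∀ v ∈ A, v ∉ B := fun v h => hAB h
  have hB' : ∀ v ∈ B, v ∉ A := fun v h h' => hAB h' h
  have hcl : ∀ {X : Finset (Fin n)} {ω : Fin n → Col t M} {T}, cls X ω T ⊆ X := fun h => (mem_cls.1 h).1
  refine ⟨⟨fun a ha => oB.hi a (hA a (hcl ha)) j, fun b hb => oA.hi b (hB' b (hcl hb)) j, ?_⟩, ?_, ?_⟩
  · intro U hU hU2
    set Lam := 1000 * m i * d / (n * M) with hLam
    set q := m i / (10 * n * M) with hq
    have hLq : Lam = 10000 * q * d := by rw [hLam, hq]; field_simp; norm_num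
    have q0 : 0 < q := by positivity
    have hLam0 : 0 < Lam := by positivity
    have hSA := sl_cut q0.le (by positivity : 0 ≤ d / L ^ 2)
      (fun V' hV => cut hB (by positivity) hexp hV) (oA.sl j)
    have hL2 : 1 ≤ L ^ 2 := one_le_pow₀ hN.L1
    have := mid (G := G) (τ := 1 / (360000 * q)) (by positivity) (by positivity) hLam0.le hSA
      (fun b hb => oA.hi b (hB' b hb) j) (d := d) (fun a ha => by
        have := hlo a
        rwa [hB.dgA (hcl ha), Finset.univ_inter] at this) hd.le (le_of_eq (by
          rw [hLq]; field_simp; norm_num)) (by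
          have : q / 8 * (d / L ^ 2) * (1 / (360000 * q)) = d / 2880000 / L ^ 2 := by field_simp; norm_num
          rw [this]
          refine (div_le_self (by positivity) hL2).trans ?_
          linarith) hU hU2
    have e : q / 8 * (d / L ^ 2) * (1 / (360000 * q)) = d / (2880000 * L ^ 2) := by field_simp; norm_num
    rw [e] at this
    have h2 := oB.sl j U hU this
    refine le_trans (le_of_eq ?_) h2
    rw [hN.hγ, hLq, ← hq]
    field_simp
    ring
  · intro v
    by_cases hv : v ∈ A
    · exact Or.inr (oB.lo v (hA v hv) j)
    · exact Or.inl (oA.lo v hv j)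
  · intro b hb
    exact oA.lo b (hB' b (hcl hb)) j

lemma T0_T1 {i : Fin t} {k : Col t M} (h : T0 i k) : T1 i k := by
  obtain ⟨j, rfl⟩ := h; exact ⟨_, rfl⟩

lemma Tc_T0 {i : Fin t} {j : Fin M} {k : Col t M} (h : Tc i j k) : T0 i k := ⟨j, h⟩

lemma T1_inj {i i' : Fin t} {k : Col t M} (h : T1 i k) (h' : T1 i' k) : i = i' := by
  obtain ⟨o, rfl⟩ := h
  obtain ⟨o', h⟩ := h'
  simp at h; exact h.1

lemma Tc_inj {i : Fin t} {j j' : Fin M} {k : Col t M} (h : Tc i j k) (h' : Tc i j' k) : j = j' := by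
  unfold Tc at h h'
  rw [h] at h'
  simp at h'; exact h'

lemma pick {X : Finset (Fin n)} {ω : Fin n → Col t M} {i : Fin t} {k : ℕ}
    (h0 : (cls X ω (T0 i)).card ≤ k) (h1 : k ≤ (cls X ω (T1 i)).card) :
    ∃ S, cls X ω (T0 i) ⊆ S ∧ S ⊆ cls X ω (T1 i) ∧ S.card = k := by
  refine Finset.exists_subsuperset_card_eq (fun v hv => ?_) h0 h1
  rw [mem_cls] at hv ⊢
  exact ⟨hv.1, T0_T1 hv.2⟩

/-- structural output -/
structure Res (G H : SimpleGraph (Fin n)) (A B : Finset (Fin n)) (d θ L : ℝ) (m : Fin t → ℕ)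
    (SA SB : Fin t → Finset (Fin n)) : Prop where
  sa : ∀ i, SA i ⊆ A
  sb : ∀ i, SB i ⊆ B
  ca : ∀ i, (SA i).card = m i
  cb : ∀ i, (SB i).card = m i
  dis : ∀ i i', i ≠ i' → Disjoint (SA i ∪ SB i) (SA i' ∪ SB i')
  con : ∀ i, IsConnecting n G ((SA i ∪ SB i : Finset (Fin n)) : Set (Fin n))
    (((m i : ℝ) / n) ^ 9 * d / Real.logb 2 n ^ 76)
  lo : ∀ i v, (1 - θ) ^ 3 * (d * m i / (162 * n)) ≤ dg H v (SA i ∪ SB i)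
  hi : ∀ i v, dg H v (SA i ∪ SB i) ≤ (1 + θ) ^ 2 * (1 + 2 * θ) * (d * m i / (162 * n))
  hiG : ∀ i v, dg G v (SA i ∪ SB i) ≤ 1000 * d * m i / n

lemma dg_union_B (hB : Bip G A B) (hH : H ≤ G) {SA SB : Finset (Fin n)} (sa : SA ⊆ A) {v : Fin n} (hv : v ∈ A) :
    dg H v (SA ∪ SB) = dg H v SB := by
  have hB' : Bip H A B := ⟨hB.compl, fun u v h => hB.adj u v (hH h)⟩
  refine hB'.dgA' hv ?_
  rw [Finset.union_inter_distrib_right, Finset.disjoint_iff_inter_eq_empty.1 (hB.disj.mono_left sa), Finset.empty_union]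

set_option maxHeartbeats 1000000 in
lemma asm {mm : Fin t → ℕ} (hN : Num n t M R l (Real.logb 2 n) d θ γ (fun i => (mm i : ℝ))) (hB : Bip G A B)
    (hlo : ∀ v, d / 18 ≤ dg G v Finset.univ) (hhi : ∀ v, dg G v Finset.univ ≤ 18 * d)
    (hsum : ∑ v, dg G v Finset.univ = n * d)
    (hexp : ∀ U : Finset (Fin n), U.Nonempty → (U.card : ℝ) ≤ 2 / 3 * n →
      d / Real.logb 2 n ^ 2 * U.card ≤ ∑ u ∈ U, dg G u Uᶜ) :
    ∃ H ≤ G, ∃ SA SB : Fin t → Finset (Fin n), Res G H A B d θ (Real.logb 2 n) mm SA SB := by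
  set L := Real.logb 2 n with hLdef
  have hd := hN.hd
  have hn : (0:ℝ) < n := hd.trans_le hN.hdN
  have hM : (0:ℝ) < M := by exact_mod_cast hN.hM0
  have hM1 : (1:ℝ) ≤ M := by exact_mod_cast hN.hM0
  have hm : ∀ i, (0:ℝ) < mm i := hN.m0
  have hL : 0 < L := by linarith [hN.L1]
  have hL2 : 1 ≤ L ^ 2 := one_le_pow₀ hN.L1
  have hθ0 := hN.θ0
  have hθ1 := hN.θ1
  set g : Fin n → ℝ := fun v => dg G v Finset.univ with hg
  obtain ⟨H, hHG, hH⟩ := stage0 G g (fun v => rfl) hd hlo hhi hθ0.le (by linarith) hN.c0 _ le_rfl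
    (by rw [Fintype.card_fin]; exact hN.c00)
  have hH1 : ∀ u, (1 - θ) * (d / 18) ^ 2 ≤ ∑ v ∈ Finset.univ.filter (fun v => H.Adj u v), g v := by
    intro u; have := (abs_le.1 (hH u)).1; linarith
  have hH2 : ∀ u, ∑ v ∈ Finset.univ.filter (fun v => H.Adj u v), g v ≤ (1 + θ) * (d / 18) ^ 2 := by
    intro u; have := (abs_le.1 (hH u)).2; linarith
  have hw : IsW (wgt (M := M) g (n * d / 2) θ (fun i => (mm i : ℝ))) := by
    refine wgt_isW (fun v => dg_nonneg _ _ _) (by positivity) hθ0.le (by linarith) (fun i => (hm i).le) hN.hM0 ?_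
    intro v
    refine le_trans ?_ hN.hs
    have : 0 ≤ ∑ i, (mm i : ℝ) := Finset.sum_nonneg fun i _ => (hm i).le
    have := hhi v
    gcongr
  have q0 : ∀ i, 0 < (mm i : ℝ) / (10 * n * M) := fun i => by have := hm i; positivity
  have q1 : ∀ i, (mm i : ℝ) / (10 * n * M) ≤ 1 := by
    intro i
    rw [div_le_one (by positivity)]
    have : (mm i : ℝ) ≤ n := hN.q1 i
    nlinarith
  have G1 := fun u => (sum_nb_bounds hd (fun v => rfl) hlo hhi u (g := g) (G := G)).1
  have G2 := fun u => (sum_nb_bounds hd (fun v => rfl) hlo hhi u (g := g) (G := G)).2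
  have hδ := hN.hδ
  have hnn := hN.hn
  obtain ⟨ωA, oA⟩ := stage (Δ := fun _ => 18 * d) G H A (fun _ _ => B) hw hlo (sum_side hB hsum) rfl hd hN.hdN hθ0 hθ1 hm hN.hM0
    (fun u hu => by rw [nb hB le_rfl hu]; exact G1 u) (fun u hu => by rw [nb hB le_rfl hu]; exact G2 u)
    (fun u hu => by rw [nb hB hHG hu]; exact hH1 u) (fun u hu => by rw [nb hB hHG hu]; exact hH2 u)
    hN.cA hN.cB (β := d / L ^ 2) (by positivity) hN.L1 (by rw [Fintype.card_fin]; exact hnn)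
    (fun i j x hx => (dg_mono G x (Finset.subset_univ _)).trans (hhi x))
    (fun i => by
      have h1 : d / L ^ 2 ≤ d := div_le_self hd.le hL2
      have h2 : (mm i : ℝ) / (10 * n * M) * (d / L ^ 2) ≤ 1 * d := by
        have := q1 i; gcongr
      linarith) hN.hcA (by rw [Fintype.card_fin]; exact hδ)
  have hAB := Finset.disjoint_left.1 hB.disj
  have hA : ∀ v ∈ A, v ∉ B := fun v h => hAB h
  have hB' : ∀ v ∈ B, v ∉ A := fun v h h' => hAB h' h
  have hnA : ∀ v, v ∉ A → v ∈ B := fun v h => by rw [hB.compl]; exact Finset.mem_compl.2 h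
  have hBs := hB.symm
  obtain ⟨ωB, oB⟩ := stage (Δ := fun i => 1000 * mm i * d / (n * M)) G H B (fun i j => cls A ωA (Tc i j)) hw hlo (sum_side hBs hsum) rfl hd hN.hdN hθ0 hθ1 hm hN.hM0
    (fun u hu => by rw [nb hBs le_rfl hu]; exact G1 u) (fun u hu => by rw [nb hBs le_rfl hu]; exact G2 u)
    (fun u hu => by rw [nb hBs hHG hu]; exact hH1 u) (fun u hu => by rw [nb hBs hHG hu]; exact hH2 u)
    hN.cA hN.cB (β := d / (2880000 * L ^ 2)) (by positivity) hN.L1 (by rw [Fintype.card_fin]; exact hnn)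
    (fun i j x hx => (oA i).hi x (hB' x hx) j)
    (fun i => by
      have h1 : d / (2880000 * L ^ 2) ≤ d := div_le_self hd.le (by linarith)
      have h2 : (mm i : ℝ) / (10 * n * M) * (d / (2880000 * L ^ 2)) ≤ (mm i : ℝ) / (10 * n * M) * d := by
        have := q0 i; gcongr
      refine h2.trans ?_
      have := hm i
      have e1 : (mm i : ℝ) / (10 * n * M) * d = (1 / 10) * (mm i * d / (n * M)) := by field_simp
      have e2 : 1000 * (mm i : ℝ) * d / (n * M) = 1000 * (mm i * d / (n * M)) := by ring
      rw [e1]; show _ ≤ 1000 * (mm i : ℝ) * d / (n * M); rw [e2]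
      exact mul_le_mul_of_nonneg_right (by norm_num) (by positivity)) hN.hcB (by rw [Fintype.card_fin]; exact hδ)
  have pA := fun i => pick (k := mm i) (by exact_mod_cast (oA i).c0) (by exact_mod_cast (oA i).c1)
  have pB := fun i => pick (k := mm i) (by exact_mod_cast (oB i).c0) (by exact_mod_cast (oB i).c1)
  choose SA a0 a1 ac using pA
  choose SB b0 b1 bc using pB
  have hcl : ∀ {X : Finset (Fin n)} {ω : Fin n → Col t M} {T}, cls X ω T ⊆ X := fun h => (mem_cls.1 h).1
  have sa : ∀ i, SA i ⊆ A := fun i => (a1 i).trans hcl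
  have sb : ∀ i, SB i ⊆ B := fun i => (b1 i).trans hcl
  have uA : ∀ (K : SimpleGraph (Fin n)), K ≤ G → ∀ i, ∀ v ∈ A, dg K v (SA i ∪ SB i) = dg K v (SB i) :=
    fun K hK i v hv => dg_union_B hB hK (sa i) hv
  have uB : ∀ (K : SimpleGraph (Fin n)), K ≤ G → ∀ i, ∀ v, v ∉ A → dg K v (SA i ∪ SB i) = dg K v (SA i) :=
    fun K hK i v hv => by rw [Finset.union_comm]; exact dg_union_B hBs hK (sb i) (hnA v hv)
  refine ⟨H, hHG, SA, SB, sa, sb, ac, bc, ?_, ?_, ?_, ?_, ?_⟩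
  · intro i i' hii
    rw [Finset.disjoint_left]
    intro v hv hv'
    apply hii
    rcases Finset.mem_union.1 hv with h | h <;> rcases Finset.mem_union.1 hv' with h' | h'
    · exact T1_inj (mem_cls.1 (a1 i h)).2 (mem_cls.1 (a1 i' h')).2
    · exact absurd (sb i' h') (hA v (sa i h))
    · exact absurd (sb i h) (hA v (sa i' h'))
    · exact T1_inj (mem_cls.1 (b1 i h)).2 (mem_cls.1 (b1 i' h')).2
  · intro i
    have hmi := hm i
    have hγ0 : 0 < γ := by rw [hN.hγ]; positivity
    have hγ1 : γ ≤ 1 := by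
      rw [hN.hγ, div_le_one (by positivity)]; linarith
    refine connecting (WA := fun j => cls A ωA (Tc i j)) (WB := fun j => cls B ωB (Tc i j)) hN.hM
      (fun j => mkCls hN hB hlo hexp (oA i) (oB i) j) hγ0 hγ1 (by positivity) ?_ (by positivity) (hN.hD i)
      hN.hR hN.hl (hN.hpar i) ?_ ?_ hN.hl6 hN.hM0
    · have e1 : (mm i : ℝ) * d / (400 * n * M) = (1 / 400) * (mm i * d / (n * M)) := by field_simp
      have e2 : 1000 * (mm i : ℝ) * d / (n * M) = 1000 * (mm i * d / (n * M)) := by ring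
      show (mm i : ℝ) * d / (400 * n * M) ≤ 1000 * (mm i : ℝ) * d / (n * M)
      rw [e1, e2]
      exact mul_le_mul_of_nonneg_right (by norm_num) (by positivity)
    · intro j
      refine Finset.union_subset_union ?_ ?_
      · refine subset_trans (fun v hv => ?_) (a0 i)
        rw [mem_cls] at hv ⊢
        exact ⟨hv.1, Tc_T0 hv.2⟩
      · refine subset_trans (fun v hv => ?_) (b0 i)
        rw [mem_cls] at hv ⊢
        exact ⟨hv.1, Tc_T0 hv.2⟩
    · intro k k' hk
      rw [Finset.disjoint_left]
      intro v hv hv'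
      apply hk
      rcases Finset.mem_union.1 hv with h | h <;> rcases Finset.mem_union.1 hv' with h' | h'
      · exact Tc_inj (mem_cls.1 h).2 (mem_cls.1 h').2
      · exact absurd (hcl h') (hA v (hcl h))
      · exact absurd (hcl h) (hA v (hcl h'))
      · exact Tc_inj (mem_cls.1 h).2 (mem_cls.1 h').2
  · intro i v
    by_cases hv : v ∈ A
    · rw [uA H hHG i v hv]
      exact ((oB i).h0 v (hA v hv)).trans (dg_mono _ _ (b0 i))
    · rw [uB H hHG i v hv]
      exact ((oA i).h0 v hv).trans (dg_mono _ _ (a0 i))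
  · intro i v
    by_cases hv : v ∈ A
    · rw [uA H hHG i v hv]
      exact (dg_mono _ _ (b1 i)).trans ((oB i).h1 v (hA v hv))
    · rw [uB H hHG i v hv]
      exact (dg_mono _ _ (a1 i)).trans ((oA i).h1 v hv)
  · intro i v
    by_cases hv : v ∈ A
    · rw [uA G le_rfl i v hv]
      exact (dg_mono _ _ (b1 i)).trans ((oB i).g1 v (hA v hv))
    · rw [uB G le_rfl i v hv]
      exact (dg_mono _ _ (a1 i)).trans ((oA i).g1 v hv)

end asm
end SCon

set_option linter.unusedSectionVars false
set_option linter.unusedVariables false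
namespace SCon
open Finset
open scoped Classical

section num

/-- scalar hypotheses -/
structure Sc (L y d p M : ℝ) : Prop where
  hL : 10 ^ 8 ≤ L
  hy : L ^ 100 ≤ y
  hd : d = y ^ 30
  hp : 1 ≤ p * y ^ 3
  hp1 : p ≤ 1
  p0 : 0 < p
  hM : M ≤ 2 * L
  hM0 : 1 ≤ M

variable {L y d p M : ℝ}

lemma Sc.L1 (h : Sc L y d p M) : 1 ≤ L := le_trans (by norm_num) h.hL
lemma Sc.L0 (h : Sc L y d p M) : 0 < L := by linarith [h.L1]

lemma Sc.big (h : Sc L y d p M) (c : ℝ) (k : ℕ) (hc : c ≤ 10 ^ 80) (hk : k ≤ 20) : c * L ^ k ≤ y := by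
  have h1 := h.L1
  have h2 : (10:ℝ) ^ 80 ≤ L ^ 10 := by
    calc (10:ℝ) ^ 80 = (10 ^ 8) ^ 10 := by norm_num
      _ ≤ L ^ 10 := by have := h.hL; gcongr
  calc c * L ^ k ≤ L ^ 10 * L ^ 20 := by
        have : 0 ≤ L := by linarith
        gcongr
        · exact hc.trans h2
    _ = L ^ 30 := by ring
    _ ≤ L ^ 100 := pow_le_pow_right₀ h1 (by norm_num)
    _ ≤ y := h.hy

lemma Sc.y1 (h : Sc L y d p M) : 1 ≤ y := by
  have := h.big 1 0 (by norm_num) (by norm_num); linarith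
lemma Sc.y0 (h : Sc L y d p M) : 0 < y := by linarith [h.y1]
lemma Sc.yk (h : Sc L y d p M) {k : ℕ} (hk : k ≠ 0) : y ≤ y ^ k := le_self_pow₀ h.y1 hk
lemma Sc.d0 (h : Sc L y d p M) : 0 < d := by rw [h.hd]; have := h.y0; positivity

lemma Sc.pd (h : Sc L y d p M) : y ≤ p * d := by
  have := h.y0
  rw [h.hd]
  calc y ≤ y ^ 27 := h.yk (by norm_num)
    _ = 1 * y ^ 27 := by ring
    _ ≤ (p * y ^ 3) * y ^ 27 := by have := h.hp; gcongr
    _ = _ := by ring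

lemma Sc.p3d (h : Sc L y d p M) : y ≤ p ^ 3 * d := by
  have := h.y0
  rw [h.hd]
  calc y ≤ y ^ 21 := h.yk (by norm_num)
    _ = 1 ^ 3 * y ^ 21 := by ring
    _ ≤ (p * y ^ 3) ^ 3 * y ^ 21 := by have := h.hp; gcongr
    _ = _ := by ring

lemma Sc.c0 (h : Sc L y d p M) : 16 * L ≤ (1 / (100 * y ^ 10)) ^ 2 * (d / 5832) := by
  have := h.y0
  have e : (1 / (100 * y ^ 10)) ^ 2 * (d / 5832) = y ^ 10 / 58320000 := by rw [h.hd]; field_simp; norm_num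
  rw [e, le_div_iff₀ (by norm_num)]
  have h1 := h.big (16 * 58320000) 1 (by norm_num) (by norm_num)
  have h2 : y ≤ y ^ 10 := h.yk (by norm_num)
  linarith

lemma Sc.cA (h : Sc L y d p M) : 16 * L ≤ (1 / (100 * y ^ 10)) ^ 2 * (p * d / 400) := by
  have := h.y0
  have e : (1 / (100 * y ^ 10)) ^ 2 * (p * d / 400) = p * y ^ 3 * y ^ 7 / 4000000 := by
    rw [h.hd]; field_simp; ring
  rw [e, le_div_iff₀ (by norm_num)]
  have h1 := h.big (16 * 4000000) 1 (by norm_num) (by norm_num)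
  have h2 : y ≤ y ^ 7 := h.yk (by norm_num)
  have h3 : 1 * y ^ 7 ≤ p * y ^ 3 * y ^ 7 := by have := h.hp; gcongr
  linarith

lemma Sc.cB (h : Sc L y d p M) : 16 * L ≤ (1 / 2) ^ 2 * (p * d / (400 * M)) := by
  have hM := h.hM0
  have hM0 : 0 < M := by linarith
  have hL := h.L0
  have e : (1 / 2) ^ 2 * (p * d / (400 * M)) = p * d / (1600 * M) := by field_simp; ring
  rw [e, le_div_iff₀ (by positivity)]
  have h1 := h.big (16 * 1600 * 2) 2 (by norm_num) (by norm_num)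
  have h2 := h.pd
  have h3 : 16 * L * (1600 * M) ≤ 16 * L * (1600 * (2 * L)) := by have := h.hM; gcongr
  nlinarith

lemma Sc.hcA (h : Sc L y d p M) : 10 ^ 10 * L ^ 4 * (18 * d) ^ 2 ≤ (p / (10 * M)) ^ 3 * (d / L ^ 2) ^ 3 := by
  have hM := h.hM0
  have hM0 : 0 < M := by linarith
  have hL := h.L0
  have hd := h.d0
  have e : (p / (10 * M)) ^ 3 * (d / L ^ 2) ^ 3 = (p ^ 3 * d) * d ^ 2 / (1000 * M ^ 3 * L ^ 6) := by
    field_simp; norm_num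
  rw [e, le_div_iff₀ (by positivity)]
  have h1 := h.big (10 ^ 10 * 324 * 1000 * 8) 13 (by norm_num) (by norm_num)
  have h2 := h.p3d
  calc 10 ^ 10 * L ^ 4 * (18 * d) ^ 2 * (1000 * M ^ 3 * L ^ 6)
      ≤ 10 ^ 10 * L ^ 4 * (18 * d) ^ 2 * (1000 * (2 * L) ^ 3 * L ^ 6) := by have := h.hM; gcongr
    _ = (10 ^ 10 * 324 * 1000 * 8 * L ^ 13) * d ^ 2 := by ring
    _ ≤ (p ^ 3 * d) * d ^ 2 := mul_le_mul_of_nonneg_right (by linarith) (by positivity)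

lemma Sc.hcB (h : Sc L y d p M) : 10 ^ 10 * L ^ 4 * (1000 * p * d / M) ^ 2 ≤
    (p / (10 * M)) ^ 3 * (d / (2880000 * L ^ 2)) ^ 3 := by
  have hM := h.hM0
  have hM0 : 0 < M := by linarith
  have hL := h.L0
  have hd := h.d0
  have hp := h.p0
  have e : (p / (10 * M)) ^ 3 * (d / (2880000 * L ^ 2)) ^ 3 =
      (p * d) * (p * d) ^ 2 / (M ^ 2 * (1000 * 2880000 ^ 3 * M * L ^ 6)) := by
    field_simp; norm_num
  have e' : 10 ^ 10 * L ^ 4 * (1000 * p * d / M) ^ 2 = 10 ^ 16 * L ^ 4 * (p * d) ^ 2 / M ^ 2 := by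
    field_simp; norm_num
  rw [e, e', ← div_div, div_right_comm]
  refine div_le_div_of_nonneg_right ?_ (by positivity)
  rw [le_div_iff₀ (by positivity)]
  have h1 := h.big (10 ^ 16 * 1000 * 2880000 ^ 3 * 2) 11 (by norm_num) (by norm_num)
  have h2 := h.pd
  calc 10 ^ 16 * L ^ 4 * (p * d) ^ 2 * (1000 * 2880000 ^ 3 * M * L ^ 6)
      ≤ 10 ^ 16 * L ^ 4 * (p * d) ^ 2 * (1000 * 2880000 ^ 3 * (2 * L) * L ^ 6) := by have := h.hM; gcongr
    _ = (10 ^ 16 * 1000 * 2880000 ^ 3 * 2 * L ^ 11) * (p * d) ^ 2 := by ring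
    _ ≤ (p * d) * (p * d) ^ 2 := mul_le_mul_of_nonneg_right (by linarith) (by positivity)

lemma Sc.hD (h : Sc L y d p M) : p ^ 9 * d / L ^ 76 ≤ p * d / (400 * M) := by
  have hM := h.hM0
  have hM0 : 0 < M := by linarith
  have hL := h.L0
  have hd := h.d0
  have hp := h.p0
  have hp8 : p ^ 8 ≤ 1 := pow_le_one₀ hp.le h.hp1
  have h1 : 400 * M ≤ L ^ 76 := by
    have h3 : L ^ 2 ≤ L ^ 76 := pow_le_pow_right₀ h.L1 (by norm_num)
    have := h.hL
    have := h.hM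
    nlinarith
  refine div_le_div₀ (by positivity) ?_ (by positivity) h1
  calc p ^ 9 * d = p ^ 8 * (p * d) := by ring
    _ ≤ 1 * (p * d) := by gcongr
    _ = _ := one_mul _

lemma Sc.hpar (h : Sc L y d p M) {l : ℝ} (hl0 : 0 ≤ l) (hl : l ≤ L ^ 6) :
    40 * (2 * (l + 1)) * (1000 * p * d / M) * (p ^ 9 * d / L ^ 76) ≤
    1 / (230400000000 * L ^ 2) * (p * d / (400 * M)) ^ 2 := by
  have hM := h.hM0
  have hM0 : 0 < M := by linarith
  have hL := h.L0
  have hd := h.d0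
  have hp := h.p0
  have hp8 : p ^ 8 ≤ 1 := pow_le_one₀ hp.le h.hp1
  have e1 : 40 * (2 * (l + 1)) * (1000 * p * d / M) * (p ^ 9 * d / L ^ 76) =
    (80000 * (l + 1) * p ^ 8 / L ^ 76) * ((p * d) ^ 2 / M) := by field_simp; ring
  have e2 : 1 / (230400000000 * L ^ 2) * (p * d / (400 * M)) ^ 2 =
    (1 / (230400000000 * L ^ 2 * 160000 * M)) * ((p * d) ^ 2 / M) := by field_simp; ring
  rw [e1, e2]
  refine mul_le_mul_of_nonneg_right ?_ (by positivity)
  rw [div_le_div_iff₀ (by positivity) (by positivity)]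
  have h6 : 1 ≤ L ^ 6 := one_le_pow₀ h.L1
  have h4 : (10:ℝ) ^ 24 ≤ L ^ 3 := by
    calc (10:ℝ) ^ 24 = (10 ^ 8) ^ 3 := by norm_num
      _ ≤ L ^ 3 := by have := h.hL; gcongr
  calc 80000 * (l + 1) * p ^ 8 * (230400000000 * L ^ 2 * 160000 * M)
      ≤ 80000 * (L ^ 6 + L ^ 6) * 1 * (230400000000 * L ^ 2 * 160000 * (2 * L)) := by
        have := h.hM; gcongr
    _ = (80000 * 2 * 230400000000 * 160000 * 2) * L ^ 9 := by ring
    _ ≤ L ^ 3 * L ^ 9 := by gcongr; exact le_trans (by norm_num) h4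
    _ = L ^ 12 := by ring
    _ ≤ L ^ 76 := pow_le_pow_right₀ h.L1 (by norm_num)
    _ = 1 * L ^ 76 := by ring

lemma expo {t n M : ℕ} {L : ℝ} (hL : 10 ^ 8 ≤ L) (ht : (t : ℝ) ≤ L) (hn : (n : ℝ) ≤ Real.exp L) (hM : (M : ℝ) ≤ 2 * L) :
    (n : ℝ) * (2 * Real.exp (-(4 * L))) < 1 ∧
    t * (8 * Real.exp (-(4 * L)) * (2 + n * (3 + M) + M)) < 1 := by
  set E := Real.exp L with hE
  have hEL : L ≤ E := by have := Real.add_one_le_exp L; linarith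
  have hE0 : 0 < E := Real.exp_pos _
  have he : Real.exp (-(4 * L)) = 1 / E ^ 4 := by
    rw [Real.exp_neg, hE, ← Real.exp_nat_mul]; norm_num
  have hE8 : 10 ^ 8 ≤ E := hL.trans hEL
  rw [he]
  have hE2 : 10 ^ 8 * E ≤ E ^ 2 := by nlinarith
  have hE4 : 0 < E ^ 4 := by positivity
  constructor
  · have : (n : ℝ) * (2 * (1 / E ^ 4)) = 2 * n / E ^ 4 := by ring
    rw [this, div_lt_one hE4]
    have h2 : E ^ 2 ≤ E ^ 4 := pow_le_pow_right₀ (by linarith) (by norm_num)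
    nlinarith
  · have : (t : ℝ) * (8 * (1 / E ^ 4) * (2 + n * (3 + M) + M)) = t * 8 * (2 + n * (3 + M) + M) / E ^ 4 := by ring
    rw [this, div_lt_one hE4]
    calc (t : ℝ) * 8 * (2 + n * (3 + M) + M) ≤ E * 8 * (E + E * (E + 2 * E) + 2 * E) := by
          have := ht.trans hEL
          have := hM.trans (by linarith : 2 * L ≤ 2 * E)
          gcongr <;> linarith
      _ = 24 * E ^ 2 + 24 * E ^ 3 := by ring
      _ < E ^ 4 := by
          have h3 : 10 ^ 8 * E ^ 3 ≤ E ^ 4 := by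
            calc 10 ^ 8 * E ^ 3 ≤ E * E ^ 3 := by gcongr
              _ = _ := by ring
          have h2 : E ^ 2 ≤ E ^ 3 := pow_le_pow_right₀ (by linarith) (by norm_num)
          have : 0 < E ^ 3 := by positivity
          linarith

lemma pickR {n M : ℕ} {L : ℝ} (hL : 10 ^ 8 ≤ L) (hM : (M : ℝ) ≤ 2 * L) (hn : n < 2 ^ M) :
    ∃ R l : ℕ, (n : ℝ) < (1 + (1 / (230400000000 * L ^ 2)) / 2) ^ R ∧ 4 + 4 * (R * (M + 1)) ≤ l ∧ (l : ℝ) ≤ L ^ 6 := by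
  have hL0 : 0 < L := by linarith
  set γ := 1 / (230400000000 * L ^ 2) with hγ
  have hγ0 : 0 < γ := by positivity
  set k := ⌈460800000000 * L ^ 2⌉₊ with hk
  have k1 : 460800000000 * L ^ 2 ≤ k := Nat.le_ceil _
  have k2 : (k : ℝ) < 460800000000 * L ^ 2 + 1 := Nat.ceil_lt_add_one (by positivity)
  refine ⟨k * M, 4 + 4 * (k * M * (M + 1)), ?_, le_rfl, ?_⟩
  · have h1 : (2 : ℝ) ≤ (1 + γ / 2) ^ k := by
      have := one_add_mul_le_pow (by linarith : (-2:ℝ) ≤ γ / 2) k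
      refine le_trans ?_ this
      have h2 : 460800000000 * L ^ 2 * (γ / 2) = 1 := by rw [hγ]; field_simp; norm_num
      have h3 : 460800000000 * L ^ 2 * (γ / 2) ≤ k * (γ / 2) := by gcongr
      linarith
    calc (n : ℝ) < 2 ^ M := by exact_mod_cast hn
      _ ≤ ((1 + γ / 2) ^ k) ^ M := by gcongr
      _ = _ := by rw [← pow_mul]
  · push_cast
    have hL2 : 1 ≤ L ^ 2 := one_le_pow₀ (by linarith)
    have h4 : (10:ℝ) ^ 16 ≤ L ^ 2 := by
      calc (10:ℝ) ^ 16 = (10 ^ 8) ^ 2 := by norm_num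
        _ ≤ L ^ 2 := by gcongr
    have hL4 : 1 ≤ L ^ 4 := one_le_pow₀ (by linarith)
    calc (4:ℝ) + 4 * (k * M * (M + 1)) ≤ 4 * L ^ 4 + 4 * ((460800000001 * L ^ 2) * (2 * L) * (2 * L + L)) := by
          gcongr
          · linarith
          · linarith
          · linarith
      _ = (4 + 4 * 460800000001 * 6) * L ^ 4 := by ring
      _ ≤ L ^ 2 * L ^ 4 := by gcongr; exact le_trans (by norm_num) h4
      _ = _ := by ring

end num
end SCon

set_option linter.unusedSectionVars false
set_option linter.unusedVariables false
namespace SCon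
open Finset
open scoped Classical

section fin
variable {n t : ℕ} {G : SimpleGraph (Fin n)}

lemma ncard_dg (K : SimpleGraph (Fin n)) (v : Fin n) (S : Finset (Fin n)) :
    ((K.neighborSet v ∩ (S : Set (Fin n))).ncard : ℝ) = dg K v S := by
  unfold dg
  rw [← Set.ncard_coe_finset]
  congr 2
  ext u
  simp [and_comm]

lemma ncard_dg' (K : SimpleGraph (Fin n)) (v : Fin n) :
    ((K.neighborSet v).ncard : ℝ) = dg K v Finset.univ := by
  rw [← ncard_dg]; simp

lemma sum_dg (K : SimpleGraph (Fin n)) : ∑ v, dg K v Finset.univ = 2 * (K.edgeSet.ncard : ℝ) := by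
  have h := K.sum_degrees_eq_twice_card_edges
  have h2 : K.edgeSet.ncard = K.edgeFinset.card := by
    rw [Set.ncard_eq_toFinset_card']; rfl
  have h3 : ∀ v, dg K v Finset.univ = (K.degree v : ℝ) := by
    intro v
    unfold dg
    congr 1
    rw [← K.card_neighborFinset_eq_degree, K.neighborFinset_eq_filter]
  rw [h2]
  simp only [h3]
  exact_mod_cast h

lemma err {x y θ : ℝ} (hx : 0 < x) (hy : 0 < y) (hxy : x ≤ y ^ 30) (hθ : θ = 1 / (100 * y ^ 10)) (h0 : 0 < θ) (h1 : θ ≤ 1 / 10) :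
    x - x ^ ((2 : ℝ) / 3) ≤ (1 - θ) ^ 3 * x ∧ (1 + θ) ^ 2 * (1 + 2 * θ) * x ≤ x + x ^ ((2 : ℝ) / 3) := by
  have h3 : x ^ ((1 : ℝ) / 3) ≤ y ^ 10 := by
    have : x ^ ((1 : ℝ) / 3) ≤ (y ^ 30) ^ ((1 : ℝ) / 3) := Real.rpow_le_rpow hx.le hxy (by norm_num)
    refine this.trans (le_of_eq ?_)
    rw [← Real.rpow_natCast, ← Real.rpow_natCast, ← Real.rpow_mul hy.le]
    norm_num
  have h4 : x = x ^ ((2 : ℝ) / 3) * x ^ ((1 : ℝ) / 3) := by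
    rw [← Real.rpow_add hx]; norm_num
  have hz : 0 < x ^ ((2 : ℝ) / 3) := Real.rpow_pos_of_pos hx _
  have key : 100 * θ * x ≤ x ^ ((2 : ℝ) / 3) := by
    have e : 100 * θ * y ^ 10 = 1 := by rw [hθ]; field_simp
    calc 100 * θ * x = 100 * θ * (x ^ ((2 : ℝ) / 3) * x ^ ((1 : ℝ) / 3)) := by rw [← h4]
      _ ≤ 100 * θ * (x ^ ((2 : ℝ) / 3) * y ^ 10) := by gcongr
      _ = (100 * θ * y ^ 10) * x ^ ((2 : ℝ) / 3) := by ring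
      _ = _ := by rw [e, one_mul]
  have hθx : 0 < θ * x := mul_pos h0 hx
  constructor
  · have : 1 - 3 * θ ≤ (1 - θ) ^ 3 := by nlinarith [mul_pos h0 h0, mul_pos (mul_pos h0 h0) h0]
    have := mul_le_mul_of_nonneg_right this hx.le
    nlinarith
  · have : (1 + θ) ^ 2 * (1 + 2 * θ) ≤ 1 + 10 * θ := by nlinarith [mul_pos h0 h0, mul_pos (mul_pos h0 h0) h0]
    have := mul_le_mul_of_nonneg_right this hx.le
    nlinarith

lemma large (K : ℝ) : ∃ N : ℕ, ∀ n : ℕ, N ≤ n → K ≤ Real.logb 2 n := by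
  have := (Real.tendsto_logb_atTop (by norm_num : (1:ℝ) < 2)).comp tendsto_natCast_atTop_atTop
  obtain ⟨N, hN⟩ := Filter.eventually_atTop.1 (this.eventually_ge_atTop K)
  exact ⟨N, hN⟩

lemma mkNum {d y : ℝ} {m : Fin t → ℕ} (hL : 10 ^ 8 ≤ Real.logb 2 n) (ht : (t : ℝ) ≤ Real.logb 2 n) (ht0 : 0 < t)
    (hy0 : 0 < y) (hd : d = y ^ 30) (hyL : Real.logb 2 n ^ 100 ≤ y) (hdn : d ≤ n)
    (hm : ∀ i, (n : ℝ) / y ^ 3 < m i ∧ (m i : ℝ) < n / (t * Real.logb 2 n)) :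
    ∃ M R l : ℕ, Num n t M R l (Real.logb 2 n) d (1 / (100 * y ^ 10)) (1 / (230400000000 * Real.logb 2 n ^ 2))
      (fun i => (m i : ℝ)) := by
  set L := Real.logb 2 n with hLdef
  have hL0 : 0 < L := by linarith
  have hd0 : 0 < d := by rw [hd]; positivity
  have hn : (0:ℝ) < n := hd0.trans_le hdn
  have hn' : n ≠ 0 := by rintro rfl; simp at hn
  have htR : (1:ℝ) ≤ t := by exact_mod_cast ht0
  set M := Nat.log 2 n + 1 with hM
  have hM1 : n < 2 ^ M := Nat.lt_pow_succ_log_self (by norm_num) n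
  have hM2 : (M : ℝ) ≤ 2 * L := by
    have : ((Nat.log 2 n : ℕ) : ℝ) ≤ L := by
      have := Real.natLog_le_logb n 2
      simpa using this
    rw [hM]; push_cast; linarith
  have hM3 : (1:ℝ) ≤ M := by rw [hM]; push_cast; linarith [(Nat.cast_nonneg (Nat.log 2 n) : (0:ℝ) ≤ _)]
  have hM0 : 0 < M := Nat.succ_pos _
  have hexp : (n : ℝ) ≤ Real.exp L := by
    rw [← Real.log_le_iff_le_exp hn]
    have h1 : Real.log n = L * Real.log 2 := by
      rw [hLdef, Real.logb]; field_simp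
    rw [h1]
    have : Real.log 2 ≤ 1 := by linarith [Real.log_two_lt_d9]
    nlinarith
  obtain ⟨R, l, hR, hl, hl6⟩ := pickR hL hM2 hM1
  obtain ⟨e1, e2⟩ := expo hL ht hexp hM2
  have m0 : ∀ i, (0:ℝ) < m i := fun i => lt_trans (by positivity) (hm i).1
  have mL : ∀ i, (m i : ℝ) ≤ n / (t * L) := fun i => (hm i).2.le
  have mn : ∀ i, (m i : ℝ) ≤ n := fun i => (mL i).trans (div_le_self hn.le (by nlinarith))
  have sc : ∀ i, Sc L y d ((m i : ℝ) / n) M := by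
    intro i
    refine ⟨hL, hyL, hd, ?_, (div_le_one hn).2 (mn i), by have := m0 i; positivity, hM2, hM3⟩
    have := (hm i).1
    rw [div_lt_iff₀ (by positivity)] at this
    rw [div_mul_eq_mul_div, le_div_iff₀ hn]
    linarith
  have hy1 : 1 ≤ y := le_trans (one_le_pow₀ (by linarith)) hyL
  have hθ0 : 0 < 1 / (100 * y ^ 10) := by positivity
  have hθ1 : 1 / (100 * y ^ 10) ≤ 1 / 10 := by
    have : 1 ≤ y ^ 10 := one_le_pow₀ hy1
    apply one_div_le_one_div_of_le (by norm_num); linarith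
  have r1 : ∀ i, (m i : ℝ) * d / (400 * n * M) = (m i : ℝ) / n * d / (400 * M) := fun i => by field_simp
  have r2 : ∀ i, 1000 * (m i : ℝ) * d / (n * M) = 1000 * ((m i : ℝ) / n) * d / M := fun i => by field_simp
  have r3 : ∀ i, (m i : ℝ) / (10 * n * M) = (m i : ℝ) / n / (10 * M) := fun i => by field_simp
  have r4 : ∀ i, (m i : ℝ) * d / (400 * n) = (m i : ℝ) / n * d / 400 := fun i => by field_simp
  refine ⟨M, R, l, ⟨by linarith, hexp, hd0, hdn, hθ0, hθ1, hM1, hM0, m0, ?_, ?_, e1, ?_, ?_, mn, ?_, ?_, e2, rfl, hR, hl, hl6, ?_, ?_⟩⟩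
  · have hsum : ∑ i, (m i : ℝ) ≤ n / L := by
      calc ∑ i, (m i : ℝ) ≤ ∑ i : Fin t, (n : ℝ) / (t * L) := Finset.sum_le_sum fun i _ => mL i
        _ = n / L := by simp; field_simp
    have hnL : (n:ℝ) / L ≤ n / 10 ^ 8 := by gcongr
    have hs0 : 0 ≤ ∑ i, (m i : ℝ) := Finset.sum_nonneg fun i _ => (m0 i).le
    calc (1 + 2 * (1 / (100 * y ^ 10))) * (∑ i, (m i : ℝ)) * (18 * d) ≤ (1 + 2 * (1 / 10)) * (n / 10 ^ 8) * (18 * d) := by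
          have := hsum.trans hnL
          gcongr
      _ = (1.2 * 18 / 10 ^ 8) * (n * d) := by ring
      _ ≤ (1 / 2) * (n * d) := mul_le_mul_of_nonneg_right (by norm_num) (by positivity)
      _ = _ := by ring
  · exact (sc ⟨0, ht0⟩).c0
  · intro i; rw [r4]; exact (sc i).cA
  · intro i; rw [r1]; exact (sc i).cB
  · intro i; rw [r3]; exact (sc i).hcA
  · intro i; rw [r3, r2]; exact (sc i).hcB
  · intro i; rw [r1]; exact (sc i).hD
  · intro i; rw [r1, r2]; exact (sc i).hpar (Nat.cast_nonneg _) hl6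

end fin
end SCon

/-- Lemma finding a subgraph `G' ⊆ G` and disjoint balanced connecting sets
`S_1, …, S_t` with good degree control. -/
theorem statement10 :
    ∃ C : ℝ, 1 ≤ C ∧ ∀ t : ℕ, 0 < t → ∃ N : ℕ, ∀ n : ℕ, N ≤ n →
      ∀ (G : SimpleGraph (Fin n)) (A B : Set (Fin n)) (ε s d : ℝ) (m : Fin t → ℕ),
        IsBipartition G A B →
        (∀ v w : Fin n,
          ((G.neighborSet v).ncard : ℝ) ≤ 18 * ((G.neighborSet w).ncard : ℝ)) →
        d = 2 * (G.edgeSet.ncard : ℝ) / n →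
        IsExpander n G ε s →
        Real.logb 2 n ^ C ≤ d →
        d / Real.logb 2 n ^ (2 : ℕ) ≤ s →
        (2 : ℝ) ^ (-(90 : ℤ)) < ε → ε < 1 →
        (∀ i, (n : ℝ) / d ^ ((1 : ℝ) / 10) < m i ∧
          (m i : ℝ) < n / (t * Real.logb 2 n)) →
        ∃ (G' : G.Subgraph) (S : Fin t → Set (Fin n)),
          (∀ i, S i ⊆ G'.verts) ∧
          (∀ i j, i ≠ j → Disjoint (S i) (S j)) ∧
          ∀ i,
            (S i ∩ A).ncard = (S i ∩ B).ncard ∧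
            (S i).ncard = 2 * m i ∧
            IsConnecting n G (S i)
              (((m i : ℝ) / n) ^ (9 : ℕ) * d / Real.logb 2 n ^ (76 : ℕ)) ∧
            (∃ dᵢ : ℝ, d * m i / (C * n) ≤ dᵢ ∧ dᵢ ≤ C * d * m i / n ∧
              ∀ v ∈ G'.verts,
                dᵢ - dᵢ ^ ((2 : ℝ) / 3) ≤ ((G'.neighborSet v ∩ S i).ncard : ℝ) ∧
                ((G'.neighborSet v ∩ S i).ncard : ℝ) ≤ dᵢ + dᵢ ^ ((2 : ℝ) / 3)) ∧
            ∀ v : Fin n, ((G.neighborSet v ∩ S i).ncard : ℝ) ≤ C * d * m i / n := by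
  classical
  refine ⟨3000, by norm_num, fun t ht => ?_⟩
  obtain ⟨N, hN⟩ := SCon.large (max (10 ^ 8) t)
  refine ⟨N, fun n hn G A B ε s d m hbip hreg hd hexp hdL hs hε hε1 hm => ?_⟩
  have hL8 : 10 ^ 8 ≤ Real.logb 2 n := (le_max_left _ _).trans (hN n hn)
  have hLt : (t : ℝ) ≤ Real.logb 2 n := (le_max_right _ _).trans (hN n hn)
  have hL0 : 0 < Real.logb 2 n := lt_of_lt_of_le (by norm_num) hL8
  have hdpos : 0 < d := lt_of_lt_of_le (Real.rpow_pos_of_pos hL0 _) hdL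
  have hn0 : (0:ℝ) < n := by
    rcases Nat.eq_zero_or_pos n with h | h
    · subst h; simp at hL0
    · exact_mod_cast h
  have hdL' : Real.logb 2 n ^ 3000 ≤ d := by
    refine le_trans (le_of_eq ?_) hdL
    rw [← Real.rpow_natCast]; norm_num
  obtain ⟨y, hy0, hy⟩ : ∃ y : ℝ, 0 < y ∧ d = y ^ 30 :=
    ⟨d ^ ((1:ℝ) / 30), Real.rpow_pos_of_pos hdpos _, by
      rw [← Real.rpow_natCast, ← Real.rpow_mul hdpos.le]; norm_num⟩
  have hy3 : d ^ ((1:ℝ) / 10) = y ^ 3 := by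
    rw [hy, ← Real.rpow_natCast, ← Real.rpow_natCast, ← Real.rpow_mul hy0.le]; norm_num
  have hyL : Real.logb 2 n ^ 100 ≤ y := by
    refine le_of_pow_le_pow_left₀ (n := 30) (by norm_num) hy0.le ?_
    rw [← pow_mul, ← hy]
    exact hdL'
  have hsum : ∑ v, SCon.dg G v Finset.univ = n * d := by
    rw [SCon.sum_dg, hd]; field_simp
  have hreg' : ∀ v w, SCon.dg G v Finset.univ ≤ 18 * SCon.dg G w Finset.univ := by
    intro v w
    have := hreg v w
    rwa [SCon.ncard_dg', SCon.ncard_dg'] at this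
  have hlo : ∀ v, d / 18 ≤ SCon.dg G v Finset.univ := by
    intro v
    have h := Finset.sum_le_card_nsmul Finset.univ (fun w => SCon.dg G w Finset.univ) _ fun w _ => hreg' w v
    rw [hsum, Finset.card_univ, Fintype.card_fin, nsmul_eq_mul] at h
    have := le_of_mul_le_mul_left h hn0
    linarith
  have hhi : ∀ v, SCon.dg G v Finset.univ ≤ 18 * d := by
    intro v
    have h := Finset.card_nsmul_le_sum Finset.univ (fun w => SCon.dg G w Finset.univ) (SCon.dg G v Finset.univ / 18)
      fun w _ => by have := hreg' v w; linarith
    rw [hsum, Finset.card_univ, Fintype.card_fin, nsmul_eq_mul] at h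
    have := le_of_mul_le_mul_left h hn0
    linarith
  have hdn : d ≤ n := by
    have h := Finset.sum_le_card_nsmul Finset.univ (fun w => SCon.dg G w Finset.univ) (n : ℝ) fun w _ => by
      have := SCon.dg_le_card G w Finset.univ
      simpa using this
    rw [hsum, Finset.card_univ, Fintype.card_fin, nsmul_eq_mul] at h
    exact le_of_mul_le_mul_left h hn0
  obtain ⟨M, R, l, hNum⟩ := SCon.mkNum hL8 hLt ht hy0 hy hyL hdn (m := m) (fun i => by
    have := hm i
    rwa [hy3] at this)
  have hBip : SCon.Bip G A.toFinset B.toFinset := by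
    refine ⟨?_, ?_⟩
    · ext v
      rw [Finset.mem_compl, Set.mem_toFinset, Set.mem_toFinset]
      constructor
      · intro h1 h2; exact Set.disjoint_left.1 hbip.1 h2 h1
      · intro h1
        have : v ∈ A ∪ B := by rw [hbip.2.1]; trivial
        exact this.resolve_left h1
    · intro u v h
      simp only [Set.mem_toFinset]
      exact hbip.2.2 u v h
  have hε0 : 0 < ε := lt_trans (by positivity) hε
  obtain ⟨H, hHG, SA, SB, hR⟩ := SCon.asm hNum hBip hlo hhi hsum
    (fun U h1 h2 => SCon.expand hexp hε0 hL0 hs U h1 h2)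
  have hAS : ∀ i, ((SA i ∪ SB i : Finset (Fin n)) : Set (Fin n)) ∩ A = (SA i : Set (Fin n)) := by
    intro i
    ext v
    simp only [Finset.coe_union, Set.mem_inter_iff, Set.mem_union, Finset.mem_coe]
    constructor
    · rintro ⟨h | h, h'⟩
      · exact h
      · exact absurd (Set.mem_toFinset.1 (hR.sb i h)) (Set.disjoint_left.1 hbip.1 h')
    · intro h; exact ⟨Or.inl h, Set.mem_toFinset.1 (hR.sa i h)⟩
  have hBS : ∀ i, ((SA i ∪ SB i : Finset (Fin n)) : Set (Fin n)) ∩ B = (SB i : Set (Fin n)) := by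
    intro i
    ext v
    simp only [Finset.coe_union, Set.mem_inter_iff, Set.mem_union, Finset.mem_coe]
    constructor
    · rintro ⟨h | h, h'⟩
      · exact absurd h' (Set.disjoint_left.1 hbip.1 (Set.mem_toFinset.1 (hR.sa i h)))
      · exact h
    · intro h; exact ⟨Or.inr h, Set.mem_toFinset.1 (hR.sb i h)⟩
  refine ⟨SimpleGraph.toSubgraph H hHG, fun i => ((SA i ∪ SB i : Finset (Fin n)) : Set (Fin n)), fun i v _ => trivial, ?_, ?_⟩
  · intro i j hij
    exact Finset.disjoint_coe.2 (hR.dis i j hij)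
  · intro i
    have hmi : (0:ℝ) < m i := hNum.m0 i
    have hmn : (m i : ℝ) ≤ n := hNum.q1 i
    have hdm : 0 < d * m i / n := by positivity
    have e162 : d * m i / (162 * n) = (1 / 162) * (d * m i / n) := by field_simp
    refine ⟨?_, ?_, hR.con i, ⟨d * m i / (162 * n), ?_, ?_, ?_⟩, ?_⟩
    · rw [hAS, hBS, Set.ncard_coe_finset, Set.ncard_coe_finset, hR.ca, hR.cb]
    · rw [Set.ncard_coe_finset, Finset.card_union_of_disjoint, hR.ca, hR.cb, two_mul]
      exact hBip.disj.mono (hR.sa i) (hR.sb i)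
    · have : d * m i / (3000 * n) = (1 / 3000) * (d * m i / n) := by field_simp
      rw [this, e162]; linarith
    · have : 3000 * d * m i / n = 3000 * (d * m i / n) := by ring
      rw [this, e162]; linarith
    · intro v _
      have hx : d * m i / (162 * n) ≤ y ^ 30 := by
        rw [e162, ← hy]
        have : d * m i / n ≤ d := by
          rw [div_le_iff₀ hn0]; gcongr
        linarith
      have he := SCon.err (by positivity : 0 < d * m i / (162 * n)) hy0 hx rfl hNum.θ0 hNum.θ1
      have hnb : (((SimpleGraph.toSubgraph H hHG).neighborSet v ∩
          ((SA i ∪ SB i : Finset (Fin n)) : Set (Fin n))).ncard : ℝ) = SCon.dg H v (SA i ∪ SB i) := by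
        rw [← SCon.ncard_dg]; rfl
      rw [hnb]
      exact ⟨he.1.trans (hR.lo i v), (hR.hi i v).trans he.2⟩
    · intro v
      rw [SCon.ncard_dg]
      refine (hR.hiG i v).trans ?_
      have e1 : 1000 * d * m i / n = 1000 * (d * m i / n) := by ring
      have e2 : 3000 * d * m i / n = 3000 * (d * m i / n) := by ring
      rw [e1, e2]; linarith
end

section
/- Let n and s be sufficiently large, let k be a positive integer and let 0 < ε < 1. Suppose that G is an n-vertex (ε,s)-expander and εs/k ≥ 10^5·(log n)^3. Then there are edge-disjoint graphs G_1,…,G_k, each with vertex set V(G), such that E(G) = E(G_1) ∪ ⋯ ∪ E(G_k) and, for each i ∈ [k], G_i is an (ε/4, εs/(10^4·k·(log n)^2))-expander. -/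
open Classical in
/-- Edges of `G` between `U` and the complement of `U ∪ W`. -/
noncomputable def crossE {n : ℕ} (G : SimpleGraph (Fin n)) (U W : Finset (Fin n)) :
    Finset (Sym2 (Fin n)) :=
  Finset.univ.filter fun e => ∃ u v, e = s(u, v) ∧ G.Adj u v ∧ u ∈ U ∧ v ∉ U ∧ v ∉ W

lemma crossE_large {n : ℕ} (G : SimpleGraph (Fin n)) (ε s : ℝ) (hG : IsExpander n G ε s)
    (U W : Finset (Fin n)) (hU : 1 ≤ U.card) (hU2 : (U.card : ℝ) ≤ 2 / 3 * n)
    (hW : (W.card : ℝ) < ε * U.card / Real.logb 2 n ^ 2) :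
    s * U.card < (crossE G U W).card := by
  by_contra! h
  have h1 := hG (U : Set (Fin n)) (crossE G U W : Set (Sym2 (Fin n))) ?_ ?_ ?_ ?_
  · have h2 : extNbhd (G.deleteEdges (crossE G U W : Set (Sym2 (Fin n)))) (U : Set (Fin n))
        ⊆ (W : Set (Fin n)) := by
      rintro v ⟨hv, u, hu, huv⟩
      by_contra hvW
      rw [SimpleGraph.deleteEdges_adj] at huv
      apply huv.2
      simp only [crossE, Finset.coe_filter, Finset.mem_univ, true_and, Set.mem_setOf_eq]
      exact ⟨u, v, rfl, huv.1, by simpa using hu, by simpa using hv, by simpa using hvW⟩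
    have h3 := Set.ncard_le_ncard h2 (Finset.finite_toSet W)
    rw [Set.ncard_coe_finset] at h3
    rw [Set.ncard_coe_finset] at h1
    have h4 : ((extNbhd (G.deleteEdges (crossE G U W : Set (Sym2 (Fin n))))
      (U : Set (Fin n))).ncard : ℝ) ≤ W.card := by exact_mod_cast h3
    linarith
  · intro e he
    simp only [crossE, Finset.coe_filter, Finset.mem_univ, true_and, Set.mem_setOf_eq] at he
    obtain ⟨u, v, rfl, h, -⟩ := he
    simpa using h
  · rwa [Set.ncard_coe_finset]
  · rwa [Set.ncard_coe_finset]
  · rwa [Set.ncard_coe_finset, Set.ncard_coe_finset]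

/-- The colour class `i`. -/
def colG {n k : ℕ} (G : SimpleGraph (Fin n)) (c : Sym2 (Fin n) → Fin k) (i : Fin k) :
    SimpleGraph (Fin n) where
  Adj u v := G.Adj u v ∧ c s(u, v) = i
  symm := ⟨fun u v h => ⟨h.1.symm, by rw [Sym2.eq_swap]; exact h.2⟩⟩
  loopless := ⟨fun u h => G.loopless.irrefl u h.1⟩

lemma colG_edge {n k : ℕ} (G : SimpleGraph (Fin n)) (c : Sym2 (Fin n) → Fin k) (i : Fin k)
    (e : Sym2 (Fin n)) : e ∈ (colG G c i).edgeSet ↔ e ∈ G.edgeSet ∧ c e = i := by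
  induction e with
  | _ u v => simp [colG]

lemma colG_expander {n k : ℕ} (G : SimpleGraph (Fin n)) (c : Sym2 (Fin n) → Fin k) (i : Fin k)
    (ε t : ℝ) (hε : 0 < ε)
    (H : ∀ U W : Finset (Fin n), 1 ≤ U.card → (U.card : ℝ) ≤ 2 / 3 * n →
      (W.card : ℝ) < ε * U.card / Real.logb 2 n ^ 2 →
      t * U.card < ((crossE G U W).filter (fun e => c e = i)).card) :
    IsExpander n (colG G c i) (ε / 4) t := by
  classical
  intro U F hF hU hU2 hFc
  by_contra! hlt
  set X := extNbhd ((colG G c i).deleteEdges F) U with hX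
  have e1 : U.ncard = U.toFinset.card := Set.ncard_eq_toFinset_card' U
  have e2 : X.ncard = X.toFinset.card := Set.ncard_eq_toFinset_card' X
  have e3 : F.ncard = F.toFinset.card := Set.ncard_eq_toFinset_card' F
  rw [e1] at hU hU2 hFc hlt
  rw [e2] at hlt
  rw [e3] at hFc
  have hle : ε / 4 * (U.toFinset.card : ℝ) / Real.logb 2 n ^ 2
      ≤ ε * U.toFinset.card / Real.logb 2 n ^ 2 := by
    gcongr
    linarith
  have h1 := H U.toFinset X.toFinset hU hU2 (lt_of_lt_of_le hlt hle)
  have h2 : F.toFinset.card < ((crossE G U.toFinset X.toFinset).filter (fun e => c e = i)).card := by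
    exact_mod_cast lt_of_le_of_lt hFc h1
  obtain ⟨e, he, heF⟩ := Finset.exists_mem_notMem_of_card_lt_card h2
  simp only [crossE, Finset.mem_filter, Finset.mem_univ, true_and] at he
  obtain ⟨⟨u, v, rfl, huv, hu, hv, hvX⟩, hc⟩ := he
  apply hvX
  rw [Set.mem_toFinset] at hu hv heF ⊢
  refine ⟨hv, u, hu, ?_⟩
  rw [SimpleGraph.deleteEdges_adj]
  exact ⟨⟨huv, hc⟩, heF⟩

lemma count_bad {α : Type*} [Fintype α] [DecidableEq α] (k : ℕ) (hk : 0 < k) (A : Finset α)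
    (i : Fin k) (t : ℝ) :
    (((Finset.univ : Finset (α → Fin k)).filter
      (fun c => ((A.filter (fun e => c e = i)).card : ℝ) ≤ t)).card : ℝ)
      ≤ (k : ℝ) ^ (Fintype.card α) * Real.exp (t - A.card / (2 * k)) := by
  have hk' : (0 : ℝ) < k := by exact_mod_cast hk
  set w : (α → Fin k) → ℝ := fun c => ∏ e, (if e ∈ A ∧ c e = i then (1/2 : ℝ) else 1) with hw
  have hw0 : ∀ c, 0 ≤ w c := fun c => Finset.prod_nonneg fun e _ => by split_ifs <;> norm_num
  have hwc : ∀ c, w c = (1/2 : ℝ) ^ (A.filter (fun e => c e = i)).card := by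
    intro c
    rw [hw]
    simp only
    rw [Finset.prod_ite, Finset.prod_const, Finset.prod_const_one, mul_one]
    congr 2
    ext e
    simp
  have hsum : ∑ c, w c = ∏ e : α, ∑ j : Fin k, (if e ∈ A ∧ j = i then (1/2 : ℝ) else 1) := by
    rw [Finset.prod_univ_sum]
    simp [hw]
  have hinner : ∀ e : α, ∑ j : Fin k, (if e ∈ A ∧ j = i then (1/2 : ℝ) else 1)
      ≤ k * (if e ∈ A then Real.exp (-(1 / (2 * k))) else 1) := by
    intro e
    by_cases he : e ∈ A
    · simp only [he, true_and, if_true]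
      have : ∑ j : Fin k, (if j = i then (1/2 : ℝ) else 1)
          = ∑ j : Fin k, (1 - if j = i then (1/2 : ℝ) else 0) := by
        apply Finset.sum_congr rfl
        intro j _
        split_ifs <;> norm_num
      rw [this, Finset.sum_sub_distrib]
      simp only [Finset.sum_const, Finset.card_univ, Fintype.card_fin, nsmul_eq_mul, mul_one,
        Finset.sum_ite_eq', Finset.mem_univ, if_true]
      have h := Real.add_one_le_exp (-(1 / (2 * (k:ℝ))))
      have h2 : (k : ℝ) - 1/2 = k * (-(1 / (2 * (k:ℝ))) + 1) := by field_simp; ring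
      rw [h2]
      gcongr
    · simp [he]
  have hprod : ∑ c, w c ≤ (k : ℝ) ^ (Fintype.card α) * Real.exp (- (A.card / (2 * k))) := by
    rw [hsum]
    calc _ ≤ ∏ e : α, (k * (if e ∈ A then Real.exp (-(1 / (2 * k))) else 1) : ℝ) := by
          apply Finset.prod_le_prod
          · intro e _
            exact Finset.sum_nonneg fun j _ => by split_ifs <;> norm_num
          · intro e _
            exact hinner e
      _ = _ := by
          rw [Finset.prod_mul_distrib, Finset.prod_const, Finset.card_univ, Finset.prod_ite,
            Finset.prod_const, Finset.prod_const_one, mul_one, ← Real.exp_nat_mul]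
          congr 2
          simp
          ring
  set B := (Finset.univ : Finset (α → Fin k)).filter
      (fun c => ((A.filter (fun e => c e = i)).card : ℝ) ≤ t) with hB
  have hlow : (B.card : ℝ) * Real.exp (-t) ≤ ∑ c, w c := by
    calc (B.card : ℝ) * Real.exp (-t) = ∑ c ∈ B, Real.exp (-t) := by simp
      _ ≤ ∑ c ∈ B, w c := by
          apply Finset.sum_le_sum
          intro c hc
          rw [hB, Finset.mem_filter] at hc
          rw [hwc]
          have h1 : Real.exp (-1) ≤ 1/2 := by
            rw [Real.exp_neg]
            have := Real.add_one_le_exp (1:ℝ)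
            rw [inv_le_comm₀ (Real.exp_pos 1) (by norm_num)]
            linarith
          calc Real.exp (-t) ≤ Real.exp (-((A.filter (fun e => c e = i)).card : ℝ)) := by
                apply Real.exp_le_exp.2
                linarith [hc.2]
            _ = Real.exp (-1) ^ (A.filter (fun e => c e = i)).card := by
                rw [← Real.exp_nat_mul]; congr 1; ring
            _ ≤ _ := pow_le_pow_left₀ (Real.exp_pos _).le h1 _
      _ ≤ ∑ c, w c := Finset.sum_le_sum_of_subset_of_nonneg (Finset.subset_univ _)
          fun c _ _ => hw0 c
  have hfin := hlow.trans hprod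
  have : (B.card : ℝ) = (B.card * Real.exp (-t)) * Real.exp t := by
    rw [mul_assoc, ← Real.exp_add]; simp
  rw [this, sub_eq_add_neg, add_comm, Real.exp_add, ← mul_assoc]
  gcongr

/-- sum of weights -/
lemma weight_sum (n : ℕ) (y : ℝ) :
    ∑ p : Finset (Fin n) × Finset (Fin n), y ^ p.1.card * y ^ p.2.card = ((1 + y) ^ n) ^ 2 := by
  have h : ∑ U : Finset (Fin n), y ^ U.card = (1 + y) ^ n := by
    have := Finset.prod_one_add (f := fun _ : Fin n => y) (Finset.univ)
    simp at this
    exact this.symm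
  rw [Fintype.sum_prod_type]
  simp only
  simp_rw [← Finset.mul_sum, h]
  rw [← Finset.sum_mul, h, sq]

/-- Any `(ε,s)`-expander edge-decomposes into `k` weaker expanders, provided
`εs/k ≥ 10⁵(log n)³` and `n`, `s` are sufficiently large. -/
theorem statement16 :
    ∃ N : ℕ, ∀ n : ℕ, N ≤ n → ∀ s : ℝ, (N : ℝ) ≤ s →
      ∀ k : ℕ, 0 < k → ∀ ε : ℝ, 0 < ε → ε < 1 →
        ∀ G : SimpleGraph (Fin n), IsExpander n G ε s →
          10 ^ 5 * Real.logb 2 n ^ 3 ≤ ε * s / k →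
          ∃ Gs : Fin k → SimpleGraph (Fin n),
            (∀ i j, i ≠ j → Disjoint (Gs i).edgeSet (Gs j).edgeSet) ∧
            (⋃ i, (Gs i).edgeSet) = G.edgeSet ∧
            ∀ i, IsExpander n (Gs i) (ε / 4)
              (ε * s / (10 ^ 4 * k * Real.logb 2 n ^ 2)) := by
  classical
  refine ⟨4, ?_⟩
  intro n hn s hs k hk ε hε hε1 G hG hyp
  set L := Real.logb 2 n with hL
  have hn' : (4 : ℝ) ≤ n := by exact_mod_cast hn
  have hs' : (4 : ℝ) ≤ s := by exact_mod_cast hs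
  have hk' : (1 : ℝ) ≤ k := by exact_mod_cast hk
  have hL1 : 1 ≤ L := by
    rw [hL, Real.le_logb_iff_rpow_le (by norm_num) (by linarith)]
    simp; linarith
  have hlog : Real.log n ≤ L := by
    have h2 : Real.log n = L * Real.log 2 := by
      rw [hL, Real.logb]
      have : Real.log 2 ≠ 0 := (Real.log_pos (by norm_num)).ne'
      field_simp
    have := Real.log_two_lt_d9
    rw [h2]; nlinarith
  set t := ε * s / (10 ^ 4 * k * L ^ 2) with ht
  have ht0 : 0 ≤ t := by positivity
  have hsk : 10 ^ 5 * L ≤ s / k := by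
    have h1 : ε * s / k ≤ s / k := by gcongr; nlinarith
    have h2 : L ≤ L ^ 3 := le_self_pow₀ hL1 (by norm_num)
    linarith
  have hts : t ≤ s / k / 10 ^ 4 := by
    rw [ht, div_div]
    apply div_le_div₀ (by linarith) (by nlinarith) (by positivity)
    have : 1 ≤ L ^ 2 := one_le_pow₀ hL1
    nlinarith
  have hks : (k : ℝ) ≤ s := by
    have : 1 ≤ s / k := by linarith
    rwa [le_div_iff₀ (by linarith), one_mul] at this
  have hsn : s < n ^ 2 := by
    have h := crossE_large G ε s hG {⟨0, by omega⟩} ∅ (by simp) (by simp; linarith)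
      (by simp; positivity)
    have h2 : (crossE G {⟨0, by omega⟩} ∅).card ≤ n ^ 2 := by
      calc _ ≤ Fintype.card (Sym2 (Fin n)) := Finset.card_le_univ _
        _ ≤ n ^ 2 := by
          rw [Sym2.card, Fintype.card_fin, Nat.choose_two_right]
          apply Nat.div_le_of_le_mul
          simp; nlinarith
    have h3 : ((crossE G {⟨0, by omega⟩} ∅).card : ℝ) ≤ n ^ 2 := by exact_mod_cast h2
    simp at h
    linarith
  set good : Finset (Fin n) × Finset (Fin n) → Prop := fun p =>
    1 ≤ p.1.card ∧ (p.1.card : ℝ) ≤ 2 / 3 * n ∧ (p.2.card : ℝ) < ε * p.1.card / L ^ 2 with hgood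
  set bad : (Finset (Fin n) × Finset (Fin n)) × Fin k → Finset (Sym2 (Fin n) → Fin k) :=
    fun q => if good q.1 then Finset.univ.filter (fun c =>
      (((crossE G q.1.1 q.1.2).filter (fun e => c e = q.2)).card : ℝ) ≤ t * q.1.1.card)
      else ∅ with hbad
  set M : ℝ := (k : ℝ) ^ (Fintype.card (Sym2 (Fin n))) with hM
  have hM0 : 0 < M := by positivity
  set y : ℝ := ((n : ℝ) ^ 2)⁻¹ with hy
  have hy0 : 0 < y := by positivity
  have hyexp : y = Real.exp (-(2 * Real.log n)) := by
    rw [hy, Real.exp_neg, two_mul, Real.exp_add, Real.exp_log (by linarith), sq]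
  have hbadcard : ∀ q, ((bad q).card : ℝ) ≤ M * (y ^ 2 * (y ^ q.1.1.card * y ^ q.1.2.card)) := by
    rintro ⟨⟨U, W⟩, i⟩
    by_cases hg : good (U, W)
    · simp only [hbad, hg, if_true]
      refine (count_bad k hk _ i _).trans ?_
      rw [← hM]
      apply mul_le_mul_of_nonneg_left _ hM0.le
      obtain ⟨g1, g2, g3⟩ := hg
      simp only at g1 g2 g3
      have hA := crossE_large G ε s hG U W g1 g2 g3
      have g1' : (1 : ℝ) ≤ U.card := by exact_mod_cast g1
      have hWU : (W.card : ℝ) ≤ U.card := by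
        refine g3.le.trans ?_
        rw [div_le_iff₀ (by positivity)]
        have : 1 ≤ L ^ 2 := one_le_pow₀ hL1
        nlinarith
      rw [hyexp, ← Real.exp_nat_mul, ← Real.exp_nat_mul, ← Real.exp_nat_mul, ← Real.exp_add,
        ← Real.exp_add]
      apply Real.exp_le_exp.2
      have hA2 : s / k * U.card / 2 ≤ ((crossE G U W).card : ℝ) / (2 * k) := by
        have : s / k * U.card / 2 = s * U.card / (2 * k) := by field_simp
        rw [this]; gcongr
      have ha : t * U.card ≤ s / k / 10 ^ 4 * U.card := by gcongr
      have hb : 10 ^ 5 * L * U.card ≤ s / k * U.card := by gcongr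
      have hc : Real.log n * U.card ≤ L * U.card := by gcongr
      have hl0 : 0 ≤ Real.log n := Real.log_nonneg (by linarith)
      have hd : Real.log n * W.card ≤ Real.log n * U.card := by gcongr
      have he : Real.log n * 1 ≤ Real.log n * U.card := by gcongr
      push_cast
      have hf : 0 ≤ L * U.card := by positivity
      nlinarith
    · simp only [hbad, hg, if_false, Finset.card_empty, Nat.cast_zero]
      positivity
  have htotal : (((Finset.univ.biUnion bad).card : ℕ) : ℝ) < M := by
    have h1 : (((Finset.univ.biUnion bad).card : ℕ) : ℝ) ≤ ∑ q, ((bad q).card : ℝ) := by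
      exact_mod_cast Finset.card_biUnion_le
    have h2 : ∑ q, ((bad q).card : ℝ) ≤
        ∑ q : (Finset (Fin n) × Finset (Fin n)) × Fin k,
          M * (y ^ 2 * (y ^ q.1.1.card * y ^ q.1.2.card)) :=
      Finset.sum_le_sum fun q _ => hbadcard q
    have h3 : ∑ q : (Finset (Fin n) × Finset (Fin n)) × Fin k,
          M * (y ^ 2 * (y ^ q.1.1.card * y ^ q.1.2.card)) =
          M * (k * y ^ 2 * ((1 + y) ^ n) ^ 2) := by
      rw [Fintype.sum_prod_type]
      simp only [Finset.sum_const, Finset.card_univ, Fintype.card_fin, nsmul_eq_mul]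
      rw [← weight_sum, ← Finset.mul_sum, ← Finset.mul_sum, ← Finset.mul_sum]
      ring
    have h4 : k * y ^ 2 * ((1 + y) ^ n) ^ 2 < 1 := by
      have hky : k * y ≤ 1 := by
        rw [hy, ← div_eq_mul_inv, div_le_one (by positivity)]
        linarith
      have hpow : ((1 + y) ^ n) ^ 2 ≤ 3 := by
        have : 1 + y ≤ Real.exp y := by linarith [Real.add_one_le_exp y]
        calc ((1 + y) ^ n) ^ 2 ≤ (Real.exp y ^ n) ^ 2 := by gcongr
          _ = Real.exp (2 * (n * y)) := by
            rw [← Real.exp_nat_mul, ← Real.exp_nat_mul]; norm_num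
          _ ≤ Real.exp 1 := by
            apply Real.exp_le_exp.2
            have : n * y = (n:ℝ)⁻¹ := by rw [hy]; field_simp
            rw [this]
            have : (n:ℝ)⁻¹ ≤ 4⁻¹ := by gcongr
            linarith
          _ ≤ 3 := by linarith [Real.exp_one_lt_d9]
      have hy16 : y ≤ 1 / 16 := by
        rw [hy, ← one_div]
        gcongr
        nlinarith
      calc k * y ^ 2 * ((1 + y) ^ n) ^ 2 = (k * y) * y * ((1 + y) ^ n) ^ 2 := by ring
        _ ≤ 1 * (1 / 16) * 3 := by gcongr
        _ < 1 := by norm_num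
    calc _ ≤ _ := h1
      _ ≤ _ := h2
      _ = _ := h3
      _ < M * 1 := by gcongr
      _ = M := mul_one M
  have hex : ∃ c, c ∉ Finset.univ.biUnion bad := by
    by_contra! hall
    have : Finset.univ.biUnion bad = Finset.univ := Finset.eq_univ_iff_forall.2 hall
    rw [this, Finset.card_univ, Fintype.card_fun, Fintype.card_fin] at htotal
    push_cast at htotal
    exact lt_irrefl _ htotal
  obtain ⟨c, hc⟩ := hex
  refine ⟨colG G c, ?_, ?_, ?_⟩
  · intro i j hij
    rw [Set.disjoint_left]
    intro e h1 h2
    rw [colG_edge] at h1 h2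
    exact hij (h1.2.symm.trans h2.2)
  · ext e
    simp [colG_edge]
  · intro i
    apply colG_expander G c i ε t hε
    intro U W hU hU2 hW
    by_contra! hle
    apply hc
    rw [Finset.mem_biUnion]
    refine ⟨((U, W), i), Finset.mem_univ _, ?_⟩
    have hg : good (U, W) := ⟨hU, hU2, hW⟩
    simp only [hbad, hg, if_true, Finset.mem_filter, Finset.mem_univ, true_and]
    convert hle
end
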